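/- arXiv:1409.7955 — 2 statements merged into one kernel-verified Lean document; each statement's English description precedes it below -/
import Mathlib

section
/- Fix r ∈ ℕ and f = (f₁,…,f_r) ∈ ℕ^r, and set d = f₁ + ⋯ + f_r. Then there exists a rational function W_f(X,Y) ∈ ℚ(X,Y), depending only on f, with the following properties. (1) For every number field K of degree d with ring of integers 𝓞, and every rational prime p which is unramified in K and decomposes as p𝓞 = 𝔓₁⋯𝔓_r into r distinct prime ideals with inertia degrees f₁,…,f_r, the local normal zeta function of the Heisenberg group H(𝓞) at p equals W_f evaluated at (p, Y): that is, as formal power series, ∑_{i≥0} a^⊲_{p^i}(H(𝓞))·Y^i = W_f(p, Y). (2) W_f satisfies the functional equation W_f(X^{−1}, Y^{−1}) = (−1)^{3d}·X^{binom(3d,2)}·Y^{5d}·W_f(X, Y) in ℚ(X,Y). -/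
/-- The Heisenberg group over a commutative ring `R`: the group of upper unitriangular
`3 × 3` matrices `![![1, x, z], ![0, 1, y], ![0, 0, 1]]` with entries in `R`,
encoded by the entry triple `(x, y, z)` with the matrix multiplication law. -/
@[ext]
structure Heisenberg (R : Type*) [CommRing R] where
  x : R
  y : R
  z : R

namespace Heisenberg

variable {R : Type*} [CommRing R]

instance : Mul (Heisenberg R) :=
  ⟨fun a b => ⟨a.x + b.x, a.y + b.y, a.z + b.z + a.x * b.y⟩⟩

instance : One (Heisenberg R) := ⟨⟨0, 0, 0⟩⟩

instance : Inv (Heisenberg R) :=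
  ⟨fun a => ⟨-a.x, -a.y, a.x * a.y - a.z⟩⟩

lemma mul_def (a b : Heisenberg R) :
    a * b = ⟨a.x + b.x, a.y + b.y, a.z + b.z + a.x * b.y⟩ := rfl

lemma one_def : (1 : Heisenberg R) = ⟨0, 0, 0⟩ := rfl

lemma inv_def (a : Heisenberg R) : a⁻¹ = ⟨-a.x, -a.y, a.x * a.y - a.z⟩ := rfl

instance : Group (Heisenberg R) where
  mul_assoc a b c := by
    simp only [mul_def, mk.injEq]
    refine ⟨by ring, by ring, by ring⟩
  one_mul a := by ext <;> simp [mul_def, one_def]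
  mul_one a := by ext <;> simp [mul_def, one_def]
  inv_mul_cancel a := by
    simp only [mul_def, inv_def, one_def, mk.injEq]
    refine ⟨by ring, by ring, by ring⟩

end Heisenberg

/-- The number of normal subgroups of index `n` in a group `G`. -/
noncomputable def normalSubgroupCount (G : Type*) [Group G] (n : ℕ) : ℕ :=
  Nat.card {H : Subgroup G // H.Normal ∧ H.index = n}

/-- Substitution of two elements of the rational function field `ℚ(X,Y)` (realized as the
fraction field of `ℚ[X,Y]`) into a polynomial `P ∈ ℚ[X,Y]`. -/
noncomputable def ratFunSubst (P : MvPolynomial (Fin 2) ℚ)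
    (x y : FractionRing (MvPolynomial (Fin 2) ℚ)) : FractionRing (MvPolynomial (Fin 2) ℚ) :=
  MvPolynomial.eval₂ ((algebraMap (MvPolynomial (Fin 2) ℚ) _).comp MvPolynomial.C) ![x, y] P

/-- The polynomial in `Y` obtained from `W ∈ ℚ[X,Y]` by substituting `X = p`. -/
noncomputable def evalAtPrime (W : MvPolynomial (Fin 2) ℚ) (p : ℕ) : Polynomial ℚ :=
  MvPolynomial.aeval ![Polynomial.C (p : ℚ), Polynomial.X] W

/-!
Entrywise, the normal subgroups of the Heisenberg group over `𝓞` are the additive subgroups `N` of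
`𝓞² × 𝓞` whose projection to `𝓞²` lies in two copies of the largest ideal contained in
`M = N ∩ 𝓞`. For given `M` of index `p^k` that ideal is `∏ 𝔓ᵢ ^ νᵢ`, and the number of such `N` is
governed by subgroups of `ℤ^(2d)` and by `|Hom(ℤ^(2d), 𝓞/M)| = p^(2dk)`. Replacing `ν` by all
exponent vectors `n ≥ ν`, at the cost of a product of geometric series, turns the zeta function into
a sum over all pairs `(n, M)` with `∏ 𝔓ᵢ ^ nᵢ ⊆ M ⊆ 𝓞`.

As `p` is unramified, `(n, M) ↦ (n - 1, p⁻¹M)` maps such pairs to such pairs. Sorting them by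
the support `S` of `n` and by the `p`-rank `m` of `𝓞/M`, the fibres of this map are counted by
Gaussian binomial coefficients in `p`. This gives a linear system for the generating functions of
the types `(S, m)` which, lexicographically in `(S, m)`, is triangular with invertible diagonal, and
whose coefficients are polynomials in `x = p` and `y = p^{-s}`; hence rationality and uniformity
in `p`.

The matrix of Gaussian binomials at `x⁻¹` is, up to conjugation by a diagonal matrix, inverse to the
matrix at `x`. Together with Möbius inversion over the subsets `S` this converts a solution at
`(x⁻¹, y⁻¹)` into a solution at `(x, y)`, and uniqueness yields the functional equation.
-/

namespace HeisenbergZeta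

open Finset
open scoped PowerSeries.WithPiTopology

/-! ### Gaussian binomial coefficients -/

/-- The Gaussian binomial coefficient `[n choose k]_q`, defined by its Pascal recursion so that it
makes sense in every commutative semiring. -/
def gaussBinom {R : Type*} [CommSemiring R] (q : R) : ℕ → ℕ → R
  | _, 0 => 1
  | 0, _ + 1 => 0
  | n + 1, k + 1 => gaussBinom q n k + q ^ (k + 1) * gaussBinom q n (k + 1)

section CommSemiring

variable {R S : Type*} [CommSemiring R] [CommSemiring S] (q : R)

@[simp] lemma gaussBinom_zero_right (n : ℕ) : gaussBinom q n 0 = 1 := by cases n <;> rfl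

@[simp] lemma gaussBinom_zero_succ (k : ℕ) : gaussBinom q 0 (k + 1) = 0 := rfl

lemma gaussBinom_succ_succ (n k : ℕ) : gaussBinom q (n + 1) (k + 1) =
    gaussBinom q n k + q ^ (k + 1) * gaussBinom q n (k + 1) := rfl

lemma gaussBinom_eq_zero_of_lt {n k : ℕ} (h : n < k) : gaussBinom q n k = 0 := by
  induction n generalizing k with
  | zero => obtain ⟨k, rfl⟩ := Nat.exists_eq_add_of_lt h; simp
  | succ n ih =>
    obtain ⟨k, rfl⟩ := Nat.exists_eq_add_of_lt h
    rw [gaussBinom_succ_succ, ih (by lia), ih (by lia), mul_zero, add_zero]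

@[simp] lemma gaussBinom_self (n : ℕ) : gaussBinom q n n = 1 := by
  induction n with
  | zero => rfl
  | succ n ih => simp [gaussBinom_succ_succ, ih, gaussBinom_eq_zero_of_lt q n.lt_succ_self]

lemma map_gaussBinom (φ : R →+* S) (n k : ℕ) : φ (gaussBinom q n k) = gaussBinom (φ q) n k := by
  induction n generalizing k with
  | zero => cases k <;> simp
  | succ n ih => cases k <;> simp [gaussBinom_succ_succ, ih]

end CommSemiring

section CommRing

variable {R : Type*} [CommRing R] (q : R)

/-- The `q`-factorial `∏_{i=1}^n (q^i - 1)`, without the usual normalisation by `(q - 1)^n`. -/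
def gaussFactorial (n : ℕ) : R := ∏ i ∈ range n, (q ^ (i + 1) - 1)

@[simp] lemma gaussFactorial_zero : gaussFactorial q 0 = 1 := by simp [gaussFactorial]

lemma gaussFactorial_succ (n : ℕ) :
    gaussFactorial q (n + 1) = gaussFactorial q n * (q ^ (n + 1) - 1) := prod_range_succ _ n

lemma gaussBinom_add_mul_gaussFactorial (n k : ℕ) :
    gaussBinom q (n + k) k * gaussFactorial q k * gaussFactorial q n =
      gaussFactorial q (n + k) := by
  induction k generalizing n with
  | zero => simp
  | succ k ihk =>
    induction n with
    | zero => simp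
    | succ n ihn =>
      have ih := ihk (n + 1)
      rw [show n + 1 + k = n + (k + 1) by ring] at ih
      rw [show n + 1 + (k + 1) = n + (k + 1) + 1 by ring, gaussBinom_succ_succ,
        gaussFactorial_succ q (n + (k + 1))]
      calc _ = (gaussBinom q (n + (k + 1)) k * gaussFactorial q k * gaussFactorial q (n + 1)) *
                (q ^ (k + 1) - 1) + q ^ (k + 1) * (q ^ (n + 1) - 1) *
              (gaussBinom q (n + (k + 1)) (k + 1) * gaussFactorial q (k + 1) *
                gaussFactorial q n) := by
            rw [gaussFactorial_succ q k, gaussFactorial_succ q n]; ring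
        _ = _ := by rw [ih, ihn]; ring

lemma sum_gaussBinom_succ (n : ℕ) (t : R) :
    ∑ k ∈ range (n + 2), (-t) ^ k * q ^ k.choose 2 * gaussBinom q (n + 1) k =
      (1 - t) * ∑ k ∈ range (n + 1), (-(q * t)) ^ k * q ^ k.choose 2 * gaussBinom q n k := by
  let u (k : ℕ) : R := (-(q * t)) ^ k * q ^ k.choose 2 * gaussBinom q n k
  have pascal (k : ℕ) : (-t) ^ (k + 1) * q ^ (k + 1).choose 2 * gaussBinom q (n + 1) (k + 1) =
      -t * u k + u (k + 1) := by
    have neg_mul_pow (j : ℕ) : (-(q * t)) ^ j = (-t) ^ j * q ^ j := by rw [← mul_pow]; ring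
    simp only [u, gaussBinom_succ_succ, Nat.choose_succ_succ' k 1, Nat.choose_one_right,
      neg_mul_pow]
    ring
  have shift : ∑ k ∈ range (n + 1), u (k + 1) + u 0 = ∑ k ∈ range (n + 1), u k := by
    rw [← sum_range_succ', sum_range_succ]
    simp [u, gaussBinom_eq_zero_of_lt q n.lt_succ_self]
  rw [sum_range_succ', sum_congr rfl fun k _ => pascal k, sum_add_distrib, ← mul_sum, add_assoc]
  simp only [u, pow_zero, Nat.choose_zero_succ, gaussBinom_zero_right, mul_one] at shift ⊢
  rw [shift]
  ring

lemma sum_neg_one_pow_mul_gaussBinom (n : ℕ) :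
    ∑ k ∈ range (n + 1), (-1) ^ k * q ^ k.choose 2 * gaussBinom q n k = if n = 0 then 1 else 0 := by
  cases n with
  | zero => simp
  | succ n => simpa using sum_gaussBinom_succ q n 1

end CommRing

section Field

variable {F : Type*} [Field F] {q : F}

lemma gaussFactorial_ne_zero (hq : ∀ i, 0 < i → q ^ i ≠ 1) (n : ℕ) : gaussFactorial q n ≠ 0 :=
  prod_ne_zero_iff.2 fun i _ => sub_ne_zero.2 (hq _ i.succ_pos)

lemma gaussBinom_mul_gaussBinom (hq : ∀ i, 0 < i → q ^ i ≠ 1) (i j l : ℕ) :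
    gaussBinom q (i + j + l) (i + j) * gaussBinom q (i + j) i =
      gaussBinom q (i + j + l) i * gaussBinom q (j + l) j := by
  have ne := gaussFactorial_ne_zero hq
  have h₁ := gaussBinom_add_mul_gaussFactorial q l (i + j)
  have h₂ := gaussBinom_add_mul_gaussFactorial q j i
  have h₃ := gaussBinom_add_mul_gaussFactorial q (j + l) i
  have h₄ := gaussBinom_add_mul_gaussFactorial q l j
  rw [show l + (i + j) = i + j + l by ring] at h₁
  rw [add_comm j i] at h₂
  rw [show j + l + i = i + j + l by ring] at h₃
  rw [add_comm l j] at h₄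
  apply mul_right_cancel₀ (mul_ne_zero (mul_ne_zero (ne i) (ne j)) (ne l))
  linear_combination gaussBinom q (i + j + l) (i + j) * gaussFactorial q l * h₂ + h₁ - h₃ -
    gaussBinom q (i + j + l) i * gaussFactorial q i * h₄

lemma gaussFactorial_inv (h0 : q ≠ 0) (n : ℕ) :
    gaussFactorial q⁻¹ n * ((-1) ^ n * q ^ (n + 1).choose 2) = gaussFactorial q n := by
  induction n with
  | zero => simp
  | succ n ih =>
    have pow_ne : q ^ (n + 1) ≠ 0 := pow_ne_zero _ h0
    rw [gaussFactorial_succ, gaussFactorial_succ, ← ih, Nat.choose_succ_succ' (n + 1) 1,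
      Nat.choose_one_right, inv_pow, pow_add q (n + 1)]
    field_simp
    ring

lemma choose_two_add (m n : ℕ) : (m + n).choose 2 = m.choose 2 + n.choose 2 + m * n := by
  rw [← Nat.cast_inj (R := ℚ)]
  push_cast [Nat.cast_choose_two]
  ring

lemma gaussBinom_inv (h0 : q ≠ 0) (hq : ∀ i, 0 < i → q ^ i ≠ 1) (n k : ℕ) :
    gaussBinom q⁻¹ (n + k) k * q ^ (k * n) = gaussBinom q (n + k) k := by
  have choose_eq : (n + k + 1).choose 2 = (n + 1).choose 2 + (k + 1).choose 2 + k * n := by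
    simp only [Nat.choose_succ_succ' _ 1, Nat.choose_one_right, choose_two_add n k]
    ring
  apply mul_right_cancel₀ (mul_ne_zero (gaussFactorial_ne_zero hq k) (gaussFactorial_ne_zero hq n))
  rw [← mul_assoc (gaussBinom q (n + k) k), gaussBinom_add_mul_gaussFactorial,
    ← gaussFactorial_inv h0 n, ← gaussFactorial_inv h0 k, ← gaussFactorial_inv h0 (n + k),
    ← gaussBinom_add_mul_gaussFactorial q⁻¹ n k, choose_eq]
  ring

end Field

/-! ### The transition matrix and its inverse -/

/-- The entry at `(m, k)` of the transition matrix of the linear system below. For `x = p` prime it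
counts the subgroups `M ⊇ P` of an abelian group `A` with `|A/(M + pA)| = p^m` and prescribed
preimage `M' = p⁻¹M`, where `|A/(P + pA)| = p^a` and `|A/(M' + pA)| = p^k`; see
`card_addSubgroup_comap_eq`. -/
def liftWeight {R : Type*} [CommSemiring R] (x : R) (a m k : ℕ) : R :=
  x ^ (k * (a - m)) * gaussBinom x (a - k) (a - m)

lemma map_liftWeight {R S : Type*} [CommSemiring R] [CommSemiring S] (φ : R →+* S) (x : R)
    (a m k : ℕ) : φ (liftWeight x a m k) = liftWeight (φ x) a m k := by
  simp [liftWeight, map_gaussBinom]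

lemma liftWeight_self {R : Type*} [CommSemiring R] (x : R) (a m : ℕ) :
    liftWeight x a m m = x ^ (m * (a - m)) := by
  simp [liftWeight]

lemma liftWeight_eq_zero_of_lt {R : Type*} [CommSemiring R] (x : R) {a m k : ℕ} (hmk : m < k)
    (hk : k ≤ a) : liftWeight x a m k = 0 := by
  rw [liftWeight, gaussBinom_eq_zero_of_lt x (by lia), mul_zero]

/-- The entries of the diagonal matrix that conjugates `liftWeight x⁻¹ a` to the inverse of
`liftWeight x a`; see `sum_liftWeight_mul_liftWeight_inv`. -/
def signWeight {R : Type*} [CommRing R] (x : R) (m : ℕ) : R := (-1) ^ m * x ^ m.choose 2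

section Field

variable {F : Type*} [Field F] {q : F}

lemma signWeight_ne_zero (h0 : q ≠ 0) (m : ℕ) : signWeight q m ≠ 0 :=
  mul_ne_zero (pow_ne_zero _ (neg_ne_zero.2 one_ne_zero)) (pow_ne_zero _ h0)

lemma liftWeight_mul_liftWeight_inv (h0 : q ≠ 0) (hq : ∀ i, 0 < i → q ^ i ≠ 1) (n j l i : ℕ) :
    liftWeight q (n + (j + l) + i) (n + (j + l)) (n + l) *
        liftWeight q⁻¹ (n + (j + l) + i) (n + l) n * signWeight q (n + (j + l)) =
      gaussBinom q (i + (j + l)) i * signWeight q (n + l) *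
        ((-1) ^ j * q ^ j.choose 2 * gaussBinom q (j + l) j) := by
  have gauss_eq : gaussBinom q⁻¹ (i + j + l) (i + j) * gaussBinom q (i + j) i * q ^ ((i + j) * l) =
      gaussBinom q (i + j + l) i * gaussBinom q (j + l) j := by
    rw [← gaussBinom_mul_gaussBinom hq, mul_right_comm, show i + j + l = l + (i + j) by ring,
      gaussBinom_inv h0 hq]
  have cancel : q⁻¹ ^ (n * (i + j)) * q ^ (n * (i + j)) = 1 := by
    rw [← mul_pow, inv_mul_cancel₀ h0, one_pow]
  have choose_eq : (n + l) * i + (n + (j + l)).choose 2 =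
      n * (i + j) + (i + j) * l + ((n + l).choose 2 + j.choose 2) := by
    rw [choose_two_add n, choose_two_add j l, choose_two_add n l]
    ring
  have pow_eq := congrArg (q ^ ·) choose_eq
  simp only [pow_add q] at pow_eq
  simp only [liftWeight, signWeight]
  rw [show n + (j + l) + i - (n + (j + l)) = i by lia,
    show n + (j + l) + i - (n + l) = i + j by lia, show n + (j + l) + i - n = i + j + l by lia,
    show i + (j + l) = i + j + l by ring]
  linear_combination (-1) ^ (n + l + j) * gaussBinom q⁻¹ (i + j + l) (i + j) *
      gaussBinom q (i + j) i * q⁻¹ ^ (n * (i + j)) * pow_eq +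
    (-1) ^ (n + l + j) * gaussBinom q⁻¹ (i + j + l) (i + j) * gaussBinom q (i + j) i *
      q ^ ((i + j) * l) * q ^ (n + l).choose 2 * q ^ j.choose 2 * cancel +
    (-1) ^ (n + l + j) * q ^ (n + l).choose 2 * q ^ j.choose 2 * gauss_eq

/-- In matrix form: `K E⁻¹ K̄ E = 1`, where `K = liftWeight q a`, `K̄ = liftWeight q⁻¹ a` and `E` is
the diagonal matrix of sign weights. -/
lemma sum_liftWeight_mul_liftWeight_inv (h0 : q ≠ 0) (hq : ∀ i, 0 < i → q ^ i ≠ 1) {a m n : ℕ}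
    (hm : m ≤ a) (hn : n ≤ a) :
    ∑ k ∈ range (a + 1), liftWeight q a m k * (signWeight q k)⁻¹ * liftWeight q⁻¹ a k n *
      signWeight q n = if m = n then 1 else 0 := by
  set u : ℕ → F := fun k =>
    liftWeight q a m k * (signWeight q k)⁻¹ * liftWeight q⁻¹ a k n * signWeight q n
  have u_eq_zero {k : ℕ} (hk : k ≤ a) (h : k < n ∨ m < k) : u k = 0 := by
    rcases h with h | h <;> simp [u, liftWeight_eq_zero_of_lt _ h, hk, hn]
  rcases lt_or_ge m n with hmn | hnm
  · rw [if_neg hmn.ne]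
    exact sum_eq_zero fun k hk => u_eq_zero (by grind) (by grind)
  obtain ⟨i, rfl⟩ := Nat.exists_eq_add_of_le hm
  obtain ⟨t, rfl⟩ := Nat.exists_eq_add_of_le hnm
  have sign_ne := signWeight_ne_zero h0
  have u_eq (j : ℕ) (hj : j ∈ range (t + 1)) : u (n + (t - j)) =
      gaussBinom q (i + t) i * signWeight q n / signWeight q (n + t) *
        ((-1) ^ j * q ^ j.choose 2 * gaussBinom q t j) := by
    obtain ⟨l, rfl⟩ := Nat.exists_eq_add_of_le (mem_range_succ_iff.1 hj)
    have mul_eq := liftWeight_mul_liftWeight_inv h0 hq n j l i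
    have sign_ne₁ := sign_ne (n + l)
    have sign_ne₂ := sign_ne (n + (j + l))
    simp only [u, Nat.add_sub_cancel_left]
    generalize liftWeight q⁻¹ _ _ _ = w at mul_eq ⊢
    field_simp
    linear_combination signWeight q n * mul_eq
  have support : ∑ k ∈ Ico n (n + t + 1), u k = ∑ k ∈ range (n + t + i + 1), u k :=
    sum_subset (by grind) fun k hk hk' => u_eq_zero (by grind) (by grind)
  rw [← support, sum_Ico_eq_sum_range, show n + t + 1 - n = t + 1 by lia,
    ← sum_range_reflect, Nat.add_sub_cancel, sum_congr rfl u_eq, ← mul_sum,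
    sum_neg_one_pow_mul_gaussBinom]
  rcases eq_or_ne t 0 with rfl | ht
  · simp [sign_ne]
  · simp [ht]

lemma sum_liftWeight_mul_sum_liftWeight_inv (h0 : q ≠ 0) (hq : ∀ i, 0 < i → q ^ i ≠ 1) {a m : ℕ}
    (hm : m ≤ a) (w : ℕ → F) :
    ∑ k ∈ range (a + 1), liftWeight q a m k *
      ((signWeight q k)⁻¹ * ∑ n ∈ range (a + 1), liftWeight q⁻¹ a k n * (signWeight q n * w n)) =
      w m := by
  calc _ = ∑ n ∈ range (a + 1), (∑ k ∈ range (a + 1), liftWeight q a m k * (signWeight q k)⁻¹ *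
        liftWeight q⁻¹ a k n * signWeight q n) * w n := by
        simp only [mul_sum, sum_mul]
        rw [sum_comm]
        exact sum_congr rfl fun _ _ => sum_congr rfl fun _ _ => by ring
    _ = ∑ n ∈ range (a + 1), (if m = n then 1 else 0) * w n :=
        sum_congr rfl fun n hn => by
          rw [sum_liftWeight_mul_liftWeight_inv h0 hq hm (mem_range_succ_iff.1 hn)]
    _ = w m := by simp [Nat.lt_succ_of_le hm]

end Field

/-! ### The linear system -/

lemma exists_eq_of_wellFounded {α β : Type*} [Zero β] {r : α → α → Prop} [DecidableRel r]
    (hwf : WellFounded r) (step : α → (α → β) → β) :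
    ∃ G : α → β, ∀ a, G a = step a fun b => if r b a then G b else 0 := by
  refine ⟨hwf.fix fun a rec => step a fun b => if h : r b a then rec b h else 0, fun a => ?_⟩
  rw [WellFounded.fix_eq]
  simp only [dite_eq_ite]

lemma sum_powerset_neg_one_pow_card_mul_sum_powerset {ι R : Type*} [CommRing R] (U : Finset ι → R)
    (S : Finset ι) :
    ∑ S' ∈ S.powerset, (-1) ^ S'.card * ∑ S'' ∈ S'.powerset, U S'' = (-1) ^ S.card * U S := by
  classical
  induction S using Finset.induction_on generalizing U with
  | empty => simp
  | insert a T ha ih =>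
    rw [sum_powerset_insert ha, ← sum_add_distrib, card_insert_of_notMem ha, pow_succ, mul_neg_one,
      neg_mul, ← ih fun S => U (insert a S), ← sum_neg_distrib]
    refine sum_congr rfl fun S' hS' => ?_
    have ha' : a ∉ S' := fun h => ha (mem_powerset.1 hS' h)
    rw [card_insert_of_notMem ha', sum_powerset_insert ha']
    ring

section SupportSystem

variable {ι : Type*}

/-- The right-hand side of the recursion in `IsSupportSystem`, up to a monomial factor. -/
def supportSum {R : Type*} [CommSemiring R] (f : ι → ℕ) (x : R) (G : Finset ι → ℕ → R)
    (S : Finset ι) (m : ℕ) : R :=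
  ∑ k ∈ range (∑ i ∈ S, f i + 1), liftWeight x (∑ i ∈ S, f i) m k * ∑ S' ∈ S.powerset, G S' k

/-- The linear system satisfied by the generating functions `G S m` of the pairs `(n, M)`, where
`n : ι → ℕ` is an exponent vector with support `S` and `M ⊇ ∏ 𝔓ᵢ ^ nᵢ` is an additive subgroup with
`|𝓞/(M + p𝓞)| = p^m`; here `f` lists the residue degrees, `d` is the rank of `𝓞`, and `x`, `y`
stand for `p` and the variable of the zeta function. -/
structure IsSupportSystem {R : Type*} [CommSemiring R] (f : ι → ℕ) (d : ℕ) (x y : R)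
    (G : Finset ι → ℕ → R) : Prop where
  empty (m : ℕ) : G ∅ m = if m = 0 then 1 else 0
  eq_zero {S : Finset ι} {m : ℕ} : ∑ i ∈ S, f i < m → G S m = 0
  step {S : Finset ι} (hS : S.Nonempty) {m : ℕ} : m ≤ ∑ i ∈ S, f i →
    G S m = y ^ (2 * ∑ i ∈ S, f i) * (x ^ (2 * d) * y) ^ m * supportSum f x G S m

variable {f : ι → ℕ} {d : ℕ}

lemma map_supportSum {R R' : Type*} [CommSemiring R] [CommSemiring R'] (φ : R →+* R') (x : R)
    (G : Finset ι → ℕ → R) (S : Finset ι) (m : ℕ) :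
    φ (supportSum f x G S m) = supportSum f (φ x) (fun S m => φ (G S m)) S m := by
  simp only [supportSum, map_sum, map_mul, map_liftWeight]

lemma IsSupportSystem.map {R R' : Type*} [CommSemiring R] [CommSemiring R'] (φ : R →+* R')
    {x y : R} {G : Finset ι → ℕ → R} (h : IsSupportSystem f d x y G) :
    IsSupportSystem f d (φ x) (φ y) fun S m => φ (G S m) where
  empty m := by rw [h.empty, apply_ite φ, map_one, map_zero]
  eq_zero hm := by rw [h.eq_zero hm, map_zero]
  step hS _ hm := by rw [h.step hS hm]; simp only [map_mul, map_pow, map_supportSum]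

open scoped Classical in
/-- The terms of `supportSum f x G S m` other than the diagonal one come from pairs `(S', k)` that
precede `(S, m)` lexicographically. -/
lemma supportSum_eq_add {R : Type*} [CommSemiring R] {x : R} (G : Finset ι → ℕ → R) {S : Finset ι}
    {m : ℕ} (hm : m ≤ ∑ i ∈ S, f i) :
    supportSum f x G S m = x ^ (m * (∑ i ∈ S, f i - m)) * G S m +
      supportSum f x (fun S' k => if toLex (S', k) < toLex (S, m) then G S' k else 0) S m := by
  have inner_sum_lt {k : ℕ} (hk : k < m) : ∑ S' ∈ S.powerset, G S' k =
      ∑ S' ∈ S.powerset, if toLex (S', k) < toLex (S, m) then G S' k else 0 :=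
    sum_congr rfl fun S' hS' => by
      rw [if_pos (Prod.Lex.toLex_lt_toLex.2 ((mem_powerset.1 hS').lt_or_eq.imp_right (⟨·, hk⟩)))]
  have inner_sum_self : ∑ S' ∈ S.powerset, G S' m = G S m +
      ∑ S' ∈ S.powerset, if toLex (S', m) < toLex (S, m) then G S' m else 0 := by
    rw [← add_sum_erase _ _ (mem_powerset_self S), ← add_sum_erase _ (fun S' => ite _ _ _)
      (mem_powerset_self S), if_neg (lt_irrefl _), zero_add]
    refine congrArg _ (sum_congr rfl fun S' hS' => ?_)
    obtain ⟨hne, hS'⟩ := mem_erase.1 hS'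
    rw [if_pos (Prod.Lex.toLex_lt_toLex.2 (.inl ((mem_powerset.1 hS').lt_of_ne hne)))]
  have diagonal : x ^ (m * (∑ i ∈ S, f i - m)) * G S m = ∑ k ∈ range (∑ i ∈ S, f i + 1),
      if k = m then liftWeight x (∑ i ∈ S, f i) m k * G S m else 0 := by
    simp [liftWeight_self, Nat.lt_succ_of_le hm]
  rw [supportSum, supportSum, diagonal, ← sum_add_distrib]
  refine sum_congr rfl fun k hk => ?_
  rcases lt_trichotomy k m with hkm | rfl | hkm
  · rw [if_neg hkm.ne, zero_add, inner_sum_lt hkm]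
  · rw [if_pos rfl, inner_sum_self, mul_add]
  · simp [hkm.ne', liftWeight_eq_zero_of_lt x hkm (mem_range_succ_iff.1 hk)]

open scoped Classical in
lemma step_iff {R : Type*} [CommRing R] {x y : R} (G : Finset ι → ℕ → R) {S : Finset ι}
    {m : ℕ} (hm : m ≤ ∑ i ∈ S, f i) :
    G S m = y ^ (2 * ∑ i ∈ S, f i) * (x ^ (2 * d) * y) ^ m * supportSum f x G S m ↔
      (1 - x ^ (2 * d * m + m * (∑ i ∈ S, f i - m)) * y ^ (2 * ∑ i ∈ S, f i + m)) * G S m =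
        y ^ (2 * ∑ i ∈ S, f i) * (x ^ (2 * d) * y) ^ m *
          supportSum f x (fun S' k => if toLex (S', k) < toLex (S, m) then G S' k else 0) S m := by
  rw [supportSum_eq_add G hm, mul_pow, ← pow_mul, ← sub_eq_zero,
    ← sub_eq_zero (a := (1 - _) * _)]
  ring_nf

lemma IsSupportSystem.unique {R : Type*} [CommRing R] [IsDomain R] {x y : R} (hf : ∀ i, 0 < f i)
    (hxy : ∀ a b : ℕ, 0 < b → x ^ a * y ^ b ≠ 1) {G H : Finset ι → ℕ → R}
    (hG : IsSupportSystem f d x y G) (hH : IsSupportSystem f d x y H) : G = H := by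
  classical
  suffices ∀ a : Finset ι ×ₗ ℕ, G (ofLex a).1 (ofLex a).2 = H (ofLex a).1 (ofLex a).2 from
    funext₂ fun S m => this (toLex (S, m))
  intro a
  induction a using WellFoundedLT.induction with
  | ind a ih =>
  obtain ⟨S, m⟩ := a
  change G S m = H S m
  rcases S.eq_empty_or_nonempty with rfl | hS
  · rw [hG.empty, hH.empty]
  rcases lt_or_ge (∑ i ∈ S, f i) m with hm | hm
  · rw [hG.eq_zero hm, hH.eq_zero hm]
  have truncation_eq : (fun S' k => if toLex (S', k) < toLex (S, m) then G S' k else 0) =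
      fun S' k => if toLex (S', k) < toLex (S, m) then H S' k else 0 :=
    funext₂ fun S' k => ite_congr rfl (fun h => ih (toLex (S', k)) h) fun _ => rfl
  have hpos : 0 < ∑ i ∈ S, f i := sum_pos (fun i _ => hf i) hS
  have coeff_ne : 1 - x ^ (2 * d * m + m * (∑ i ∈ S, f i - m)) * y ^ (2 * ∑ i ∈ S, f i + m) ≠ 0 :=
    sub_ne_zero.2 (hxy _ _ (by lia)).symm
  refine mul_left_cancel₀ coeff_ne ?_
  rw [(step_iff G hm).1 (hG.step hS hm), (step_iff H hm).1 (hH.step hS hm), truncation_eq]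

lemma exists_isSupportSystem {R : Type*} [CommRing R] {x y : R} (hf : ∀ i, 0 < f i)
    (hxy : ∀ a b : ℕ, 0 < b → IsUnit (1 - x ^ a * y ^ b)) : ∃ G, IsSupportSystem f d x y G := by
  classical
  obtain ⟨G, hG⟩ := exists_eq_of_wellFounded (wellFounded_lt (α := Finset ι ×ₗ ℕ)) fun a H =>
    let S := (ofLex a).1
    let m := (ofLex a).2
    if S = ∅ then (if m = 0 then 1 else 0) else if ∑ i ∈ S, f i < m then 0 else
      Ring.inverse (1 - x ^ (2 * d * m + m * (∑ i ∈ S, f i - m)) * y ^ (2 * ∑ i ∈ S, f i + m)) *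
        (y ^ (2 * ∑ i ∈ S, f i) * (x ^ (2 * d) * y) ^ m *
          supportSum f x (fun S' k => H (toLex (S', k))) S m)
  refine ⟨fun S m => G (toLex (S, m)), fun m => ?_, fun {S m} hm => ?_, fun {S} hS {m} hm => ?_⟩
  · rw [hG]
    simp only [ofLex_toLex, if_true]
    congr
  · have hS : S = ∅ → m ≠ 0 := fun _ => by lia
    rw [hG]
    aesop
  · have hpos : 0 < ∑ i ∈ S, f i := sum_pos (fun i _ => hf i) hS
    rw [step_iff (fun S m => G (toLex (S, m))) hm, hG (toLex (S, m))]
    simp only [ofLex_toLex, hS.ne_empty, hm.not_gt, if_false]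
    rw [Ring.mul_inverse_cancel_left _ _ (hxy _ _ (by lia))]

section Duality

variable {F : Type*} [Field F] {x y : F} {G H : Finset ι → ℕ → F}

/-- The solution of the system at `(x, y)` obtained from a solution `H` at `(x⁻¹, y⁻¹)`. -/
def dualSolution (d : ℕ) (x y : F) (H : Finset ι → ℕ → F) (S : Finset ι) (m : ℕ) : F :=
  (-1) ^ S.card * ∑ S' ∈ S.powerset, (x ^ (2 * d) * y) ^ m * (signWeight x m)⁻¹ * H S' m

lemma sum_powerset_dualSolution (S : Finset ι) (m : ℕ) :
    ∑ S' ∈ S.powerset, dualSolution d x y H S' m =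
      (-1) ^ S.card * ((x ^ (2 * d) * y) ^ m * (signWeight x m)⁻¹ * H S m) :=
  sum_powerset_neg_one_pow_card_mul_sum_powerset
    (fun S' => (x ^ (2 * d) * y) ^ m * (signWeight x m)⁻¹ * H S' m) S

lemma supportSum_dualSolution (hx : x ≠ 0) (hy : y ≠ 0) (hx1 : ∀ i, 0 < i → x ^ i ≠ 1)
    (hH : IsSupportSystem f d x⁻¹ y⁻¹ H) {S : Finset ι} (hS : S.Nonempty) {m : ℕ}
    (hm : m ≤ ∑ i ∈ S, f i) :
    supportSum f x (dualSolution d x y H) S m = (-1) ^ S.card * (y ^ (2 * ∑ i ∈ S, f i))⁻¹ *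
      ((signWeight x m)⁻¹ * ∑ S' ∈ S.powerset, H S' m) := by
  have T_ne : x ^ (2 * d) * y ≠ 0 := mul_ne_zero (pow_ne_zero _ hx) hy
  have H_eq {k : ℕ} (hk : k ∈ range (∑ i ∈ S, f i + 1)) : (x ^ (2 * d) * y) ^ k * H S k =
      (y ^ (2 * ∑ i ∈ S, f i))⁻¹ * supportSum f x⁻¹ H S k := by
    rw [hH.step hS (mem_range_succ_iff.1 hk), inv_pow x, ← mul_inv, inv_pow, inv_pow,
      mul_left_comm, mul_assoc, inv_mul_cancel_left₀ (pow_ne_zero _ T_ne)]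
  have sign_cancel (n : ℕ) (s : F) : signWeight x n * ((signWeight x n)⁻¹ * s) = s :=
    mul_inv_cancel_left₀ (signWeight_ne_zero hx n) s
  rw [← sum_liftWeight_mul_sum_liftWeight_inv hx hx1 hm
    fun n => (signWeight x n)⁻¹ * ∑ S' ∈ S.powerset, H S' n, mul_sum, supportSum]
  refine sum_congr rfl fun k hk => ?_
  simp only [sum_powerset_dualSolution, sign_cancel]
  rw [← supportSum]
  linear_combination liftWeight x (∑ i ∈ S, f i) m k * (-1) ^ S.card * (signWeight x k)⁻¹ * H_eq hk

lemma IsSupportSystem.dualSolution (hx : x ≠ 0) (hy : y ≠ 0) (hx1 : ∀ i, 0 < i → x ^ i ≠ 1)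
    (hH : IsSupportSystem f d x⁻¹ y⁻¹ H) : IsSupportSystem f d x y (dualSolution d x y H) where
  empty m := by
    rcases eq_or_ne m 0 with rfl | hm
    · simp [HeisenbergZeta.dualSolution, hH.empty, signWeight]
    · simp [HeisenbergZeta.dualSolution, hH.empty, hm]
  eq_zero {S m} hm := by
    rw [HeisenbergZeta.dualSolution, sum_eq_zero, mul_zero]
    intro S' hS'
    rw [hH.eq_zero ((sum_le_sum_of_subset (mem_powerset.1 hS')).trans_lt hm), mul_zero]
  step {S} hS {m} hm := by
    have y_ne : y ^ (2 * ∑ i ∈ S, f i) ≠ 0 := pow_ne_zero _ hy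
    rw [supportSum_dualSolution hx hy hx1 hH hS hm, HeisenbergZeta.dualSolution, ← mul_sum]
    field_simp

lemma IsSupportSystem.sum_powerset_eq (hf : ∀ i, 0 < f i) (hx : x ≠ 0) (hy : y ≠ 0)
    (hx1 : ∀ i, 0 < i → x ^ i ≠ 1) (hxy : ∀ a b : ℕ, 0 < b → x ^ a * y ^ b ≠ 1)
    (hG : IsSupportSystem f d x y G) (hH : IsSupportSystem f d x⁻¹ y⁻¹ H) (S : Finset ι) (m : ℕ) :
    ∑ S' ∈ S.powerset, G S' m =
      (-1) ^ S.card * ((x ^ (2 * d) * y) ^ m * (signWeight x m)⁻¹ * H S m) := by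
  rw [hG.unique hf hxy (hH.dualSolution hx hy hx1), sum_powerset_dualSolution]

end Duality

/-- The sum of all entries of a solution of `IsSupportSystem f d`. -/
def totalSum {R : Type*} [AddCommMonoid R] [Fintype ι] (d : ℕ) (G : Finset ι → ℕ → R) : R :=
  ∑ m ∈ range (d + 1), ∑ S : Finset ι, G S m

section Total

variable [Fintype ι]

lemma IsSupportSystem.apply_univ {R : Type*} [CommSemiring R] {x y : R} {G : Finset ι → ℕ → R}
    [Nonempty ι] (hG : IsSupportSystem f (∑ i, f i) x y G) : G univ (∑ i, f i) =
      y ^ (2 * ∑ i, f i) * (x ^ (2 * ∑ i, f i) * y) ^ (∑ i, f i) * totalSum (∑ i, f i) G := by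
  rw [hG.step univ_nonempty le_rfl, supportSum, totalSum]
  simp [liftWeight]

lemma IsSupportSystem.sum_apply_sum {R : Type*} [CommSemiring R] {x y : R} {G : Finset ι → ℕ → R}
    (hf : ∀ i, 0 < f i) (hG : IsSupportSystem f d x y G) :
    ∑ S : Finset ι, G S (∑ i, f i) = G univ (∑ i, f i) := by
  refine sum_eq_single _ (fun S _ hS => hG.eq_zero ?_) (by simp)
  obtain ⟨i, hi⟩ : ∃ i, i ∉ S := by simpa [eq_univ_iff_forall] using hS
  exact sum_lt_sum_of_subset (subset_univ S) (mem_univ i) hi (hf i) (by simp)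

lemma totalSum_inv {F : Type*} [Field F] {x y : F} {G H : Finset ι → ℕ → F} [Nonempty ι]
    (hf : ∀ i, 0 < f i) (hx : x ≠ 0) (hy : y ≠ 0) (hx1 : ∀ i, 0 < i → x ^ i ≠ 1)
    (hxy : ∀ a b : ℕ, 0 < b → x ^ a * y ^ b ≠ 1) (hG : IsSupportSystem f (∑ i, f i) x y G)
    (hH : IsSupportSystem f (∑ i, f i) x⁻¹ y⁻¹ H) :
    totalSum (∑ i, f i) H = (-1) ^ Fintype.card ι * signWeight x (∑ i, f i) *
      x ^ (2 * (∑ i, f i) ^ 2) * y ^ (5 * ∑ i, f i) * totalSum (∑ i, f i) G := by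
  have duality := hG.sum_powerset_eq hf hx hy hx1 hxy hH univ (∑ i, f i)
  rw [powerset_univ, hG.sum_apply_sum hf, hG.apply_univ, hH.apply_univ, card_univ] at duality
  generalize ∑ i, f i = d at *
  have sign_cancel : signWeight x d * (signWeight x d)⁻¹ = 1 :=
    mul_inv_cancel₀ (signWeight_ne_zero hx d)
  have T_cancel : (x ^ (2 * d) * y) ^ d * (x⁻¹ ^ (2 * d) * y⁻¹) ^ d = 1 := by
    rw [inv_pow x, ← mul_inv, ← mul_pow, mul_inv_cancel₀ (mul_ne_zero (pow_ne_zero _ hx) hy),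
      one_pow]
  have y_cancel : y ^ (2 * d) * y⁻¹ ^ (2 * d) = 1 := by
    rw [← mul_pow, mul_inv_cancel₀ hy, one_pow]
  have neg_one_cancel : (-1 : F) ^ Fintype.card ι * (-1) ^ Fintype.card ι = 1 := by
    rw [← mul_pow]; simp
  calc totalSum d H = (-1) ^ Fintype.card ι * (-1) ^ Fintype.card ι *
        (signWeight x d * (signWeight x d)⁻¹) *
        ((x ^ (2 * d) * y) ^ d * (x⁻¹ ^ (2 * d) * y⁻¹) ^ d) * (y ^ (2 * d) * y⁻¹ ^ (2 * d)) *
        totalSum d H := by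
        rw [neg_one_cancel, sign_cancel, T_cancel, y_cancel, one_mul, one_mul, one_mul, one_mul]
    _ = (-1) ^ Fintype.card ι * signWeight x d * y ^ (2 * d) *
        (y ^ (2 * d) * (x ^ (2 * d) * y) ^ d * totalSum d G) := by rw [duality]; ring
    _ = _ := by ring

end Total

end SupportSystem

/-! ### The zeta value attached to the linear system -/

section ZetaValue

variable {ι : Type*} [Fintype ι] {f : ι → ℕ}

/-- `ζ` is the local normal zeta function attached to the residue degrees `f`, evaluated at `x` (in
place of `p`) and `y` (in place of `p^{-s}`). The denominator of the defining formula
`ζ = ∏ᵢ (1 - y^(2 fᵢ)) / ∏_{i < 2d} (1 - x^i y) * totalSum d G` is cleared. -/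
def IsZetaValue {R : Type*} [CommRing R] (f : ι → ℕ) (x y ζ : R) : Prop :=
  ∃ G, IsSupportSystem f (∑ i, f i) x y G ∧
    ζ * ∏ i ∈ range (2 * ∑ i, f i), (1 - x ^ i * y) =
      (∏ i, (1 - y ^ (2 * f i))) * totalSum (∑ i, f i) G

lemma IsZetaValue.map {R R' : Type*} [CommRing R] [CommRing R'] (φ : R →+* R') {x y ζ : R}
    (h : IsZetaValue f x y ζ) : IsZetaValue f (φ x) (φ y) (φ ζ) := by
  obtain ⟨G, hG, hζ⟩ := h
  exact ⟨_, hG.map φ, by simpa [totalSum] using congrArg φ hζ⟩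

lemma prod_one_sub_pow_mul_ne_zero {R : Type*} [CommRing R] [IsDomain R] {x y : R}
    (hxy : ∀ a b : ℕ, 0 < b → x ^ a * y ^ b ≠ 1) (N : ℕ) :
    ∏ i ∈ range N, (1 - x ^ i * y) ≠ 0 :=
  prod_ne_zero_iff.2 fun i _ => sub_ne_zero.2 fun h => hxy i 1 one_pos (by rw [pow_one, h])

lemma IsZetaValue.unique {R : Type*} [CommRing R] [IsDomain R] {x y ζ ζ' : R} (hf : ∀ i, 0 < f i)
    (hxy : ∀ a b : ℕ, 0 < b → x ^ a * y ^ b ≠ 1) (h : IsZetaValue f x y ζ)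
    (h' : IsZetaValue f x y ζ') : ζ = ζ' := by
  obtain ⟨G, hG, hζ⟩ := h
  obtain ⟨G', hG', hζ'⟩ := h'
  refine mul_right_cancel₀ (prod_one_sub_pow_mul_ne_zero hxy (2 * ∑ i, f i)) ?_
  rw [hζ, hζ', hG.unique hf hxy hG']

lemma exists_isZetaValue {R : Type*} [CommRing R] {x y : R} (hf : ∀ i, 0 < f i)
    (hxy : ∀ a b : ℕ, 0 < b → IsUnit (1 - x ^ a * y ^ b)) : ∃ ζ, IsZetaValue f x y ζ := by
  obtain ⟨G, hG⟩ := exists_isSupportSystem (d := ∑ i, f i) hf hxy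
  have denom_isUnit : IsUnit (∏ i ∈ range (2 * ∑ i, f i), (1 - x ^ i * y)) :=
    IsUnit.prod_iff.2 fun i _ => by simpa using hxy i 1 one_pos
  obtain ⟨u, hu⟩ := denom_isUnit
  exact ⟨_, G, hG, by rw [← hu, Units.inv_mul_cancel_right]⟩

lemma prod_one_sub_inv_mul_prod {κ F : Type*} [Field F] (s : Finset κ) {g : κ → F}
    (hg : ∀ i ∈ s, g i ≠ 0) :
    (∏ i ∈ s, (1 - (g i)⁻¹)) * ∏ i ∈ s, g i = (-1) ^ #s * ∏ i ∈ s, (1 - g i) := by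
  rw [← prod_mul_distrib, ← prod_const, ← prod_mul_distrib]
  refine prod_congr rfl fun i hi => ?_
  rw [sub_mul, inv_mul_cancel₀ (hg i hi)]
  ring

lemma IsZetaValue.inv {F : Type*} [Field F] [Nonempty ι] {x y ζ ζ' : F} (hf : ∀ i, 0 < f i)
    (hx : x ≠ 0) (hy : y ≠ 0) (hx1 : ∀ i, 0 < i → x ^ i ≠ 1)
    (hxy : ∀ a b : ℕ, 0 < b → x ^ a * y ^ b ≠ 1) (h : IsZetaValue f x y ζ)
    (h' : IsZetaValue f x⁻¹ y⁻¹ ζ') :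
    ζ' = (-1) ^ (3 * ∑ i, f i) * x ^ (3 * ∑ i, f i).choose 2 * y ^ (5 * ∑ i, f i) * ζ := by
  obtain ⟨G, hG, hζ⟩ := h
  obtain ⟨H, hH, hζ'⟩ := h'
  rw [totalSum_inv hf hx hy hx1 hxy hG hH] at hζ'
  have denom_ne := prod_one_sub_pow_mul_ne_zero hxy (2 * ∑ i, f i)
  have denom_inv := prod_one_sub_inv_mul_prod (range (2 * ∑ i, f i)) (g := fun i => x ^ i * y)
    fun i _ => mul_ne_zero (pow_ne_zero i hx) hy
  have numer_inv := prod_one_sub_inv_mul_prod univ (g := fun i => y ^ (2 * f i))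
    fun i _ => pow_ne_zero _ hy
  rw [card_range, pow_mul, neg_one_sq, one_pow, one_mul, prod_mul_distrib, prod_const, card_range,
    prod_pow_eq_pow_sum, sum_range_id, ← Nat.choose_two_right] at denom_inv
  rw [prod_pow_eq_pow_sum, ← mul_sum, card_univ] at numer_inv
  simp only [mul_inv, ← inv_pow] at denom_inv numer_inv
  have choose_eq : (3 * ∑ i, f i).choose 2 =
      (2 * ∑ i, f i).choose 2 + (∑ i, f i).choose 2 + 2 * (∑ i, f i) ^ 2 := by
    rw [show 3 * ∑ i, f i = 2 * ∑ i, f i + ∑ i, f i by ring, choose_two_add]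
    ring
  have neg_one_pow_three : (-1 : F) ^ (3 * ∑ i, f i) = (-1) ^ ∑ i, f i := by
    rw [pow_mul]; norm_num
  have neg_one_sq_card : (-1 : F) ^ Fintype.card ι * (-1) ^ Fintype.card ι = 1 := by
    rw [← mul_pow]; simp
  refine mul_right_cancel₀ denom_ne ?_
  rw [choose_eq, neg_one_pow_three, mul_assoc _ ζ, hζ, ← denom_inv, ← mul_assoc ζ', hζ', signWeight]
  linear_combination
    (-1) ^ Fintype.card ι * (-1) ^ (∑ i, f i) * x ^ (∑ i, f i).choose 2 * x ^ (2 * (∑ i, f i) ^ 2) *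
      y ^ (5 * ∑ i, f i) * x ^ (2 * ∑ i, f i).choose 2 * totalSum (∑ i, f i) G * numer_inv +
    (-1) ^ (∑ i, f i) * x ^ (∑ i, f i).choose 2 * x ^ (2 * (∑ i, f i) ^ 2) *
      y ^ (5 * ∑ i, f i) * x ^ (2 * ∑ i, f i).choose 2 * totalSum (∑ i, f i) G *
      (∏ i, (1 - y ^ (2 * f i))) * neg_one_sq_card

end ZetaValue

/-! ### Subgroups of a product -/

section Prod

variable {A C : Type*} [AddCommGroup A] [AddCommGroup C]

/-- The intersection of `N` with the second factor of `C × A`, viewed inside `A`. -/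
def fiber (N : AddSubgroup (C × A)) : AddSubgroup A := N.comap (AddMonoidHom.inr C A)

/-- The projection of `N` to the first factor of `C × A`. -/
def base (N : AddSubgroup (C × A)) : AddSubgroup C := N.map (AddMonoidHom.fst C A)

lemma mem_fiber {N : AddSubgroup (C × A)} {a : A} : a ∈ fiber N ↔ (0, a) ∈ N := Iff.rfl

lemma mem_base {N : AddSubgroup (C × A)} {c : C} : c ∈ base N ↔ ∃ a, (c, a) ∈ N := by
  simp [base]

lemma mk_add_mem_iff {N : AddSubgroup (C × A)} {c : C} {a b : A} (hb : b ∈ fiber N) :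
    (c, a + b) ∈ N ↔ (c, a) ∈ N := by
  have hadd : (c, a + b) = (c, a) + (0, b) := by simp
  rw [hadd, N.add_mem_cancel_right (mem_fiber.1 hb)]

lemma index_base_mul_index_fiber (N : AddSubgroup (C × A)) :
    (base N).index * (fiber N).index = N.index := by
  have index_base : (base N).index = (N ⊔ (AddMonoidHom.fst C A).ker).index := by
    rw [base, AddSubgroup.index_map, AddMonoidHom.range_eq_top_of_surjective _ Prod.fst_surjective,
      AddSubgroup.index_top, mul_one]
  have index_fiber : (fiber N).index = N.relIndex (AddMonoidHom.fst C A).ker := by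
    rw [fiber, AddSubgroup.index_comap]
    congr 1
    ext ⟨c, a⟩
    simp [eq_comm, AddSubgroup.mem_prod]
  rw [index_base, index_fiber, ← AddSubgroup.relIndex_sup_left, mul_comm,
    AddSubgroup.relIndex_mul_index le_sup_left]

/-- The subgroup of those `(c, a)` with `c ∈ B` and `φ c = a + M`. -/
def graph (B : AddSubgroup C) (M : AddSubgroup A) (φ : B →+ A ⧸ M) : AddSubgroup (C × A) :=
  ((φ.comp (AddMonoidHom.fst B A)).eqLocus
    ((QuotientAddGroup.mk' M).comp (AddMonoidHom.snd B A))).map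
      (B.subtype.prodMap (AddMonoidHom.id A))

lemma mem_graph {B : AddSubgroup C} {M : AddSubgroup A} {φ : B →+ A ⧸ M} {c : C} {a : A} :
    (c, a) ∈ graph B M φ ↔ ∃ h : c ∈ B, φ ⟨c, h⟩ = a := by
  constructor
  · rintro ⟨⟨b, a⟩, h, ⟨⟩⟩
    exact ⟨b.2, h⟩
  · rintro ⟨h, hφ⟩
    exact ⟨(⟨c, h⟩, a), hφ, rfl⟩

lemma base_graph (B : AddSubgroup C) (M : AddSubgroup A) (φ : B →+ A ⧸ M) :
    base (graph B M φ) = B := by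
  ext c
  simp only [mem_base, mem_graph]
  refine ⟨fun ⟨_, h, _⟩ => h, fun h => ?_⟩
  obtain ⟨a, ha⟩ := QuotientAddGroup.mk_surjective (φ ⟨c, h⟩)
  exact ⟨a, h, ha.symm⟩

lemma fiber_graph (B : AddSubgroup C) (M : AddSubgroup A) (φ : B →+ A ⧸ M) :
    fiber (graph B M φ) = M := by
  ext a
  have φ_zero : ∀ h : (0 : C) ∈ B, φ ⟨0, h⟩ = 0 := fun _ => map_zero φ
  rw [mem_fiber, mem_graph, ← QuotientAddGroup.eq_zero_iff (N := M)]
  exact ⟨fun ⟨h, hφ⟩ => hφ.symm.trans (φ_zero h), fun ha => ⟨B.zero_mem, (φ_zero _).trans ha.symm⟩⟩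

lemma graph_injective (B : AddSubgroup C) (M : AddSubgroup A) :
    Function.Injective (graph B M) := by
  intro φ ψ h
  ext ⟨c, hc⟩
  obtain ⟨a, ha⟩ := QuotientAddGroup.mk_surjective (φ ⟨c, hc⟩)
  have mem_graph_ψ : (c, a) ∈ graph B M ψ := h ▸ mem_graph.2 ⟨hc, ha.symm⟩
  obtain ⟨_, hψ⟩ := mem_graph.1 mem_graph_ψ
  rw [hψ, ← ha]

lemma exists_graph_eq (N : AddSubgroup (C × A)) : ∃ φ, graph (base N) (fiber N) φ = N := by
  let π : N →+ base N := (AddMonoidHom.fst C A).addSubgroupMap N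
  let ψ : N →+ A ⧸ fiber N :=
    (QuotientAddGroup.mk' (fiber N)).comp ((AddMonoidHom.snd C A).comp N.subtype)
  have ker_le : π.ker ≤ ψ.ker := by
    rintro ⟨⟨c, a⟩, hN⟩ hc
    obtain rfl : c = 0 := congrArg Subtype.val hc
    exact (QuotientAddGroup.eq_zero_iff a).2 hN
  let φ : base N →+ A ⧸ fiber N :=
    π.liftOfSurjective ((AddMonoidHom.fst C A).addSubgroupMap_surjective N) ⟨ψ, ker_le⟩
  have φ_apply : ∀ n, φ (π n) = ψ n :=
    π.liftOfRightInverse_comp_apply _ (Function.rightInverse_surjInv _) ⟨ψ, ker_le⟩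
  refine ⟨φ, ?_⟩
  ext ⟨c, a⟩
  rw [mem_graph]
  refine ⟨fun ⟨hc, h⟩ => ?_, fun h => ⟨mem_base.2 ⟨a, h⟩, φ_apply ⟨(c, a), h⟩⟩⟩
  obtain ⟨b, hb⟩ := mem_base.1 hc
  have mk_eq : (b : A ⧸ fiber N) = a := (φ_apply ⟨(c, b), hb⟩).symm.trans h
  rw [← add_neg_cancel_left b a]
  exact (mk_add_mem_iff (QuotientAddGroup.eq.1 mk_eq)).2 hb

/-- Subgroups of `C × A` with given base and fibre, as homomorphisms. -/
noncomputable def graphEquiv (B : AddSubgroup C) (M : AddSubgroup A) :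
    (B →+ A ⧸ M) ≃ {N : AddSubgroup (C × A) // base N = B ∧ fiber N = M} :=
  Equiv.ofBijective (fun φ => ⟨graph B M φ, base_graph B M φ, fiber_graph B M φ⟩)
    ⟨fun _ _ h => graph_injective B M (congrArg Subtype.val h), by
      rintro ⟨N, rfl, rfl⟩
      obtain ⟨φ, hφ⟩ := exists_graph_eq N
      exact ⟨φ, Subtype.ext hφ⟩⟩

lemma card_base_fiber {s : AddSubgroup C → Prop} {M : AddSubgroup A} {c : ℕ} (hc : c ≠ 0)
    (h : ∀ B, s B → Nat.card (B →+ A ⧸ M) = c) :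
    Nat.card {N : AddSubgroup (C × A) // s (base N) ∧ fiber N = M} = Nat.card {B // s B} * c := by
  let toSigma : {N : AddSubgroup (C × A) // s (base N) ∧ fiber N = M} ≃
      Σ B : {B // s B}, {N : AddSubgroup (C × A) // base N = B ∧ fiber N = M} :=
    { toFun := fun N => ⟨⟨base N.1, N.2.1⟩, N.1, rfl, N.2.2⟩
      invFun := fun N => ⟨N.2.1, N.2.2.1.symm ▸ N.1.2, N.2.2.2⟩
      left_inv := fun _ => rfl
      right_inv := by
        rintro ⟨⟨B, hB⟩, N, h⟩
        obtain ⟨rfl, rfl⟩ : base N = B ∧ fiber N = M := h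
        rfl }
  have equivFin : ∀ B : {B // s B}, Nonempty
      ({N : AddSubgroup (C × A) // base N = B ∧ fiber N = M} ≃ Fin c) := fun B => by
    have hcard := (Nat.card_congr (graphEquiv B.1 M)).symm.trans (h B.1 B.2)
    have := Nat.finite_of_card_ne_zero (hcard.trans_ne hc)
    exact ⟨Finite.equivFinOfCardEq hcard⟩
  rw [Nat.card_congr (toSigma.trans (Equiv.sigmaCongrRight fun B => (equivFin B).some)),
    Nat.card_congr (Equiv.sigmaEquivProd _ _), Nat.card_prod, Nat.card_fin]

end Prod

/-! ### Generating series of subgroups of finite index -/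

/-- Families of power series in which every coefficient vanishes for almost all members. -/
def IsCoeffFinite {α : Type*} (w : α → PowerSeries ℚ) : Prop :=
  ∀ n, {a | PowerSeries.coeff n (w a) ≠ 0}.Finite

lemma IsCoeffFinite.summable {α : Type*} {w : α → PowerSeries ℚ} (h : IsCoeffFinite w) :
    Summable w :=
  (PowerSeries.WithPiTopology.summable_iff_summable_coeff ℚ).2 fun n =>
    summable_of_hasFiniteSupport (h n)

lemma IsCoeffFinite.comp_injective {α β : Type*} {w : α → PowerSeries ℚ} (h : IsCoeffFinite w)
    {g : β → α} (hg : Function.Injective g) : IsCoeffFinite (w ∘ g) :=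
  fun n => (h n).preimage hg.injOn

lemma IsCoeffFinite.hasSum_fiberwise {α β : Type*} {w : α → PowerSeries ℚ} (h : IsCoeffFinite w)
    (g : α → β) {v : β → PowerSeries ℚ} (hv : ∀ b, HasSum (fun a : {a // g a = b} => w a) (v b)) :
    HasSum v (∑' a, w a) :=
  ((Equiv.sigmaFiberEquiv g).hasSum_iff.2 h.summable.hasSum).sigma hv

lemma hasSum_natCard_fiber {α β : Type*} [Finite α] (g : α → β) :
    HasSum (fun b => (Nat.card {a // g a = b} : ℚ)) (Nat.card α) := by
  have hasSum_one : ∀ γ : Type _, [Finite γ] → HasSum (fun _ : γ => (1 : ℚ)) (Nat.card γ) := by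
    intro γ _
    have := Fintype.ofFinite γ
    simpa using hasSum_fintype fun _ : γ => (1 : ℚ)
  exact ((Equiv.sigmaFiberEquiv g).hasSum_iff.2 (hasSum_one α)).sigma fun b => hasSum_one _

section SubgroupSeries

variable {A C : Type*} [AddCommGroup A] [AddCommGroup C] {p : ℕ}

/-- The generating series `∑ n, #{N | s N, |A : N| = p ^ n} * X ^ n`. -/
noncomputable def subgroupSeries (p : ℕ) (s : AddSubgroup A → Prop) : PowerSeries ℚ :=
  PowerSeries.mk fun n => (Nat.card {N : AddSubgroup A // s N ∧ N.index = p ^ n} : ℚ)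

lemma coeff_subgroupSeries (s : AddSubgroup A → Prop) (n : ℕ) :
    PowerSeries.coeff n (subgroupSeries p s) =
      Nat.card {N : AddSubgroup A // s N ∧ N.index = p ^ n} :=
  PowerSeries.coeff_mk n _

lemma subgroupSeries_congr (e : A ≃+ C) {s : AddSubgroup A → Prop} {t : AddSubgroup C → Prop}
    (h : ∀ N, s N ↔ t (e.mapAddSubgroup N)) : subgroupSeries p s = subgroupSeries p t := by
  ext n
  simp only [coeff_subgroupSeries]
  congr 1
  refine Nat.card_congr (e.mapAddSubgroup.toEquiv.subtypeEquiv fun N => ?_)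
  rw [h, ← AddSubgroup.index_map_equiv N e]
  rfl

lemma finite_setOf_index_eq [Module.Finite ℤ A] {n : ℕ} (hn : n ≠ 0) :
    {N : AddSubgroup A | N.index = n}.Finite := by
  have : AddGroup.FG A := Module.Finite.iff_addGroup_fg.1 inferInstance
  have := AddSubgroup.finiteIndex_range_nsmulAddMonoidHom_of_fg A hn
  have finite_setOf_le : {N | (nsmulAddMonoidHom (α := A) n).range ≤ N}.Finite :=
    Finite.of_equiv _ (QuotientAddGroup.comapMk'OrderIso _).toEquiv
  refine finite_setOf_le.subset ?_
  rintro N rfl _ ⟨a, rfl⟩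
  exact N.nsmul_index_mem a

lemma hasSum_subgroupSeries [Module.Finite ℤ A] {β : Type*} (hp : p ≠ 0)
    (s : AddSubgroup A → Prop) (g : AddSubgroup A → β) :
    HasSum (fun b => subgroupSeries p fun N => s N ∧ g N = b) (subgroupSeries p s) := by
  rw [PowerSeries.WithPiTopology.hasSum_iff_hasSum_coeff]
  intro n
  have : Finite {N : AddSubgroup A // s N ∧ N.index = p ^ n} :=
    ((finite_setOf_index_eq (pow_ne_zero n hp)).subset fun _ hN => hN.2).to_subtype
  have card_fiber : ∀ b, Nat.card {N : AddSubgroup A // (s N ∧ g N = b) ∧ N.index = p ^ n} =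
      Nat.card {N : {N : AddSubgroup A // s N ∧ N.index = p ^ n} // g N = b} := fun b => by
    rw [Nat.card_congr (Equiv.subtypeSubtypeEquivSubtypeInter _ fun N => g N = b)]
    simp only [and_right_comm]
  simp only [coeff_subgroupSeries, card_fiber]
  exact hasSum_natCard_fiber fun N : {N : AddSubgroup A // s N ∧ N.index = p ^ n} => g N

lemma nonempty_addEquiv_of_index_ne_zero [Module.Free ℤ C] [Module.Finite ℤ C]
    {B : AddSubgroup C} (hB : B.index ≠ 0) : Nonempty (B ≃+ C) := by
  let e : C ≃+ (Fin (Module.finrank ℤ C) → ℤ) := (Module.finBasis ℤ C).equivFun.toAddEquiv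
  rw [← AddSubgroup.index_map_equiv B e] at hB
  exact (Int.addSubgroup_index_ne_zero_iff.1 hB).map fun e' =>
    ((e.addSubgroupMap B).trans e').trans e.symm

lemma natCard_linearMap {F V W : Type*} [CommRing F] [StrongRankCondition F] [AddCommGroup V]
    [Module F V] [Module.Free F V] [Module.Finite F V] [AddCommGroup W] [Module F W] :
    Nat.card (V →ₗ[F] W) = Nat.card W ^ Module.finrank F V := by
  rw [← Nat.card_congr ((Module.finBasis F V).constr F).toEquiv, Nat.card_fun, Nat.card_fin]

lemma card_base_fiber_index [Module.Free ℤ C] [Module.Finite ℤ C] (hp : p ≠ 0)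
    (s : AddSubgroup C → Prop) {M : AddSubgroup A} {k n : ℕ} (hM : M.index = p ^ k) (hkn : k ≤ n) :
    Nat.card {N : AddSubgroup (C × A) // (s (base N) ∧ fiber N = M) ∧ N.index = p ^ n} =
      p ^ (Module.finrank ℤ C * k) *
        Nat.card {B : AddSubgroup C // s B ∧ B.index = p ^ (n - k)} := by
  have index_iff : ∀ N : AddSubgroup (C × A), (s (base N) ∧ fiber N = M) ∧ N.index = p ^ n ↔
      (s (base N) ∧ (base N).index = p ^ (n - k)) ∧ fiber N = M := by
    intro N
    rw [← index_base_mul_index_fiber, ← Nat.pow_sub_mul_pow p hkn, and_assoc, and_assoc]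
    refine and_congr_right fun _ => ?_
    rw [and_comm (b := fiber N = M)]
    refine and_congr_right fun hN => ?_
    rw [hN, hM, Nat.mul_left_inj (pow_ne_zero k hp)]
  simp only [index_iff]
  rw [mul_comm]
  refine card_base_fiber (s := fun B => s B ∧ B.index = p ^ (n - k)) (pow_ne_zero _ hp) ?_
  rintro B ⟨-, hB⟩
  obtain ⟨e⟩ := nonempty_addEquiv_of_index_ne_zero (hB.trans_ne (pow_ne_zero _ hp))
  rw [Nat.card_congr e.addMonoidHomCongrLeftEquiv,
    Nat.card_congr (addMonoidHomLequivInt ℤ).toEquiv, natCard_linearMap,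
    ← AddSubgroup.index_eq_card, hM, pow_mul']

lemma subgroupSeries_base_fiber [Module.Free ℤ C] [Module.Finite ℤ C] (hp : 1 < p)
    (s : AddSubgroup C → Prop) {M : AddSubgroup A} {k : ℕ} (hM : M.index = p ^ k) :
    subgroupSeries p (fun N : AddSubgroup (C × A) => s (base N) ∧ fiber N = M) =
      (PowerSeries.C (p : ℚ) ^ Module.finrank ℤ C * PowerSeries.X) ^ k * subgroupSeries p s := by
  ext n
  rw [mul_pow, ← pow_mul, ← map_pow, mul_assoc, PowerSeries.coeff_C_mul,
    PowerSeries.coeff_X_pow_mul']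
  simp only [coeff_subgroupSeries]
  split_ifs with hkn
  · rw [card_base_fiber_index (by lia) s hM hkn]
    push_cast
    rfl
  · have : IsEmpty {N : AddSubgroup (C × A) // (s (base N) ∧ fiber N = M) ∧ N.index = p ^ n} := by
      refine ⟨fun ⟨N, ⟨_, hN⟩, hn⟩ => hkn ?_⟩
      rw [← index_base_mul_index_fiber, hN, hM] at hn
      exact (Nat.pow_dvd_pow_iff_le_right hp).1 (Dvd.intro_left _ hn)
    simp

lemma subgroupSeries_fiber_eq_zero (hp : p.Prime) (s : AddSubgroup (C × A) → Prop)
    {M : AddSubgroup A} (hM : ∀ k, M.index ≠ p ^ k) :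
    subgroupSeries p (fun N : AddSubgroup (C × A) => s N ∧ fiber N = M) = 0 := by
  ext n
  have : IsEmpty {N : AddSubgroup (C × A) // (s N ∧ fiber N = M) ∧ N.index = p ^ n} := by
    refine ⟨fun ⟨N, ⟨_, hN⟩, hn⟩ => ?_⟩
    rw [← index_base_mul_index_fiber, hN] at hn
    obtain ⟨k, -, hk⟩ := (Nat.dvd_prime_pow hp).1 (Dvd.intro_left _ hn)
    exact hM k hk
  simp [coeff_subgroupSeries]

lemma subgroupSeries_le [Module.Free ℤ C] [Module.Finite ℤ C] (hp : 1 < p) {B : AddSubgroup C}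
    {e : ℕ} (hB : B.index = p ^ e) :
    subgroupSeries p (· ≤ B) =
      PowerSeries.X ^ e * subgroupSeries p fun _ : AddSubgroup C => True := by
  have hp0 : p ≠ 0 := by lia
  obtain ⟨φ⟩ := nonempty_addEquiv_of_index_ne_zero (hB.trans_ne (pow_ne_zero e hp0))
  rw [← subgroupSeries_congr φ (s := fun _ => True) (t := fun _ => True) fun _ => Iff.rfl]
  ext n
  rw [PowerSeries.coeff_X_pow_mul']
  simp only [coeff_subgroupSeries]
  split_ifs with hen
  · congr 1
    refine (Nat.card_congr (((AddSubgroup.MapSubtype.orderIso B).toEquiv.subtypeEquiv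
      (q := fun L => L.1.index = p ^ n) fun L => ?_).trans
        (Equiv.subtypeSubtypeEquivSubtypeInter (· ≤ B) fun L => L.index = p ^ n))).symm
    rw [true_and, ← Nat.mul_left_inj (pow_ne_zero e hp0), Nat.pow_sub_mul_pow p hen, ← hB,
      ← AddSubgroup.index_map_subtype]
    rfl
  · have : IsEmpty {L : AddSubgroup C // L ≤ B ∧ L.index = p ^ n} := by
      refine ⟨fun ⟨L, hL, hn⟩ => hen ?_⟩
      rw [← AddSubgroup.relIndex_mul_index hL, hB] at hn
      exact (Nat.pow_dvd_pow_iff_le_right hp).1 (Dvd.intro_left _ hn)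
    simp

lemma int_index_eq_iff {M : AddSubgroup ℤ} {n : ℕ} :
    M.index = n ↔ M = AddSubgroup.zmultiples (n : ℤ) := by
  refine ⟨fun h => ?_, fun h => by simp [h, Int.index_zmultiples]⟩
  obtain ⟨a, rfl⟩ := Int.subgroup_cyclic M
  rw [← AddSubgroup.zmultiples_eq_closure] at h ⊢
  rw [← h, Int.index_zmultiples, Int.zmultiples_natAbs]

lemma subgroupSeries_prod_int [Module.Free ℤ C] [Module.Finite ℤ C] (hp : p.Prime) :
    subgroupSeries p (fun _ : AddSubgroup (C × ℤ) => True) *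
        (1 - PowerSeries.C (p : ℚ) ^ Module.finrank ℤ C * PowerSeries.X) =
      subgroupSeries p fun _ : AddSubgroup C => True := by
  let Z : ℕ → AddSubgroup ℤ := fun k => AddSubgroup.zmultiples ((p ^ k : ℕ) : ℤ)
  have index_Z : ∀ k, (Z k).index = p ^ k := fun k => int_index_eq_iff.2 rfl
  have Z_injective : Function.Injective Z := fun k l h =>
    Nat.pow_right_injective hp.two_le ((index_Z k).symm.trans (h ▸ index_Z l))
  have hasSum_fiber := hasSum_subgroupSeries hp.ne_zero
    (fun _ : AddSubgroup (C × ℤ) => True) fiber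
  rw [← Z_injective.hasSum_iff] at hasSum_fiber
  swap
  · intro M hM
    exact subgroupSeries_fiber_eq_zero hp _ fun k hk => hM ⟨k, (int_index_eq_iff.1 hk).symm⟩
  have series_Z : ∀ k, subgroupSeries p (fun N : AddSubgroup (C × ℤ) => True ∧ fiber N = Z k) =
      (PowerSeries.C (p : ℚ) ^ Module.finrank ℤ C * PowerSeries.X) ^ k *
        subgroupSeries p fun _ : AddSubgroup C => True := fun k =>
    subgroupSeries_base_fiber hp.one_lt (fun _ => True) (index_Z k)
  simp only [Function.comp_def, series_Z] at hasSum_fiber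
  have constantCoeff_eq_zero :
      (PowerSeries.C (p : ℚ) ^ Module.finrank ℤ C * PowerSeries.X).constantCoeff = 0 := by simp
  rw [hasSum_fiber.unique ((PowerSeries.WithPiTopology.summable_pow_of_constantCoeff_eq_zero
      constantCoeff_eq_zero).hasSum.mul_right _), mul_right_comm,
    PowerSeries.WithPiTopology.tsum_pow_mul_one_sub_of_constantCoeff_eq_zero constantCoeff_eq_zero,
    one_mul]

lemma subgroupSeries_fin_zero (hp : 1 < p) :
    subgroupSeries p (fun _ : AddSubgroup (Fin 0 → ℤ) => True) = 1 := by
  ext n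
  have index_eq_one : ∀ N : AddSubgroup (Fin 0 → ℤ), N.index = 1 := fun N =>
    AddSubgroup.index_eq_one.2 (Subsingleton.elim _ _)
  rw [coeff_subgroupSeries, PowerSeries.coeff_one]
  rcases eq_or_ne n 0 with rfl | hn
  · simp [index_eq_one]
  · simp [index_eq_one, hn, (Nat.one_lt_pow hn hp).ne]

lemma subgroupSeries_mul_prod [Module.Free ℤ C] [Module.Finite ℤ C] (hp : p.Prime) :
    subgroupSeries p (fun _ : AddSubgroup C => True) *
      ∏ i ∈ range (Module.finrank ℤ C), (1 - PowerSeries.C (p : ℚ) ^ i * PowerSeries.X) = 1 := by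
  rw [subgroupSeries_congr (Module.finBasis ℤ C).equivFun.toAddEquiv
    (t := fun _ => True) fun _ => Iff.rfl]
  induction Module.finrank ℤ C with
  | zero => rw [prod_range_zero, mul_one, subgroupSeries_fin_zero hp.one_lt]
  | succ D ih =>
    let e : (Fin (D + 1) → ℤ) ≃+ (Fin D → ℤ) × ℤ :=
      (Fin.consLinearEquiv ℤ (fun _ : Fin (D + 1) => ℤ)).symm.toAddEquiv.trans AddEquiv.prodComm
    have series_prod_int := subgroupSeries_prod_int (C := Fin D → ℤ) hp
    rw [Module.finrank_fin_fun] at series_prod_int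
    rw [subgroupSeries_congr e (t := fun _ => True) fun _ => Iff.rfl, prod_range_succ, mul_comm,
      mul_assoc, mul_comm (_ - _), series_prod_int, mul_comm, ih]

end SubgroupSeries

/-! ### Normal subgroups of Heisenberg groups -/

section Heisenberg

variable {R : Type*} [CommRing R]

/-- The largest ideal contained in the additive subgroup `M`. -/
def core (M : AddSubgroup R) : Ideal R where
  carrier := {x | ∀ t, t * x ∈ M}
  zero_mem' t := by simp
  add_mem' ha hb t := by rw [mul_add]; exact M.add_mem (ha t) (hb t)
  smul_mem' c x hx t := by rw [smul_eq_mul, ← mul_assoc]; exact hx _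

lemma core_le (M : AddSubgroup R) : (core M).toAddSubgroup ≤ M := fun x hx => by
  simpa using hx 1

lemma le_core {M : AddSubgroup R} {I : Ideal R} : I ≤ core M ↔ I.toAddSubgroup ≤ M :=
  ⟨fun h _ hx => core_le M (h hx), fun h _ hx t => h (I.mul_mem_left t hx)⟩

/-- Two copies of `core M`. Normal subgroups of the Heisenberg group correspond to the additive
subgroups `N` of `R² × R` whose projection to `R²` lies in `coreSq (N ∩ R)`; see
`normalSubgroupCount_heisenberg`. -/
def coreSq (M : AddSubgroup R) : AddSubgroup (R × R) :=
  (core M).toAddSubgroup.prod (core M).toAddSubgroup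

lemma mem_coreSq {M : AddSubgroup R} {c : R × R} :
    c ∈ coreSq M ↔ (∀ t, t * c.1 ∈ M) ∧ ∀ t, t * c.2 ∈ M := Iff.rfl

/-- Matrix entries of an element of the Heisenberg group, with the central entry last. -/
def entriesEquiv (R : Type*) [CommRing R] : Heisenberg R ≃ (R × R) × R where
  toFun g := ((g.x, g.y), g.z)
  invFun a := ⟨a.1.1, a.1.2, a.2⟩

lemma mk_add_mul_y_mem_iff {H : Subgroup (Heisenberg R)} (hH : H.Normal) {x y z : R} (t : R) :
    (⟨x, y, z + t * y⟩ : Heisenberg R) ∈ H ↔ (⟨x, y, z⟩ : Heisenberg R) ∈ H := by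
  have conj_eq : (⟨x, y, z + t * y⟩ : Heisenberg R) = ⟨t, 0, 0⟩ * ⟨x, y, z⟩ * ⟨t, 0, 0⟩⁻¹ := by
    ext <;> simp [Heisenberg.mul_def, Heisenberg.inv_def]
  rw [conj_eq, hH.mem_comm_iff, inv_mul_cancel_left]

lemma mk_add_mul_x_mem_iff {H : Subgroup (Heisenberg R)} (hH : H.Normal) {x y z : R} (t : R) :
    (⟨x, y, z + t * x⟩ : Heisenberg R) ∈ H ↔ (⟨x, y, z⟩ : Heisenberg R) ∈ H := by
  have conj_eq : (⟨x, y, z + t * x⟩ : Heisenberg R) = ⟨0, -t, 0⟩ * ⟨x, y, z⟩ * ⟨0, -t, 0⟩⁻¹ := by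
    ext <;> simp [Heisenberg.mul_def, Heisenberg.inv_def, mul_comm]
  rw [conj_eq, hH.mem_comm_iff, inv_mul_cancel_left]

/-- A normal subgroup of the Heisenberg group, regarded as a subgroup of `R² × R`. -/
def entriesSubgroup (H : Subgroup (Heisenberg R)) (hH : H.Normal) : AddSubgroup ((R × R) × R) where
  carrier := {a | (entriesEquiv R).symm a ∈ H}
  zero_mem' := H.one_mem
  add_mem' {a b} ha hb := by
    have mul_mem := H.mul_mem ha ((mk_add_mul_y_mem_iff hH (-a.1.1)).2 hb)
    have mul_eq : (⟨a.1.1, a.1.2, a.2⟩ * ⟨b.1.1, b.1.2, b.2 + -a.1.1 * b.1.2⟩ : Heisenberg R) =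
        (entriesEquiv R).symm (a + b) := by
      ext <;> simp [Heisenberg.mul_def, entriesEquiv]
      ring
    rwa [Set.mem_ofPred_eq, ← mul_eq]
  neg_mem' {a} ha := by
    refine (mk_add_mul_y_mem_iff hH (-a.1.1)).1 ?_
    have inv_eq : ((entriesEquiv R).symm a)⁻¹ = ⟨-a.1.1, -a.1.2, -a.2 + -a.1.1 * -a.1.2⟩ := by
      ext <;> simp [Heisenberg.inv_def, entriesEquiv, sub_eq_neg_add]
    exact inv_eq ▸ H.inv_mem ha

lemma index_entriesSubgroup (H : Subgroup (Heisenberg R)) (hH : H.Normal) :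
    (entriesSubgroup H hH).index = H.index := by
  refine Nat.card_congr (Quotient.congr (entriesEquiv R).symm fun a b => ?_)
  rw [QuotientAddGroup.leftRel_apply, QuotientGroup.leftRel_apply]
  have inv_mul_eq : ((entriesEquiv R).symm a)⁻¹ * (entriesEquiv R).symm b =
      ⟨(-a + b).1.1, (-a + b).1.2, (-a + b).2 + -a.1.1 * (-a + b).1.2⟩ := by
    ext <;> simp [Heisenberg.mul_def, Heisenberg.inv_def, entriesEquiv]
    ring
  rw [inv_mul_eq]
  exact (mk_add_mul_y_mem_iff hH _).symm

lemma base_entriesSubgroup_le (H : Subgroup (Heisenberg R)) (hH : H.Normal) :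
    base (entriesSubgroup H hH) ≤ coreSq (fiber (entriesSubgroup H hH)) := by
  rintro ⟨x, y⟩ hxy
  obtain ⟨z, hz⟩ := mem_base.1 hxy
  have central_mem (w : R) (hw : (⟨x, y, z + w⟩ : Heisenberg R) ∈ H) :
      (⟨0, 0, w⟩ : Heisenberg R) ∈ H := by
    have div_eq : (⟨x, y, z + w⟩ * ⟨x, y, z⟩⁻¹ : Heisenberg R) = ⟨0, 0, w⟩ := by
      ext <;> simp [Heisenberg.mul_def, Heisenberg.inv_def]
      ring
    exact div_eq ▸ H.mul_mem hw (H.inv_mem hz)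
  exact mem_coreSq.2 ⟨fun t => central_mem _ ((mk_add_mul_x_mem_iff hH t).2 hz),
    fun t => central_mem _ ((mk_add_mul_y_mem_iff hH t).2 hz)⟩

lemma mul_mem_fiber {N : AddSubgroup ((R × R) × R)} (hN : base N ≤ coreSq (fiber N))
    {x y z : R} (h : ((x, y), z) ∈ N) (t : R) : t * x ∈ fiber N ∧ t * y ∈ fiber N :=
  (mem_coreSq.1 (hN (mem_base.2 ⟨z, h⟩))).imp (· t) (· t)

/-- The inverse of `entriesSubgroup`. -/
def ofEntriesSubgroup (N : AddSubgroup ((R × R) × R)) (hN : base N ≤ coreSq (fiber N)) :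
    Subgroup (Heisenberg R) where
  carrier := {g | entriesEquiv R g ∈ N}
  one_mem' := N.zero_mem
  mul_mem' {g _} hg hh := (mk_add_mem_iff (mul_mem_fiber hN hh g.x).2).2 (N.add_mem hg hh)
  inv_mem' {g} hg := by
    have mem := (mk_add_mem_iff (mul_mem_fiber hN hg g.x).2).2 (N.neg_mem hg)
    rwa [neg_add_eq_sub] at mem

lemma ofEntriesSubgroup_normal (N : AddSubgroup ((R × R) × R))
    (hN : base N ≤ coreSq (fiber N)) : (ofEntriesSubgroup N hN).Normal := by
  refine ⟨fun g hg h => ?_⟩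
  have conj_eq : entriesEquiv R (h * g * h⁻¹) = ((g.x, g.y), g.z + (h.x * g.y + -h.y * g.x)) := by
    simp [entriesEquiv, Heisenberg.mul_def, Heisenberg.inv_def]
    ring
  change entriesEquiv R (h * g * h⁻¹) ∈ N
  rw [conj_eq]
  exact (mk_add_mem_iff ((fiber N).add_mem (mul_mem_fiber hN hg h.x).2
    (mul_mem_fiber hN hg (-h.y)).1)).2 hg

lemma normalSubgroupCount_heisenberg (n : ℕ) : normalSubgroupCount (Heisenberg R) n =
    Nat.card {N : AddSubgroup ((R × R) × R) // base N ≤ coreSq (fiber N) ∧ N.index = n} := by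
  refine Nat.card_congr
    { toFun := fun H => ⟨entriesSubgroup H.1 H.2.1, base_entriesSubgroup_le _ _, by
        rw [index_entriesSubgroup, H.2.2]⟩
      invFun := fun N => ⟨ofEntriesSubgroup N.1 N.2.1, ofEntriesSubgroup_normal _ _, ?_⟩
      left_inv := fun _ => rfl
      right_inv := fun _ => rfl }
  rw [← index_entriesSubgroup _ (ofEntriesSubgroup_normal _ N.2.1)]
  exact N.2.2

lemma hasSum_normalSubgroupCount [Module.Finite ℤ R] {p : ℕ} (hp : p ≠ 0) :
    HasSum (fun M : AddSubgroup R => subgroupSeries p fun N : AddSubgroup ((R × R) × R) =>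
        base N ≤ coreSq M ∧ fiber N = M)
      (PowerSeries.mk fun i => (normalSubgroupCount (Heisenberg R) (p ^ i) : ℚ)) := by
  have hasSum_fiber := hasSum_subgroupSeries hp
    (fun N : AddSubgroup ((R × R) × R) => base N ≤ coreSq (fiber N)) fiber
  have fiber_iff (M : AddSubgroup R) (N : AddSubgroup ((R × R) × R)) :
      base N ≤ coreSq (fiber N) ∧ fiber N = M ↔ base N ≤ coreSq M ∧ fiber N = M :=
    and_congr_left fun h => by rw [h]
  simp only [fiber_iff] at hasSum_fiber
  simp only [normalSubgroupCount_heisenberg]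
  exact hasSum_fiber

lemma subgroupSeries_coreSq_mul_prod [Module.Free ℤ R] [Module.Finite ℤ R] {p : ℕ} (hp : p.Prime)
    {M : AddSubgroup R} {k e : ℕ} (hM : M.index = p ^ k) (he : (coreSq M).index = p ^ e) :
    subgroupSeries p (fun N : AddSubgroup ((R × R) × R) => base N ≤ coreSq M ∧ fiber N = M) *
      ∏ i ∈ range (2 * Module.finrank ℤ R), (1 - PowerSeries.C (p : ℚ) ^ i * PowerSeries.X) =
    (PowerSeries.C (p : ℚ) ^ (2 * Module.finrank ℤ R) * PowerSeries.X) ^ k *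
      PowerSeries.X ^ e := by
  rw [subgroupSeries_base_fiber hp.one_lt (· ≤ coreSq M) hM, subgroupSeries_le hp.one_lt he,
    two_mul, ← Module.finrank_prod, mul_assoc, mul_assoc, subgroupSeries_mul_prod hp, mul_one]

end Heisenberg

/-! ### Subgroups of elementary abelian groups -/

lemma card_base_mul_card_fiber {A C : Type*} [AddCommGroup A] [AddCommGroup C]
    (N : AddSubgroup (C × A)) : Nat.card (base N) * Nat.card (fiber N) = Nat.card N := by
  have inf_ker : N ⊓ (AddMonoidHom.fst C A).ker = (fiber N).map (AddMonoidHom.inr C A) := by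
    rw [fiber, AddSubgroup.map_comap_eq, inf_comm]
    congr 1
    ext ⟨c, a⟩
    simp [eq_comm, AddSubgroup.mem_prod]
  have card_fiber : Nat.card (N ⊓ (AddMonoidHom.fst C A).ker : AddSubgroup (C × A)) =
      Nat.card (fiber N) := by
    rw [inf_ker, AddSubgroup.card_map_of_injective (Prod.mk_right_injective 0)]
  rw [base, ← AddSubgroup.relIndex_ker, ← AddSubgroup.inf_relIndex_left, ← card_fiber,
    ← AddSubgroup.relIndex_bot_left, ← AddSubgroup.relIndex_bot_left N, mul_comm,
    AddSubgroup.relIndex_mul_relIndex _ _ _ bot_le inf_le_left]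

section Elementary

variable {p : ℕ} [Fact p.Prime] {A C : Type*} [AddCommGroup A] [AddCommGroup C]
  [Module (ZMod p) C]

lemma finrank_zmod_eq [Finite C] {k : ℕ} (h : Nat.card C = p ^ k) :
    Module.finrank (ZMod p) C = k := by
  rw [Module.natCard_eq_pow_finrank (K := ZMod p), Nat.card_zmod] at h
  exact Nat.pow_right_injective (Fact.out : p.Prime).two_le h

lemma natCard_addMonoidHom_zmod [Module (ZMod p) A] {k : ℕ} (h : Nat.card C = p ^ k) :
    Nat.card (C →+ A) = Nat.card A ^ k := by
  have : Finite C := Nat.finite_of_card_ne_zero (h.trans_ne (pow_ne_zero k (NeZero.ne p)))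
  rw [Nat.card_congr (AddMonoidHom.toZModLinearMapEquiv p).toEquiv, natCard_linearMap,
    finrank_zmod_eq h]

lemma card_fiber_eq_and_card_eq [Module (ZMod p) A] {M : AddSubgroup A} (hM : Nat.card M ≠ 0)
    (hindex : M.index ≠ 0) (k : ℕ) :
    Nat.card {N : AddSubgroup (C × A) // Nat.card N = p ^ k * Nat.card M ∧ fiber N = M} =
      Nat.card {L : AddSubgroup C // Nat.card L = p ^ k} * M.index ^ k := by
  have card_iff (N : AddSubgroup (C × A)) : Nat.card N = p ^ k * Nat.card M ∧ fiber N = M ↔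
      Nat.card (base N) = p ^ k ∧ fiber N = M :=
    and_congr_left fun hN => by rw [← card_base_mul_card_fiber, hN, Nat.mul_left_inj hM]
  simp only [card_iff]
  refine card_base_fiber (s := fun B => Nat.card B = p ^ k) (pow_ne_zero k hindex) fun B hB => ?_
  let _ : Module (ZMod p) B :=
    AddCommGroup.zmodModule fun b => Subtype.ext (ZModModule.char_nsmul_eq_zero p (b : C))
  let _ : Module (ZMod p) (A ⧸ M) :=
    QuotientAddGroup.zmodModule fun a => by simp [ZModModule.char_nsmul_eq_zero p a]
  exact natCard_addMonoidHom_zmod hB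

lemma card_setOf_card_eq_congr (e : A ≃+ C) (n : ℕ) :
    Nat.card {L : AddSubgroup A // Nat.card L = n} =
      Nat.card {L : AddSubgroup C // Nat.card L = n} :=
  Nat.card_congr (e.mapAddSubgroup.toEquiv.subtypeEquiv fun L => by
    rw [Nat.card_congr (e.addSubgroupMap L).toEquiv]; rfl)

lemma card_addSubgroup_pi_zmod (n k : ℕ) :
    Nat.card {L : AddSubgroup (Fin n → ZMod p) // Nat.card L = p ^ k} = gaussBinom p n k := by
  have hp : p.Prime := Fact.out
  induction n generalizing k with
  | zero =>
    cases k with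
    | zero => simp
    | succ k => simp [(Nat.one_lt_pow k.succ_ne_zero hp.one_lt).ne]
  | succ n ih =>
    cases k with
    | zero => simp
    | succ k =>
    let e : (Fin (n + 1) → ZMod p) ≃+ (Fin n → ZMod p) × ZMod p :=
      (Fin.consLinearEquiv ℤ (fun _ : Fin (n + 1) => ZMod p)).symm.toAddEquiv.trans
        AddEquiv.prodComm
    have card_bot := card_fiber_eq_and_card_eq (p := p) (C := Fin n → ZMod p)
      (M := (⊥ : AddSubgroup (ZMod p))) (by simp) (by simp [hp.ne_zero]) (k + 1)
    have card_top := card_fiber_eq_and_card_eq (p := p) (C := Fin n → ZMod p)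
      (M := (⊤ : AddSubgroup (ZMod p))) (by simp [hp.ne_zero]) (by simp) k
    have split : Nat.card {N : AddSubgroup ((Fin n → ZMod p) × ZMod p) //
          Nat.card N = p ^ (k + 1)} =
        Nat.card {N : AddSubgroup ((Fin n → ZMod p) × ZMod p) //
          Nat.card N = p ^ (k + 1) ∧ fiber N = ⊤} +
        Nat.card {N : AddSubgroup ((Fin n → ZMod p) × ZMod p) //
          Nat.card N = p ^ (k + 1) ∧ fiber N = ⊥} := by
      classical
      rw [← Nat.card_sum]
      refine Nat.card_congr ((Equiv.subtypeEquivRight fun N => ?_).trans (subtypeOrEquiv _ _ ?_))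
      · rw [← and_or_left, and_iff_left (eq_bot_or_eq_top (fiber N)).symm]
      · rw [Pi.disjoint_iff]
        intro N
        rw [Prop.disjoint_iff]
        rintro ⟨⟨-, htop⟩, -, hbot⟩
        exact bot_ne_top (hbot.symm.trans htop)
    rw [AddSubgroup.card_top, Nat.card_zmod, ← pow_succ, ih, AddSubgroup.index_top, one_pow,
      mul_one] at card_top
    rw [AddSubgroup.card_bot, mul_one, ih, AddSubgroup.index_bot, Nat.card_zmod,
      mul_comm] at card_bot
    rw [card_setOf_card_eq_congr e, split, card_top, card_bot, gaussBinom_succ_succ]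

lemma exists_addEquiv_pi_prod [Finite C] (E : AddSubgroup C) {j : ℕ} (hE : E.index = p ^ j) :
    ∃ ε : (Fin j → ZMod p) × E ≃+ C, ∀ a, ε (0, a) = a := by
  let F : Submodule (ZMod p) C := AddSubgroup.toZModSubmodule p E
  obtain ⟨F', hF⟩ := F.exists_isCompl
  have card_compl : Nat.card F' = p ^ j :=
    (Nat.card_congr (F.quotientEquivOfIsCompl F' hF).toEquiv).symm.trans hE
  let e : F' ≃ₗ[ZMod p] (Fin j → ZMod p) := LinearEquiv.ofFinrankEq _ _ (by
    rw [finrank_zmod_eq card_compl, Module.finrank_fin_fun])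
  refine ⟨(e.symm.toAddEquiv.prodCongr (.refl F)).trans
    (F'.prodEquivOfIsCompl F hF.symm).toAddEquiv, fun a => ?_⟩
  change (e.symm 0 : C) + a = a
  rw [map_zero, ZeroMemClass.coe_zero, zero_add]

lemma card_disjoint_and_card_eq [Finite C] (E : AddSubgroup C) {j : ℕ} (hE : E.index = p ^ j)
    (k : ℕ) : Nat.card {W : AddSubgroup C // Disjoint W E ∧ Nat.card W = p ^ k} =
      Nat.card E ^ k * gaussBinom p j k := by
  obtain ⟨ε, hε⟩ := exists_addEquiv_pi_prod E hE
  have fiber_eq_bot_iff (N : AddSubgroup ((Fin j → ZMod p) × E)) :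
      fiber N = ⊥ ↔ Disjoint (ε.mapAddSubgroup N) E := by
    rw [AddSubgroup.disjoint_def, eq_bot_iff]
    constructor
    · rintro h _ ⟨n, hn, rfl⟩ hnE
      have n_eq : (0, ⟨ε n, hnE⟩) = n := ε.injective (hε _)
      rw [SetLike.mem_coe, ← n_eq] at hn
      exact congrArg Subtype.val (h hn)
    · intro h a ha
      exact Subtype.ext (h ⟨(0, a), ha, hε a⟩ a.2)
  let _ : Module (ZMod p) E :=
    AddCommGroup.zmodModule fun b => Subtype.ext (ZModModule.char_nsmul_eq_zero p (b : C))
  have card_bot := card_fiber_eq_and_card_eq (p := p) (C := Fin j → ZMod p)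
    (M := (⊥ : AddSubgroup E)) (by simp) (by simp [AddSubgroup.index_bot, Nat.card_pos.ne']) k
  rw [AddSubgroup.card_bot, mul_one, card_addSubgroup_pi_zmod, AddSubgroup.index_bot,
    mul_comm] at card_bot
  rw [← card_bot]
  refine (Nat.card_congr (ε.mapAddSubgroup.toEquiv.subtypeEquiv fun N => ?_)).symm
  rw [and_comm, fiber_eq_bot_iff, Nat.card_congr (ε.addSubgroupMap N).toEquiv]
  rfl

end Elementary

/-! ### Subgroups with prescribed preimage under multiplication by `p` -/

/-- Multiplication by `p` on an additive commutative group. -/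
abbrev mulBy (A : Type*) [AddCommGroup A] (p : ℕ) : A →+ A := nsmulAddMonoidHom p

section Lifting

variable {A : Type*} [AddCommGroup A] {p : ℕ}

lemma index_eq_mul_index_comap_mulBy (p : ℕ) (M : AddSubgroup A) :
    M.index = (M ⊔ (mulBy A p).range).index * (M.comap (mulBy A p)).index := by
  rw [AddSubgroup.index_comap, ← AddSubgroup.relIndex_mul_index
    (le_sup_left : M ≤ M ⊔ (mulBy A p).range), AddSubgroup.relIndex_sup_left, mul_comm]

lemma disjoint_range_mulBy_iff {U : AddSubgroup A} :
    Disjoint U (mulBy A p).range ↔ U.comap (mulBy A p) = (mulBy A p).ker := by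
  rw [AddSubgroup.disjoint_def]
  constructor
  · intro h
    refine le_antisymm (fun y hy => h hy ⟨y, rfl⟩) fun y hy => ?_
    rw [AddSubgroup.mem_comap, AddMonoidHom.mem_ker.1 hy]
    exact U.zero_mem
  · rintro h _ hu ⟨y, rfl⟩
    exact (h ▸ hu : y ∈ (mulBy A p).ker)

lemma disjoint_map_subtype_iff {K : AddSubgroup A} {W : AddSubgroup K} {H : AddSubgroup A} :
    Disjoint (W.map K.subtype) H ↔ Disjoint W (H.addSubgroupOf K) := by
  rw [AddSubgroup.disjoint_def, AddSubgroup.disjoint_def]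
  constructor
  · exact fun h w hw hwH => Subtype.ext (h ⟨w, hw, rfl⟩ hwH)
  · rintro h _ ⟨w, hw, rfl⟩ hwH
    exact congrArg K.subtype (h hw hwH)

lemma card_disjoint_range_mulBy [Finite A] [Fact p.Prime] {a k : ℕ}
    (ha : (mulBy A p).range.index = p ^ a)
    (hk : ((mulBy A p).ker ⊔ (mulBy A p).range).index = p ^ k) (l : ℕ) :
    Nat.card {U : AddSubgroup A // Disjoint U (mulBy A p).range ∧ Nat.card U = p ^ l} =
      p ^ (k * l) * gaussBinom p (a - k) l := by
  have hp : p.Prime := Fact.out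
  have card_ker : Nat.card (mulBy A p).ker = p ^ a := by rw [← AddSubgroup.index_range, ha]
  let E : AddSubgroup (mulBy A p).ker := (mulBy A p).range.addSubgroupOf (mulBy A p).ker
  have index_mul : E.index * p ^ k = p ^ a := by
    rw [← hk, ← ha, ← AddSubgroup.relIndex_mul_index
      (le_sup_right : (mulBy A p).range ≤ (mulBy A p).ker ⊔ (mulBy A p).range),
      AddSubgroup.relIndex_sup_right]
    rfl
  have hka : k ≤ a := (Nat.pow_dvd_pow_iff_le_right hp.one_lt).1 (Dvd.intro_left _ index_mul)
  have index_E : E.index = p ^ (a - k) := by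
    rwa [← Nat.pow_sub_mul_pow p hka, Nat.mul_left_inj (pow_ne_zero k hp.ne_zero)] at index_mul
  have card_E : Nat.card E = p ^ k := by
    have card_mul := E.card_mul_index
    rwa [card_ker, index_E, ← Nat.pow_sub_mul_pow p hka, mul_comm,
      Nat.mul_right_inj (pow_ne_zero _ hp.ne_zero)] at card_mul
  let _ : Module (ZMod p) (mulBy A p).ker := AddCommGroup.zmodModule fun x => Subtype.ext x.2
  rw [pow_mul, ← card_E, ← card_disjoint_and_card_eq E index_E]
  refine (Nat.card_congr (((AddSubgroup.MapSubtype.orderIso _).toEquiv.subtypeEquiv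
    (q := fun U => Disjoint U.1 (mulBy A p).range ∧ Nat.card U.1 = p ^ l) fun W => ?_).trans
      (Equiv.subtypeSubtypeEquivSubtype (p := (· ≤ (mulBy A p).ker))
        (q := fun U => Disjoint U (mulBy A p).range ∧ Nat.card U = p ^ l) fun hU => ?_))).symm
  · rw [← disjoint_map_subtype_iff, ← AddSubgroup.card_map_of_injective
      (K := W) (mulBy A p).ker.subtype_injective]
    rfl
  · rw [← disjoint_range_mulBy_iff.1 hU.1]
    exact fun u hu => AddSubgroup.nsmul_mem _ hu p

lemma index_sup_eq_iff_card_eq [Finite A] {U H : AddSubgroup A} (hUH : Disjoint U H) {a m : ℕ}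
    (hp : p ≠ 0) (hH : H.index = p ^ a) (hma : m ≤ a) :
    (U ⊔ H).index = p ^ m ↔ Nat.card U = p ^ (a - m) := by
  have card_mul : Nat.card U * (U ⊔ H).index = p ^ a := by
    rw [← hH, ← AddSubgroup.relIndex_mul_index (le_sup_right : H ≤ U ⊔ H),
      AddSubgroup.relIndex_sup_right, ← AddSubgroup.inf_relIndex_right, hUH.symm.eq_bot,
      AddSubgroup.relIndex_bot_left]
  rw [← Nat.pow_sub_mul_pow p hma] at card_mul
  constructor
  · intro h
    rwa [h, Nat.mul_left_inj (pow_ne_zero m hp)] at card_mul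
  · intro h
    rwa [h, Nat.mul_right_inj (pow_ne_zero _ hp)] at card_mul

section Quotient

variable (N : AddSubgroup A)

lemma comap_mk'_comap_mulBy (U : AddSubgroup (A ⧸ N)) :
    (U.comap (QuotientAddGroup.mk' N)).comap (mulBy A p) =
      (U.comap (mulBy (A ⧸ N) p)).comap (QuotientAddGroup.mk' N) := rfl

lemma comap_mk'_ker_mulBy :
    (mulBy (A ⧸ N) p).ker.comap (QuotientAddGroup.mk' N) = N.comap (mulBy A p) := by
  rw [← AddMonoidHom.comap_bot, ← comap_mk'_comap_mulBy, AddMonoidHom.comap_bot,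
    QuotientAddGroup.ker_mk']

lemma comap_mk'_range_mulBy :
    (mulBy (A ⧸ N) p).range.comap (QuotientAddGroup.mk' N) = N ⊔ (mulBy A p).range := by
  have range_eq : (mulBy (A ⧸ N) p).range = (mulBy A p).range.map (QuotientAddGroup.mk' N) := by
    rw [← AddMonoidHom.range_comp]
    exact AddSubgroup.ext fun _ => (QuotientAddGroup.mk'_surjective N).exists
  rw [range_eq, AddSubgroup.comap_map_eq, QuotientAddGroup.ker_mk', sup_comm]

lemma index_comap_mk'_sup_range_mulBy (U : AddSubgroup (A ⧸ N)) :
    (U.comap (QuotientAddGroup.mk' N) ⊔ (mulBy A p).range).index =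
      (U ⊔ (mulBy (A ⧸ N) p).range).index := by
  have surj := QuotientAddGroup.mk'_surjective N
  rw [← AddSubgroup.index_comap_of_surjective _ surj, ← AddSubgroup.comap_sup_eq _ _ _ surj,
    comap_mk'_range_mulBy, ← sup_assoc, sup_eq_left.2 (QuotientAddGroup.le_comap_mk' N U)]

lemma card_addSubgroup_comap_eq_comap [Finite (A ⧸ N)] [Fact p.Prime] {a m k : ℕ}
    (ha : (N ⊔ (mulBy A p).range).index = p ^ a)
    (hk : (N.comap (mulBy A p) ⊔ (mulBy A p).range).index = p ^ k) (hma : m ≤ a) :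
    Nat.card {M : AddSubgroup A // N ≤ M ∧ M.comap (mulBy A p) = N.comap (mulBy A p) ∧
      (M ⊔ (mulBy A p).range).index = p ^ m} = liftWeight p a m k := by
  have index_range : (mulBy (A ⧸ N) p).range.index = p ^ a := by
    rw [← ha, ← comap_mk'_range_mulBy,
      AddSubgroup.index_comap_of_surjective _ (QuotientAddGroup.mk'_surjective N)]
  have index_ker_sup_range : ((mulBy (A ⧸ N) p).ker ⊔ (mulBy (A ⧸ N) p).range).index = p ^ k := by
    rw [← hk, ← comap_mk'_ker_mulBy, index_comap_mk'_sup_range_mulBy]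
  rw [liftWeight, ← card_disjoint_range_mulBy index_range index_ker_sup_range]
  refine (Nat.card_congr (((QuotientAddGroup.comapMk'OrderIso N).toEquiv.subtypeEquiv
    (q := fun M => M.1.comap (mulBy A p) = N.comap (mulBy A p) ∧
      (M.1 ⊔ (mulBy A p).range).index = p ^ m) fun U => ?_).trans
    (Equiv.subtypeSubtypeEquivSubtypeInter (N ≤ ·) fun M => M.comap (mulBy A p) =
      N.comap (mulBy A p) ∧ (M ⊔ (mulBy A p).range).index = p ^ m))).symm
  change _ ↔ (U.comap (QuotientAddGroup.mk' N)).comap (mulBy A p) = _ ∧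
    (U.comap (QuotientAddGroup.mk' N) ⊔ (mulBy A p).range).index = _
  rw [comap_mk'_comap_mulBy, ← comap_mk'_ker_mulBy N, index_comap_mk'_sup_range_mulBy,
    (AddSubgroup.comap_injective (QuotientAddGroup.mk'_surjective N)).eq_iff,
    ← disjoint_range_mulBy_iff]
  exact and_congr_right fun h =>
    (index_sup_eq_iff_card_eq h (NeZero.ne p) index_range hma).symm

end Quotient

lemma card_addSubgroup_comap_eq [Fact p.Prime] {P M' : AddSubgroup A} (hP : P.index ≠ 0)
    (hPM : P.comap (mulBy A p) ≤ M') {a m k : ℕ} (ha : (P ⊔ (mulBy A p).range).index = p ^ a)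
    (hk : (M' ⊔ (mulBy A p).range).index = p ^ k) (hma : m ≤ a) :
    Nat.card {M : AddSubgroup A // P ≤ M ∧ M.comap (mulBy A p) = M' ∧
      (M ⊔ (mulBy A p).range).index = p ^ m} = liftWeight p a m k := by
  let N : AddSubgroup A := M'.map (mulBy A p) ⊔ P
  have : Finite (A ⧸ N) := Nat.finite_of_card_ne_zero fun h =>
    hP (Nat.eq_zero_of_zero_dvd (h ▸ AddSubgroup.index_dvd_of_le (le_sup_right : P ≤ N)))
  have comap_N : N.comap (mulBy A p) = M' := by
    refine le_antisymm (fun x hx => ?_) fun x hx => AddSubgroup.mem_sup_left ⟨x, hx, rfl⟩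
    obtain ⟨_, ⟨y, hy, rfl⟩, s, hs, hys⟩ := AddSubgroup.mem_sup.1 hx
    have sub_mem : x - y ∈ M' := hPM <| by
      rwa [AddSubgroup.mem_comap, map_sub, ← hys, add_sub_cancel_left]
    simpa using M'.add_mem sub_mem hy
  have N_sup : N ⊔ (mulBy A p).range = P ⊔ (mulBy A p).range := by
    rw [sup_assoc, sup_eq_right.2 (le_sup_of_le_right (AddSubgroup.map_le_range _ _))]
  have le_iff (M : AddSubgroup A) (hM : M.comap (mulBy A p) = M') : P ≤ M ↔ N ≤ M := by
    rw [sup_le_iff, AddSubgroup.map_le_iff_le_comap, hM]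
    exact (and_iff_right le_rfl).symm
  rw [← card_addSubgroup_comap_eq_comap N (by rw [N_sup, ha]) (by rw [comap_N, hk]) hma]
  refine Nat.card_congr (Equiv.subtypeEquivRight fun M => ?_)
  rw [comap_N, and_congr_left_iff]
  exact fun h => le_iff M h.1

end Lifting

/-! ### Ideals dividing powers of an unramified prime -/

lemma exists_eq_prod_of_dvd_prod {ι M : Type*} [CommMonoid M] [Subsingleton Mˣ]
    [DecompositionMonoid M] {s : Finset ι} {g : ι → M} {a : M} (h : a ∣ ∏ i ∈ s, g i) :
    ∃ b : ι → M, (∀ i ∈ s, b i ∣ g i) ∧ a = ∏ i ∈ s, b i := by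
  classical
  induction s using Finset.induction_on generalizing a with
  | empty => exact ⟨1, by simp, isUnit_iff_eq_one.1 (isUnit_of_dvd_one (prod_empty (f := g) ▸ h))⟩
  | insert i s hi ih =>
    rw [prod_insert hi] at h
    obtain ⟨b, c, hb, hc, rfl⟩ := exists_dvd_and_dvd_of_dvd_mul h
    obtain ⟨b', hb', rfl⟩ := ih hc
    have update_eq {j : ι} (hj : j ∈ s) : Function.update b' i b j = b' j :=
      Function.update_of_ne (ne_of_mem_of_not_mem hj hi) _ _
    refine ⟨Function.update b' i b, forall_mem_insert .. |>.2 ⟨?_, fun j hj => ?_⟩, ?_⟩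
    · rwa [Function.update_self]
    · rw [update_eq hj]
      exact hb' j hj
    · rw [prod_insert hi, Function.update_self, prod_congr rfl fun j => update_eq]

/-- The ideals `𝔓 i` are distinct primes with residue fields of cardinality `p ^ f i`, and their
product is `(p)`. -/
structure IsPrimeDecomposition {R ι : Type*} [CommRing R] [Fintype ι] (p : ℕ) (f : ι → ℕ)
    (𝔓 : ι → Ideal R) : Prop where
  injective : Function.Injective 𝔓
  isPrime : ∀ i, (𝔓 i).IsPrime
  card_quotient : ∀ i, Nat.card (R ⧸ 𝔓 i) = p ^ f i
  span_eq : Ideal.span {(p : R)} = ∏ i, 𝔓 i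

/-- The ideal `∏ i, 𝔓 i ^ n i`. -/
def idealPow {R ι : Type*} [CommRing R] [Fintype ι] (𝔓 : ι → Ideal R) (n : ι → ℕ) : Ideal R :=
  ∏ i, 𝔓 i ^ n i

/-- The set of indices at which `n` does not vanish. -/
def supp {ι : Type*} [Fintype ι] (n : ι → ℕ) : Finset ι := {i | n i ≠ 0}

lemma mem_supp {ι : Type*} [Fintype ι] {n : ι → ℕ} {i : ι} : i ∈ supp n ↔ n i ≠ 0 := by
  simp [supp]

lemma range_mulBy {R : Type*} [CommRing R] (p : ℕ) :
    (mulBy R p).range = (Ideal.span {(p : R)}).toAddSubgroup := by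
  ext x
  refine Iff.trans ?_ Ideal.mem_span_singleton'.symm
  simp [mul_comm]

namespace IsPrimeDecomposition

variable {R ι : Type*} [CommRing R] [Fintype ι] {p : ℕ} {f : ι → ℕ} {𝔓 : ι → Ideal R}

lemma span_pow_eq (D : IsPrimeDecomposition p f 𝔓) (k : ℕ) :
    Ideal.span {(p : R) ^ k} = idealPow 𝔓 fun _ => k := by
  rw [← Ideal.span_singleton_pow, D.span_eq, idealPow, prod_pow]

lemma span_eq_idealPow_one (D : IsPrimeDecomposition p f 𝔓) :
    Ideal.span {(p : R)} = idealPow 𝔓 1 := by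
  simp [D.span_eq, idealPow]

variable [CharZero R]

lemma index_idealPow [IsDedekindDomain R] [Module.Finite ℤ R] (D : IsPrimeDecomposition p f 𝔓)
    (n : ι → ℕ) :
    (idealPow 𝔓 n).toAddSubgroup.index = p ^ (n ⬝ᵥ f) := by
  change Ideal.absNorm (idealPow 𝔓 n) = _
  have absNorm_eq (i : ι) : Ideal.absNorm (𝔓 i) = p ^ f i := D.card_quotient i
  simp only [idealPow, map_prod, map_pow, absNorm_eq, ← pow_mul', prod_pow_eq_pow_sum, dotProduct]

variable [NeZero p]

lemma ne_bot [IsDomain R] (D : IsPrimeDecomposition p f 𝔓) (i : ι) : 𝔓 i ≠ ⊥ := fun h =>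
  NeZero.ne (p : R) (Ideal.span_singleton_eq_bot.1
    (D.span_eq.trans (prod_eq_zero (mem_univ i) h)))

variable [IsDedekindDomain R]

lemma prime (D : IsPrimeDecomposition p f 𝔓) (i : ι) : Prime (𝔓 i) :=
  (Ideal.prime_iff_isPrime (D.ne_bot i)).2 (D.isPrime i)

lemma isCoprime (D : IsPrimeDecomposition p f 𝔓) {i j : ι} (hij : i ≠ j) :
    IsCoprime (𝔓 i) (𝔓 j) := by
  have := (D.isPrime i).isMaximal (D.ne_bot i)
  have := (D.isPrime j).isMaximal (D.ne_bot j)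
  exact Ideal.isCoprime_of_isMaximal (D.injective.ne hij)

lemma emultiplicity_idealPow (D : IsPrimeDecomposition p f 𝔓) (n : ι → ℕ) (i : ι) :
    emultiplicity (𝔓 i) (idealPow 𝔓 n) = n i := by
  have emultiplicity_ne (j : ι) (hj : j ≠ i) : emultiplicity (𝔓 i) (𝔓 j) = 0 :=
    emultiplicity_eq_zero.2 fun h => (D.prime i).not_isUnit ((D.isCoprime hj.symm).isUnit_of_dvd h)
  rw [idealPow, Finset.emultiplicity_prod (D.prime i), sum_eq_single i]
  · rw [emultiplicity_pow (D.prime i), (FiniteMultiplicity.of_prime_left (D.prime i)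
      (D.ne_bot i)).emultiplicity_self, mul_one]
  · intro j _ hj
    rw [emultiplicity_pow (D.prime i), emultiplicity_ne j hj, mul_zero]
  · simp

lemma idealPow_dvd_iff (D : IsPrimeDecomposition p f 𝔓) {n : ι → ℕ} {I : Ideal R} :
    idealPow 𝔓 n ∣ I ↔ ∀ i, (n i : ℕ∞) ≤ emultiplicity (𝔓 i) I := by
  simp only [← pow_dvd_iff_le_emultiplicity]
  exact ⟨fun h i => (dvd_prod_of_mem (fun j => 𝔓 j ^ n j) (mem_univ i)).trans h,
    fun h => prod_dvd_of_coprime (fun i _ j _ hij => (D.isCoprime hij).pow) fun i _ => h i⟩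

lemma idealPow_le_iff (D : IsPrimeDecomposition p f 𝔓) {n n' : ι → ℕ} :
    idealPow 𝔓 n ≤ idealPow 𝔓 n' ↔ n' ≤ n := by
  rw [← Ideal.dvd_iff_le, D.idealPow_dvd_iff]
  simp only [D.emultiplicity_idealPow, Nat.cast_le]
  rfl

lemma exists_eq_idealPow (D : IsPrimeDecomposition p f 𝔓) {n : ι → ℕ} {I : Ideal R}
    (h : idealPow 𝔓 n ≤ I) :
    ∃ ν, I = idealPow 𝔓 ν := by
  obtain ⟨J, hJ, rfl⟩ := exists_eq_prod_of_dvd_prod (Ideal.dvd_iff_le.2 h)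
  have exists_pow (i : ι) : ∃ k, J i = 𝔓 i ^ k := by
    obtain ⟨k, -, hk⟩ := (dvd_prime_pow (D.prime i) _).1 (hJ i (mem_univ i))
    exact ⟨k, associated_iff_eq.1 hk⟩
  choose ν hν using exists_pow
  exact ⟨ν, prod_congr rfl fun i _ => hν i⟩

lemma idealPow_sup_span (D : IsPrimeDecomposition p f 𝔓) (n : ι → ℕ) :
    idealPow 𝔓 n ⊔ Ideal.span {(p : R)} = idealPow 𝔓 (n ⊓ 1) := by
  rw [D.span_eq_idealPow_one]
  refine le_antisymm
    (sup_le (D.idealPow_le_iff.2 inf_le_left) (D.idealPow_le_iff.2 inf_le_right)) ?_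
  obtain ⟨ν, hν⟩ := D.exists_eq_idealPow (le_sup_left : idealPow 𝔓 n ≤ _ ⊔ idealPow 𝔓 1)
  rw [hν, D.idealPow_le_iff]
  exact le_inf (D.idealPow_le_iff.1 (hν ▸ le_sup_left)) (D.idealPow_le_iff.1 (hν ▸ le_sup_right))

lemma comap_mulBy (D : IsPrimeDecomposition p f 𝔓) (n : ι → ℕ) :
    (idealPow 𝔓 n).toAddSubgroup.comap (mulBy R p) = (idealPow 𝔓 (n - 1)).toAddSubgroup := by
  ext x
  change p • x ∈ idealPow 𝔓 n ↔ x ∈ idealPow 𝔓 (n - 1)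
  rw [nsmul_eq_mul, ← Ideal.span_singleton_le_iff_mem, ← Ideal.span_singleton_le_iff_mem,
    ← Ideal.dvd_iff_le, ← Ideal.dvd_iff_le, ← Ideal.span_singleton_mul_span_singleton,
    D.idealPow_dvd_iff, D.idealPow_dvd_iff]
  refine forall_congr' fun i => ?_
  rw [emultiplicity_mul (D.prime i), D.span_eq_idealPow_one, D.emultiplicity_idealPow]
  simp [add_comm]

lemma index_idealPow_sup_range_mulBy [Module.Finite ℤ R] (D : IsPrimeDecomposition p f 𝔓)
    (n : ι → ℕ) :
    ((idealPow 𝔓 n).toAddSubgroup ⊔ (mulBy R p).range).index = p ^ ∑ i ∈ supp n, f i := by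
  have inf_one_dotProduct : (n ⊓ 1) ⬝ᵥ f = ∑ i ∈ supp n, f i := by
    rw [dotProduct, supp, sum_filter]
    refine sum_congr rfl fun i _ => ?_
    rcases Nat.eq_zero_or_pos (n i) with h | h
    · simp [h]
    · simp [h.ne', min_eq_right (Nat.one_le_of_lt h)]
  rw [range_mulBy, ← Submodule.sup_toAddSubgroup, D.idealPow_sup_span, D.index_idealPow,
    inf_one_dotProduct]

lemma exists_core_eq_idealPow (D : IsPrimeDecomposition p f 𝔓) (M : AddSubgroup R) {k : ℕ}
    (hM : M.index = p ^ k) :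
    ∃ ν, core M = idealPow 𝔓 ν := by
  refine D.exists_eq_idealPow (n := fun _ => k) ?_
  rw [← D.span_pow_eq, Ideal.span_singleton_le_iff_mem]
  intro t
  rw [← Nat.cast_pow, ← hM, mul_comm, ← nsmul_eq_mul]
  exact M.nsmul_index_mem t

end IsPrimeDecomposition

/-! ### Multiple geometric series -/

lemma X_pow_dvd_of_constantCoeff_eq_zero {g : PowerSeries ℚ} (hg : g.constantCoeff = 0) (n : ℕ) :
    PowerSeries.X ^ n ∣ g ^ n :=
  pow_dvd_pow_of_dvd (PowerSeries.X_dvd_iff.2 hg) n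

lemma isCoeffFinite_prod_pow {ι : Type*} [Fintype ι] {g : ι → PowerSeries ℚ}
    (hg : ∀ i, (g i).constantCoeff = 0) : IsCoeffFinite fun n : ι → ℕ => ∏ i, g i ^ n i := by
  classical
  intro N
  refine (Set.finite_Iic fun _ : ι => N).subset fun n hn i => le_of_not_gt fun hi => hn ?_
  exact PowerSeries.X_pow_dvd_iff.1 ((X_pow_dvd_of_constantCoeff_eq_zero (hg i) (n i)).trans
    (dvd_prod_of_mem (fun j => g j ^ n j) (mem_univ i))) N hi

lemma tsum_prod_pow_option {ι : Type*} [Fintype ι] {g : Option ι → PowerSeries ℚ}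
    (hg : ∀ i, (g i).constantCoeff = 0) : ∑' n : Option ι → ℕ, ∏ i, g i ^ n i =
      (∑' k, g none ^ k) * ∑' n : ι → ℕ, ∏ i, g (some i) ^ n i := by
  have summable_none := PowerSeries.WithPiTopology.summable_pow_of_constantCoeff_eq_zero (hg none)
  refine HasSum.unique ?_ ((isCoeffFinite_prod_pow fun i => hg (some i)).summable.hasSum.mul_left _)
  refine (isCoeffFinite_prod_pow hg).hasSum_fiberwise (fun n i => n (some i)) fun n => ?_
  let e : ℕ ≃ {n' : Option ι → ℕ // (fun i => n' (some i)) = n} :=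
    { toFun := fun k => ⟨fun o => o.elim k n, rfl⟩
      invFun := fun n' => n'.1 none
      left_inv := fun _ => rfl
      right_inv := by
        rintro ⟨n', rfl⟩
        exact Subtype.ext (funext fun o => by cases o <;> rfl) }
  rw [← e.hasSum_iff]
  exact (summable_none.hasSum.mul_right _).congr_fun fun k =>
    Fintype.prod_option fun i => g i ^ (e k).1 i

lemma prod_one_sub_mul_tsum_prod_pow {ι : Type*} [Fintype ι] {g : ι → PowerSeries ℚ}
    (hg : ∀ i, (g i).constantCoeff = 0) :
    (∏ i, (1 - g i)) * ∑' n : ι → ℕ, ∏ i, g i ^ n i = 1 := by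
  refine Fintype.induction_empty_option (P := fun ι _ => ∀ g : ι → PowerSeries ℚ,
    (∀ i, (g i).constantCoeff = 0) → (∏ i, (1 - g i)) * ∑' n : ι → ℕ, ∏ i, g i ^ n i = 1)
    (fun α β _ e ih g hg => ?_) (by simp) (fun α _ ih g hg => ?_) ι g hg
  · let := Fintype.ofEquiv β e.symm
    rw [← e.prod_comp, ← (e.arrowCongr (Equiv.refl ℕ)).tsum_eq]
    simpa [← e.prod_comp] using ih (g ∘ e) fun i => hg (e i)
  · rw [tsum_prod_pow_option hg, Fintype.prod_option, mul_mul_mul_comm, mul_comm (1 - g none),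
      PowerSeries.WithPiTopology.tsum_pow_mul_one_sub_of_constantCoeff_eq_zero (hg none),
      ih _ fun i => hg (some i), one_mul]

/-! ### Pairs of an exponent vector and an additive subgroup -/

section FiberSum

variable {α β : Type*} {w : α → PowerSeries ℚ}

lemma IsCoeffFinite.hasSum_ite_eq [DecidableEq β] (hw : IsCoeffFinite w) (t : α → β) (b : β) :
    HasSum (fun a => if t a = b then w a else 0) (∑' a : {a // t a = b}, w a) := by
  have hasSum_fiber := (hw.comp_injective
    (Subtype.val_injective (p := fun a => t a = b))).summable.hasSum
  refine ((hasSum_subtype_iff_indicator (s := {a | t a = b})).1 hasSum_fiber).congr_fun fun a => ?_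
  by_cases h : t a = b <;> simp [h]

lemma IsCoeffFinite.hasSum_ite_mem [DecidableEq β] (hw : IsCoeffFinite w) (t : α → β)
    (T : Finset β) (c : β → PowerSeries ℚ) :
    HasSum (fun a => if t a ∈ T then c (t a) * w a else 0)
      (∑ b ∈ T, c b * ∑' a : {a // t a = b}, w a) := by
  refine (hasSum_sum fun b _ => (hw.hasSum_ite_eq t b).mul_left (c b)).congr_fun fun a => ?_
  simp

end FiberSum

/-- The exponent `k` such that `M` has index `p ^ k`; only meaningful if the index is a power of
`p`. -/
noncomputable def logIndex {A : Type*} [AddGroup A] (p : ℕ) (M : AddSubgroup A) : ℕ :=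
  Nat.log p M.index

lemma logIndex_eq {A : Type*} [AddGroup A] {p k : ℕ} {M : AddSubgroup A} (hp : 1 < p)
    (hM : M.index = p ^ k) : logIndex p M = k := by
  rw [logIndex, hM, Nat.log_pow hp]

/-- A vector `n` of exponents together with an additive subgroup containing `∏ i, 𝔓 i ^ n i`. -/
@[ext]
structure SubgroupPair {R ι : Type*} [CommRing R] [Fintype ι] (𝔓 : ι → Ideal R) where
  exponent : ι → ℕ
  subgroup : AddSubgroup R
  le : (idealPow 𝔓 exponent).toAddSubgroup ≤ subgroup

namespace SubgroupPair

variable {R ι : Type*} [CommRing R] [Fintype ι] {𝔓 : ι → Ideal R} {f : ι → ℕ} {p : ℕ}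

/-- The contribution of the pair `a` to the zeta function. -/
noncomputable def weight (f : ι → ℕ) (p : ℕ) (a : SubgroupPair 𝔓) : PowerSeries ℚ :=
  PowerSeries.X ^ (2 * (a.exponent ⬝ᵥ f)) *
    (PowerSeries.C (p : ℚ) ^ (2 * Module.finrank ℤ R) * PowerSeries.X) ^ logIndex p a.subgroup

/-- The support of the exponent vector and the `p`-rank of the quotient by the subgroup. -/
noncomputable def type (p : ℕ) (a : SubgroupPair 𝔓) : Finset ι × ℕ :=
  (supp a.exponent, logIndex p (a.subgroup ⊔ (mulBy R p).range))

/-- The generating function of the pairs of type `(S, m)`. -/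
noncomputable def typeSum (𝔓 : ι → Ideal R) (f : ι → ℕ) (p : ℕ) (S : Finset ι) (m : ℕ) :
    PowerSeries ℚ :=
  ∑' a : {a : SubgroupPair 𝔓 // a.type p = (S, m)}, a.1.weight f p

/-- For fixed `M` the exponent vectors form a translate `ν + ℕ^ι` of the standard cone, so that the
sum of the weights is a multiple geometric series. -/
lemma prod_mul_tsum_weight (hp : 1 < p) (hf : ∀ i, 0 < f i) {M : AddSubgroup R} {k : ℕ} {ν : ι → ℕ}
    (hM : M.index = p ^ k) (hν : ∀ n, (idealPow 𝔓 n).toAddSubgroup ≤ M ↔ ν ≤ n) :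
    (∏ i, (1 - PowerSeries.X ^ (2 * f i))) *
        ∑' a : {a : SubgroupPair 𝔓 // a.subgroup = M}, weight f p a.1 =
      (PowerSeries.C (p : ℚ) ^ (2 * Module.finrank ℤ R) * PowerSeries.X) ^ k *
        PowerSeries.X ^ (2 * (ν ⬝ᵥ f)) := by
  let e : (ι → ℕ) ≃ {a : SubgroupPair 𝔓 // a.subgroup = M} :=
    { toFun := fun l => ⟨⟨ν + l, M, (hν _).2 (le_add_of_nonneg_right zero_le)⟩, rfl⟩
      invFun := fun a => a.1.exponent - ν
      left_inv := fun l => by simp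
      right_inv := by
        rintro ⟨⟨n, M, hle⟩, rfl⟩
        exact Subtype.ext (SubgroupPair.ext (add_tsub_cancel_of_le ((hν n).1 hle)) rfl) }
  have constantCoeff_eq_zero (i : ι) :
      (PowerSeries.X ^ (2 * f i) : PowerSeries ℚ).constantCoeff = 0 := by
    simp [(hf i).ne']
  have weight_e (l : ι → ℕ) : weight f p (e l).1 =
      (PowerSeries.C (p : ℚ) ^ (2 * Module.finrank ℤ R) * PowerSeries.X) ^ k *
        PowerSeries.X ^ (2 * (ν ⬝ᵥ f)) * ∏ i, (PowerSeries.X ^ (2 * f i)) ^ l i := by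
    have exponent_eq : 2 * ((ν + l) ⬝ᵥ f) = 2 * (ν ⬝ᵥ f) + ∑ i, 2 * f i * l i := by
      rw [add_dotProduct, mul_add, dotProduct_comm l]
      simp only [dotProduct, mul_sum, mul_assoc]
    change PowerSeries.X ^ (2 * ((ν + l) ⬝ᵥ f)) * _ ^ logIndex p M = _
    rw [logIndex_eq hp hM, exponent_eq, pow_add, ← prod_pow_eq_pow_sum]
    simp only [pow_mul]
    ring
  rw [← e.tsum_eq]
  simp only [weight_e]
  rw [(isCoeffFinite_prod_pow constantCoeff_eq_zero).summable.tsum_mul_left, mul_left_comm,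
    prod_one_sub_mul_tsum_prod_pow constantCoeff_eq_zero, mul_one]

end SubgroupPair

namespace IsPrimeDecomposition

variable {R ι : Type*} [CommRing R] [IsDedekindDomain R] [CharZero R] [Module.Finite ℤ R]
  [Fintype ι] {p : ℕ} [Fact p.Prime] {f : ι → ℕ} {𝔓 : ι → Ideal R}

lemma index_eq_pow_logIndex (D : IsPrimeDecomposition p f 𝔓) {n : ι → ℕ} {M : AddSubgroup R}
    (hM : (idealPow 𝔓 n).toAddSubgroup ≤ M) : M.index = p ^ logIndex p M := by
  have hp : p.Prime := Fact.out
  obtain ⟨k, -, hk⟩ := (Nat.dvd_prime_pow hp).1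
    (D.index_idealPow n ▸ AddSubgroup.index_dvd_of_le hM)
  rw [logIndex_eq hp.one_lt hk, hk]

lemma type_snd_le (D : IsPrimeDecomposition p f 𝔓) (a : SubgroupPair 𝔓) :
    (a.type p).2 ≤ ∑ i ∈ (a.type p).1, f i := by
  have hp : p.Prime := Fact.out
  have index_dvd := AddSubgroup.index_dvd_of_le (sup_le_sup_right a.le (mulBy R p).range)
  rw [D.index_idealPow_sup_range_mulBy,
    D.index_eq_pow_logIndex (a.le.trans le_sup_left)] at index_dvd
  exact (Nat.pow_dvd_pow_iff_le_right hp.one_lt).1 index_dvd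

lemma isCoeffFinite_weight (D : IsPrimeDecomposition p f 𝔓) (hf : ∀ i, 0 < f i) :
    IsCoeffFinite (SubgroupPair.weight f p : SubgroupPair 𝔓 → PowerSeries ℚ) := by
  classical
  intro N
  have finite_box : (Set.Iic (fun _ : ι => N) ×ˢ
      ⋃ k ∈ Set.Iic N, {M : AddSubgroup R | M.index = p ^ k}).Finite :=
    (Set.finite_Iic _).prod ((Set.finite_Iic N).biUnion fun k _ =>
      finite_setOf_index_eq (pow_ne_zero k (NeZero.ne p)))
  have injective : Function.Injective fun a : SubgroupPair 𝔓 => (a.exponent, a.subgroup) :=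
    fun a b h => SubgroupPair.ext (congrArg Prod.fst h) (congrArg Prod.snd h)
  refine (finite_box.preimage injective.injOn).subset fun a ha => ?_
  have degree_le : 2 * (a.exponent ⬝ᵥ f) + logIndex p a.subgroup ≤ N := by
    by_contra hN
    refine ha ?_
    rw [SubgroupPair.weight, mul_pow, ← pow_mul, ← map_pow, mul_left_comm, ← pow_add,
      PowerSeries.coeff_C_mul, PowerSeries.coeff_X_pow, if_neg (by lia), mul_zero]
  refine ⟨fun i => ?_, Set.mem_biUnion (x := logIndex p a.subgroup) ?_
    (D.index_eq_pow_logIndex a.le)⟩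
  · have exponent_le : a.exponent i * f i ≤ a.exponent ⬝ᵥ f :=
      single_le_sum (f := fun i => a.exponent i * f i) (fun _ _ => Nat.zero_le _) (mem_univ i)
    have := Nat.le_mul_of_pos_right (a.exponent i) (hf i)
    change a.exponent i ≤ N
    lia
  · change logIndex p a.subgroup ≤ N
    lia

lemma hasSum_weight (D : IsPrimeDecomposition p f 𝔓) (hf : ∀ i, 0 < f i) :
    HasSum (SubgroupPair.weight f p : SubgroupPair 𝔓 → PowerSeries ℚ)
      (totalSum (∑ i, f i) (SubgroupPair.typeSum 𝔓 f p)) := by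
  classical
  have hasSum_ite := (D.isCoeffFinite_weight hf).hasSum_ite_mem (SubgroupPair.type p)
    (univ ×ˢ range (∑ i, f i + 1)) fun _ => 1
  have type_mem (a : SubgroupPair 𝔓) : a.type p ∈ univ ×ˢ range (∑ i, f i + 1) := by
    simpa [Nat.lt_succ_iff] using
      (D.type_snd_le a).trans (sum_le_sum_of_subset (subset_univ _))
  simp only [type_mem, if_true, one_mul] at hasSum_ite
  rwa [sum_product_right] at hasSum_ite

lemma exists_index_coreSq_eq (D : IsPrimeDecomposition p f 𝔓) {M : AddSubgroup R} {k : ℕ}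
    (hM : M.index = p ^ k) :
    ∃ ν : ι → ℕ, (∀ n, (idealPow 𝔓 n).toAddSubgroup ≤ M ↔ ν ≤ n) ∧
      (coreSq M).index = p ^ (2 * (ν ⬝ᵥ f)) := by
  obtain ⟨ν, hν⟩ := D.exists_core_eq_idealPow M hM
  refine ⟨ν, fun n => by rw [← le_core, hν, D.idealPow_le_iff], ?_⟩
  rw [coreSq, AddSubgroup.index_prod, hν, D.index_idealPow, ← pow_add, two_mul]

lemma normalSubgroupCount_mul_prod (D : IsPrimeDecomposition p f 𝔓) (hf : ∀ i, 0 < f i) :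
    (PowerSeries.mk fun i => (normalSubgroupCount (Heisenberg R) (p ^ i) : ℚ)) *
        ∏ i ∈ range (2 * Module.finrank ℤ R), (1 - PowerSeries.C (p : ℚ) ^ i * PowerSeries.X) =
      (∏ i, (1 - PowerSeries.X ^ (2 * f i))) *
        totalSum (∑ i, f i) (SubgroupPair.typeSum 𝔓 f p) := by
  have hp : p.Prime := Fact.out
  have weights := D.isCoeffFinite_weight hf
  have hasSum_fibers := (weights.hasSum_fiberwise SubgroupPair.subgroup fun M =>
    (weights.comp_injective
      (Subtype.val_injective (p := fun a : SubgroupPair 𝔓 => a.subgroup = M))).summable.hasSum)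
  rw [(D.hasSum_weight hf).tsum_eq] at hasSum_fibers
  refine ((hasSum_normalSubgroupCount hp.ne_zero).mul_right _).unique
    ((hasSum_fibers.mul_left _).congr_fun fun M => ?_)
  by_cases hM : ∃ k, M.index = p ^ k
  · obtain ⟨k, hk⟩ := hM
    obtain ⟨ν, hν, index_coreSq⟩ := D.exists_index_coreSq_eq hk
    rw [subgroupSeries_coreSq_mul_prod hp hk index_coreSq]
    exact (SubgroupPair.prod_mul_tsum_weight hp.one_lt hf hk hν).symm
  · have : IsEmpty {a : SubgroupPair 𝔓 // a.subgroup = M} :=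
      ⟨fun a => hM ⟨_, a.2 ▸ D.index_eq_pow_logIndex a.1.le⟩⟩
    rw [subgroupSeries_fiber_eq_zero hp _ (not_exists.1 hM), zero_mul]
    simp

end IsPrimeDecomposition

/-! ### The recursion for the generating functions -/

section Exponents

variable {ι : Type*} [Fintype ι]

lemma dotProduct_eq_sum_supp_add (n f : ι → ℕ) :
    n ⬝ᵥ f = ∑ i ∈ supp n, f i + (n - 1) ⬝ᵥ f := by
  rw [dotProduct, dotProduct, supp, sum_filter, ← sum_add_distrib]
  refine sum_congr rfl fun i _ => ?_
  rcases Nat.eq_zero_or_pos (n i) with h | h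
  · simp [h]
  · rw [if_pos h.ne', Pi.sub_apply, Pi.one_apply, ← one_add_mul,
      add_tsub_cancel_of_le (show 1 ≤ n i from h)]

lemma supp_sub_one_subset (n : ι → ℕ) : supp (n - 1) ⊆ supp n := fun i hi =>
  mem_supp.2 fun h => mem_supp.1 hi (by simp [h])

lemma supp_eq_empty_iff {n : ι → ℕ} : supp n = ∅ ↔ n = 0 := by
  simp [Finset.ext_iff, mem_supp, funext_iff]

/-- The exponent vector `n` with support `S` and `n - 1 = n'`, provided that `supp n' ⊆ S`. -/
def raise [DecidableEq ι] (S : Finset ι) (n' : ι → ℕ) (i : ι) : ℕ := if i ∈ S then n' i + 1 else 0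

lemma supp_eq_and_sub_one_eq_iff [DecidableEq ι] {S : Finset ι} {n n' : ι → ℕ}
    (h : supp n' ⊆ S) : supp n = S ∧ n - 1 = n' ↔ n = raise S n' := by
  constructor
  · rintro ⟨rfl, rfl⟩
    ext i
    simp only [raise, mem_supp, Pi.sub_apply, Pi.one_apply]
    split_ifs <;> lia
  · rintro rfl
    refine ⟨by ext i; simp [mem_supp, raise], funext fun i => ?_⟩
    have eq_zero (hi : i ∉ S) : n' i = 0 := by
      by_contra hne
      exact hi (h (mem_supp.2 hne))
    by_cases hi : i ∈ S <;> simp [raise, hi, eq_zero]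

end Exponents

namespace SubgroupPair

variable {R ι : Type*} [CommRing R] [Fintype ι] {𝔓 : ι → Ideal R} {f : ι → ℕ} {p : ℕ}

lemma typeSum_empty (m : ℕ) : typeSum 𝔓 f p ∅ m = if m = 0 then 1 else 0 := by
  have eq_top {a : SubgroupPair 𝔓} (ha : supp a.exponent = ∅) : a = ⟨0, ⊤, le_top⟩ := by
    obtain ⟨n, M, hle⟩ := a
    obtain rfl : n = 0 := supp_eq_empty_iff.1 ha
    refine SubgroupPair.ext rfl (top_le_iff.1 ?_)
    have idealPow_zero : idealPow 𝔓 0 = ⊤ := by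
      simp only [idealPow, Pi.zero_apply, pow_zero, prod_const_one]
      exact Ideal.one_eq_top
    rwa [idealPow_zero] at hle
  have logIndex_top : logIndex p (⊤ : AddSubgroup R) = 0 := by simp [logIndex]
  have type_top : type p (⟨0, ⊤, le_top⟩ : SubgroupPair 𝔓) = (∅, 0) := by
    simp [type, logIndex_top, supp_eq_empty_iff]
  split_ifs with hm
  · subst hm
    let : Unique {a : SubgroupPair 𝔓 // a.type p = (∅, 0)} :=
      { default := ⟨_, type_top⟩
        uniq := fun a => Subtype.ext (eq_top (congrArg Prod.fst a.2)) }
    rw [typeSum, (hasSum_unique _).tsum_eq]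
    change weight f p (⟨0, ⊤, le_top⟩ : SubgroupPair 𝔓) = 1
    simp [weight, logIndex_top]
  · have : IsEmpty {a : SubgroupPair 𝔓 // a.type p = (∅, m)} := by
      refine ⟨fun a => hm ?_⟩
      have type_eq := a.2
      rw [eq_top (congrArg Prod.fst a.2), type_top] at type_eq
      exact (congrArg Prod.snd type_eq).symm
    rw [typeSum, tsum_empty]

end SubgroupPair

namespace IsPrimeDecomposition

variable {R ι : Type*} [CommRing R] [IsDedekindDomain R] [CharZero R] [Fintype ι] {p : ℕ}
  [Fact p.Prime] {f : ι → ℕ} {𝔓 : ι → Ideal R}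

/-- The reduction map `(n, M) ↦ (n - 1, p⁻¹ M)`. -/
def reduction (D : IsPrimeDecomposition p f 𝔓) (a : SubgroupPair 𝔓) : SubgroupPair 𝔓 where
  exponent := a.exponent - 1
  subgroup := a.subgroup.comap (mulBy R p)
  le := D.comap_mulBy a.exponent ▸ AddSubgroup.comap_mono a.le

variable [Module.Finite ℤ R]

lemma weight_eq_mul_weight_reduction (D : IsPrimeDecomposition p f 𝔓) (a : SubgroupPair 𝔓) :
    a.weight f p =
    PowerSeries.X ^ (2 * ∑ i ∈ (a.type p).1, f i) *
      (PowerSeries.C (p : ℚ) ^ (2 * Module.finrank ℤ R) * PowerSeries.X) ^ (a.type p).2 *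
      (D.reduction a).weight f p := by
  have logIndex_add : logIndex p a.subgroup = logIndex p (a.subgroup ⊔ (mulBy R p).range) +
      logIndex p (a.subgroup.comap (mulBy R p)) := by
    refine logIndex_eq (Fact.out : p.Prime).one_lt ?_
    have index_comap : (a.subgroup.comap (mulBy R p)).index = _ :=
      D.index_eq_pow_logIndex (D.reduction a).le
    rw [index_eq_mul_index_comap_mulBy p, pow_add,
      ← D.index_eq_pow_logIndex (a.le.trans le_sup_left), index_comap]
  simp only [SubgroupPair.weight, SubgroupPair.type, reduction]
  rw [dotProduct_eq_sum_supp_add, logIndex_add, mul_add, pow_add, pow_add]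
  ring

lemma type_eq_and_reduction_eq_iff [DecidableEq ι] (D : IsPrimeDecomposition p f 𝔓) {S : Finset ι}
    {m : ℕ} {a b : SubgroupPair 𝔓} (hb : supp b.exponent ⊆ S) :
    a.type p = (S, m) ∧ D.reduction a = b ↔
      a.exponent = raise S b.exponent ∧ a.subgroup.comap (mulBy R p) = b.subgroup ∧
        (a.subgroup ⊔ (mulBy R p).range).index = p ^ m := by
  have logIndex_iff : logIndex p (a.subgroup ⊔ (mulBy R p).range) = m ↔
      (a.subgroup ⊔ (mulBy R p).range).index = p ^ m := by
    rw [D.index_eq_pow_logIndex (a.le.trans le_sup_left)]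
    exact (Nat.pow_right_injective (Fact.out : p.Prime).two_le).eq_iff.symm
  rw [SubgroupPair.ext_iff, Prod.ext_iff, ← supp_eq_and_sub_one_eq_iff hb, ← logIndex_iff]
  simp only [SubgroupPair.type, reduction]
  tauto

lemma nonempty_fiber_equiv [DecidableEq ι] (D : IsPrimeDecomposition p f 𝔓) {S : Finset ι} {m : ℕ}
    {b : SubgroupPair 𝔓} (hb : supp b.exponent ⊆ S) :
    Nonempty ({a : {a : SubgroupPair 𝔓 // a.type p = (S, m)} // D.reduction a = b} ≃
      {M : AddSubgroup R // (idealPow 𝔓 (raise S b.exponent)).toAddSubgroup ≤ M ∧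
        M.comap (mulBy R p) = b.subgroup ∧ (M ⊔ (mulBy R p).range).index = p ^ m}) := by
  have iff (a : SubgroupPair 𝔓) := D.type_eq_and_reduction_eq_iff (m := m) (a := a) hb
  refine ⟨(Equiv.subtypeSubtypeEquivSubtypeInter _ fun a => D.reduction a = b).trans
    { toFun := fun a => ⟨a.1.subgroup, ((iff a).1 a.2).1 ▸ a.1.le, ((iff a).1 a.2).2⟩
      invFun := fun M => ⟨⟨_, M.1, M.2.1⟩, (iff _).2 ⟨rfl, M.2.2⟩⟩
      left_inv := fun a => Subtype.ext (SubgroupPair.ext ((iff a).1 a.2).1.symm rfl)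
      right_inv := fun _ => rfl }⟩

lemma finite_fiber (D : IsPrimeDecomposition p f 𝔓) {S : Finset ι} {m : ℕ} {b : SubgroupPair 𝔓}
    (hb : supp b.exponent ⊆ S) :
    Finite {a : {a : SubgroupPair 𝔓 // a.type p = (S, m)} // D.reduction a = b} := by
  classical
  obtain ⟨e⟩ := D.nonempty_fiber_equiv (m := m) hb
  refine e.finite_iff.2 (((finite_setOf_index_eq (A := R)
    (pow_ne_zero (m + logIndex p b.subgroup) (NeZero.ne p))).subset ?_).to_subtype)
  rintro M ⟨-, hM', hm⟩
  change M.index = _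
  rw [index_eq_mul_index_comap_mulBy p, hM', hm, pow_add, ← D.index_eq_pow_logIndex b.le]

lemma card_fiber (D : IsPrimeDecomposition p f 𝔓) {S : Finset ι} {m : ℕ} (hm : m ≤ ∑ i ∈ S, f i)
    {b : SubgroupPair 𝔓} (hb : supp b.exponent ⊆ S) :
    Nat.card {a : {a : SubgroupPair 𝔓 // a.type p = (S, m)} // D.reduction a = b} =
      liftWeight p (∑ i ∈ S, f i) m (b.type p).2 := by
  classical
  obtain ⟨supp_raise, raise_sub_one⟩ := (supp_eq_and_sub_one_eq_iff hb).2 rfl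
  obtain ⟨e⟩ := D.nonempty_fiber_equiv (m := m) hb
  rw [Nat.card_congr e]
  refine card_addSubgroup_comap_eq ?_ ?_ ?_ (D.index_eq_pow_logIndex (b.le.trans le_sup_left)) hm
  · rw [D.index_idealPow]
    exact pow_ne_zero _ (NeZero.ne p)
  · rw [D.comap_mulBy, raise_sub_one]
    exact b.le
  · rw [D.index_idealPow_sup_range_mulBy, supp_raise]

lemma hasSum_weight_fiber (D : IsPrimeDecomposition p f 𝔓) {S : Finset ι} {m : ℕ}
    (hm : m ≤ ∑ i ∈ S, f i) {b : SubgroupPair 𝔓} (hb : supp b.exponent ⊆ S) :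
    HasSum (fun a : {a : {a : SubgroupPair 𝔓 // a.type p = (S, m)} // D.reduction a = b} =>
        a.1.1.weight f p)
      (liftWeight (PowerSeries.C (p : ℚ)) (∑ i ∈ S, f i) m (b.type p).2 *
        (PowerSeries.X ^ (2 * ∑ i ∈ S, f i) *
          (PowerSeries.C (p : ℚ) ^ (2 * Module.finrank ℤ R) * PowerSeries.X) ^ m *
          b.weight f p)) := by
  have := D.finite_fiber (m := m) hb
  have := Fintype.ofFinite {a : {a : SubgroupPair 𝔓 // a.type p = (S, m)} // D.reduction a = b}
  have weight_eq (a : {a : {a : SubgroupPair 𝔓 // a.type p = (S, m)} // D.reduction a = b}) :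
      a.1.1.weight f p = PowerSeries.X ^ (2 * ∑ i ∈ S, f i) *
        (PowerSeries.C (p : ℚ) ^ (2 * Module.finrank ℤ R) * PowerSeries.X) ^ m *
        b.weight f p := by
    rw [D.weight_eq_mul_weight_reduction, a.1.2, a.2]
  have map_card : (Nat.card {a : {a : SubgroupPair 𝔓 // a.type p = (S, m)} //
      D.reduction a = b} : PowerSeries ℚ) =
      liftWeight (PowerSeries.C (p : ℚ)) (∑ i ∈ S, f i) m (b.type p).2 := by
    rw [D.card_fiber hm hb, ← Nat.coe_castRingHom, map_liftWeight]
    simp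
  rw [← map_card, Nat.card_eq_fintype_card, ← nsmul_eq_mul, ← card_univ, ← sum_const]
  exact (hasSum_fintype _).congr_fun weight_eq

lemma hasSum_weight_fiber_ite (D : IsPrimeDecomposition p f 𝔓) {S : Finset ι} {m : ℕ}
    (hm : m ≤ ∑ i ∈ S, f i) (b : SubgroupPair 𝔓) [Decidable (supp b.exponent ⊆ S)] :
    HasSum (fun a : {a : {a : SubgroupPair 𝔓 // a.type p = (S, m)} // D.reduction a = b} =>
        a.1.1.weight f p)
      (if supp b.exponent ⊆ S then
        liftWeight (PowerSeries.C (p : ℚ)) (∑ i ∈ S, f i) m (b.type p).2 *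
          (PowerSeries.X ^ (2 * ∑ i ∈ S, f i) *
            (PowerSeries.C (p : ℚ) ^ (2 * Module.finrank ℤ R) * PowerSeries.X) ^ m *
            b.weight f p) else 0) := by
  split_ifs with hb
  · exact D.hasSum_weight_fiber hm hb
  · have : IsEmpty {a : {a : SubgroupPair 𝔓 // a.type p = (S, m)} // D.reduction a = b} := by
      refine ⟨?_⟩
      rintro ⟨⟨a, ha⟩, rfl⟩
      exact hb ((supp_sub_one_subset a.exponent).trans (congrArg Prod.fst ha).le)
    exact hasSum_empty

lemma typeSum_eq (D : IsPrimeDecomposition p f 𝔓) (hf : ∀ i, 0 < f i) {S : Finset ι} {m : ℕ}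
    (hm : m ≤ ∑ i ∈ S, f i) :
    SubgroupPair.typeSum 𝔓 f p S m = PowerSeries.X ^ (2 * ∑ i ∈ S, f i) *
      (PowerSeries.C (p : ℚ) ^ (2 * Module.finrank ℤ R) * PowerSeries.X) ^ m *
      supportSum f (PowerSeries.C (p : ℚ)) (SubgroupPair.typeSum 𝔓 f p) S m := by
  classical
  have weights := D.isCoeffFinite_weight hf
  have type_mem_iff (b : SubgroupPair 𝔓) :
      b.type p ∈ S.powerset ×ˢ range (∑ i ∈ S, f i + 1) ↔ supp b.exponent ⊆ S := by
    rw [mem_product, mem_powerset, mem_range_succ_iff]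
    exact and_iff_left_of_imp fun h => (D.type_snd_le b).trans (sum_le_sum_of_subset h)
  have hasSum_types := weights.hasSum_ite_mem (SubgroupPair.type p)
    (S.powerset ×ˢ range (∑ i ∈ S, f i + 1)) fun t =>
      liftWeight (PowerSeries.C (p : ℚ)) (∑ i ∈ S, f i) m t.2 *
        (PowerSeries.X ^ (2 * ∑ i ∈ S, f i) *
          (PowerSeries.C (p : ℚ) ^ (2 * Module.finrank ℤ R) * PowerSeries.X) ^ m)
  simp only [type_mem_iff, mul_assoc (liftWeight _ _ _ _)] at hasSum_types
  have hasSum_fibers := (weights.comp_injective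
    (Subtype.val_injective (p := fun a => a.type p = (S, m)))).hasSum_fiberwise
      (fun a => D.reduction a.1) fun b => D.hasSum_weight_fiber_ite hm b
  rw [SubgroupPair.typeSum]
  refine (hasSum_fibers.unique hasSum_types).trans ?_
  rw [sum_product_right, supportSum, mul_sum]
  simp only [mul_sum]
  refine sum_congr rfl fun k _ => sum_congr rfl fun S' _ => ?_
  rw [SubgroupPair.typeSum]
  ring

lemma isSupportSystem_typeSum (D : IsPrimeDecomposition p f 𝔓) (hf : ∀ i, 0 < f i) :
    IsSupportSystem f (Module.finrank ℤ R) (PowerSeries.C (p : ℚ)) PowerSeries.X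
      (SubgroupPair.typeSum 𝔓 f p) where
  empty := SubgroupPair.typeSum_empty
  eq_zero {S m} hm := by
    have : IsEmpty {a : SubgroupPair 𝔓 // a.type p = (S, m)} :=
      ⟨fun a => hm.not_ge (by simpa [a.2] using D.type_snd_le a.1)⟩
    rw [SubgroupPair.typeSum, tsum_empty]
  step _ _ hm := D.typeSum_eq hf hm

lemma finrank_eq_sum (D : IsPrimeDecomposition p f 𝔓) : Module.finrank ℤ R = ∑ i, f i := by
  have index_span : (Ideal.span {(p : R)}).toAddSubgroup.index = p ^ Module.finrank ℤ R := by
    exact (Ideal.absNorm_eq_index _).symm.trans (Ideal.absNorm_span_natCast p)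
  rw [D.span_eq_idealPow_one, D.index_idealPow, one_dotProduct] at index_span
  exact (Nat.pow_right_injective (Fact.out : p.Prime).two_le index_span).symm

lemma isZetaValue (D : IsPrimeDecomposition p f 𝔓) (hf : ∀ i, 0 < f i) :
    IsZetaValue f (PowerSeries.C (p : ℚ)) PowerSeries.X
      (PowerSeries.mk fun i => (normalSubgroupCount (Heisenberg R) (p ^ i) : ℚ)) :=
  ⟨SubgroupPair.typeSum 𝔓 f p, D.finrank_eq_sum ▸ D.isSupportSystem_typeSum hf,
    D.finrank_eq_sum ▸ D.normalSubgroupCount_mul_prod hf⟩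

end IsPrimeDecomposition

/-! ### The zeta function as a rational function -/

section RationalFunction

variable {ι : Type*} [Fintype ι] {f : ι → ℕ}

lemma exists_mul_eq_isZetaValue {A : Type*} [CommRing A] (S : Submonoid A) {x y : A}
    (hf : ∀ i, 0 < f i) (hS : ∀ a b : ℕ, 0 < b → 1 - x ^ a * y ^ b ∈ S) :
    ∃ P, ∃ Q ∈ S, ∀ {B : Type*} [CommRing B] (φ : A →+* B), (∀ q ∈ S, IsUnit (φ q)) →
      ∃ ζ, IsZetaValue f (φ x) (φ y) ζ ∧ ζ * φ Q = φ P := by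
  let ψ := algebraMap A (Localization S)
  obtain ⟨ζ, hζ⟩ := exists_isZetaValue (x := ψ x) (y := ψ y) hf fun a b hb => by
    simpa using IsLocalization.map_units (Localization S) (⟨_, hS a b hb⟩ : S)
  obtain ⟨⟨P, Q⟩, hPQ⟩ := IsLocalization.surj S ζ
  refine ⟨P, Q, Q.2, fun φ hφ => ?_⟩
  let φ' := IsLocalization.lift (M := S) (S := Localization S) fun q => hφ q q.2
  have lift_eq (a : A) : φ' (ψ a) = φ a := IsLocalization.lift_eq _ a
  refine ⟨φ' ζ, by simpa only [lift_eq] using hζ.map φ', ?_⟩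
  rw [← lift_eq, ← lift_eq, ← map_mul, hPQ]

/-- The variable `X` of `ℚ(X, Y)`. -/
noncomputable def ratX : FractionRing (MvPolynomial (Fin 2) ℚ) :=
  algebraMap (MvPolynomial (Fin 2) ℚ) _ (MvPolynomial.X 0)

/-- The variable `Y` of `ℚ(X, Y)`. -/
noncomputable def ratY : FractionRing (MvPolynomial (Fin 2) ℚ) :=
  algebraMap (MvPolynomial (Fin 2) ℚ) _ (MvPolynomial.X 1)

lemma ratX_ne_zero : ratX ≠ 0 :=
  (map_ne_zero_iff _ (IsFractionRing.injective _ _)).2 (MvPolynomial.X_ne_zero 0)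

lemma ratY_ne_zero : ratY ≠ 0 :=
  (map_ne_zero_iff _ (IsFractionRing.injective _ _)).2 (MvPolynomial.X_ne_zero 1)

lemma ratX_pow_mul_ratY_pow_ne_one {a b : ℕ} (h : a + b ≠ 0) : ratX ^ a * ratY ^ b ≠ 1 := by
  rw [ratX, ratY, ← map_pow, ← map_pow, ← map_mul, Ne,
    map_eq_one_iff _ (IsFractionRing.injective _ _)]
  intro eq_one
  have := congrArg (MvPolynomial.eval fun _ => (0 : ℚ)) eq_one
  rw [map_mul, map_pow, map_pow, MvPolynomial.eval_X, MvPolynomial.eval_X, ← pow_add, zero_pow h,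
    map_one] at this
  exact zero_ne_one this

lemma ratFunSubst_eq_aeval (P : MvPolynomial (Fin 2) ℚ)
    (x y : FractionRing (MvPolynomial (Fin 2) ℚ)) :
    ratFunSubst P x y = MvPolynomial.aeval ![x, y] P := by
  rw [ratFunSubst, MvPolynomial.aeval_def]
  congr 1
  exact Subsingleton.elim _ _

lemma coe_evalAtPrime (P : MvPolynomial (Fin 2) ℚ) (p : ℕ) :
    (evalAtPrime P p : PowerSeries ℚ) =
      MvPolynomial.aeval ![PowerSeries.C (p : ℚ), PowerSeries.X] P := by
  have comp_eq : (Polynomial.coeToPowerSeries.algHom ℚ).comp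
      (MvPolynomial.aeval ![Polynomial.C (p : ℚ), Polynomial.X]) =
        MvPolynomial.aeval ![PowerSeries.C (p : ℚ), PowerSeries.X] := by
    ext i : 1
    fin_cases i <;> simp [Polynomial.coeToPowerSeries.algHom_apply]
  simpa [evalAtPrime, Polynomial.coeToPowerSeries.algHom_apply] using DFunLike.congr_fun comp_eq P

/-- The polynomials in `ℚ[X, Y]` that remain invertible under each of the substitutions
`(p, Y)` with `p` prime (as power series), `(X, Y)` and `(X⁻¹, Y⁻¹)` (as rational functions). -/
noncomputable def denominators : Submonoid (MvPolynomial (Fin 2) ℚ) :=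
  (⨅ p : Nat.Primes, (IsUnit.submonoid (PowerSeries ℚ)).comap
    (MvPolynomial.aeval ![PowerSeries.C (p : ℚ), PowerSeries.X])) ⊓
  (IsUnit.submonoid _).comap (MvPolynomial.aeval ![ratX, ratY]) ⊓
  (IsUnit.submonoid _).comap (MvPolynomial.aeval ![ratX⁻¹, ratY⁻¹])

lemma mem_denominators {Q : MvPolynomial (Fin 2) ℚ} :
    Q ∈ denominators ↔
      ((∀ p : ℕ, p.Prime →
          IsUnit (MvPolynomial.aeval ![PowerSeries.C (p : ℚ), PowerSeries.X] Q)) ∧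
        IsUnit (MvPolynomial.aeval ![ratX, ratY] Q)) ∧
        IsUnit (MvPolynomial.aeval ![ratX⁻¹, ratY⁻¹] Q) := by
  simp [denominators, Submonoid.mem_iInf, Nat.Primes, IsUnit.mem_submonoid_iff]

lemma one_sub_X_pow_mul_X_pow_mem_denominators (a : ℕ) {b : ℕ} (hb : 0 < b) :
    1 - MvPolynomial.X 0 ^ a * MvPolynomial.X 1 ^ b ∈ denominators := by
  have ne_one := ratX_pow_mul_ratY_pow_ne_one (a := a) (b := b) (by lia)
  rw [mem_denominators]
  refine ⟨⟨fun p _ => ?_, ?_⟩, ?_⟩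
  · simp [PowerSeries.isUnit_iff_constantCoeff, hb.ne']
  · simpa [sub_eq_zero] using ne_one.symm
  · rw [isUnit_iff_ne_zero, map_sub, map_one, map_mul, map_pow, map_pow, MvPolynomial.aeval_X,
      MvPolynomial.aeval_X, sub_ne_zero]
    have inv_ne_one := inv_ne_one.2 ne_one
    rw [mul_inv, ← inv_pow, ← inv_pow] at inv_ne_one
    exact inv_ne_one.symm

theorem exists_ratFun_isZetaValue [Nonempty ι] (hf : ∀ i, 0 < f i) :
    ∃ P Q : MvPolynomial (Fin 2) ℚ, Q ≠ 0 ∧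
      (∀ p : ℕ, p.Prime → ∀ ζ, IsZetaValue f (PowerSeries.C (p : ℚ)) PowerSeries.X ζ →
        (evalAtPrime Q p).coeff 0 ≠ 0 ∧
          ζ * (evalAtPrime Q p : PowerSeries ℚ) = (evalAtPrime P p : PowerSeries ℚ)) ∧
      ratFunSubst P ratX⁻¹ ratY⁻¹ / ratFunSubst Q ratX⁻¹ ratY⁻¹ =
        (-1) ^ (3 * ∑ i, f i) * ratX ^ (3 * ∑ i, f i).choose 2 * ratY ^ (5 * ∑ i, f i) *
          (ratFunSubst P ratX ratY / ratFunSubst Q ratX ratY) := by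
  obtain ⟨P, Q, hQ, h⟩ := exists_mul_eq_isZetaValue denominators hf
    fun a _ => one_sub_X_pow_mul_X_pow_mem_denominators a
  have units {q} := (mem_denominators (Q := q)).1
  obtain ⟨⟨isUnit_prime, isUnit_var⟩, isUnit_inv⟩ := units hQ
  refine ⟨P, Q, ?_, fun p hp ζ hζ => ?_, ?_⟩
  · rintro rfl
    simp at isUnit_var
  · obtain ⟨ζ', hζ', eq⟩ := h
      (MvPolynomial.aeval ![PowerSeries.C (p : ℚ), PowerSeries.X]).toRingHom
      fun q hq => (units hq).1.1 p hp
    have ne_one (a b : ℕ) (hb : 0 < b) :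
        PowerSeries.C (p : ℚ) ^ a * (PowerSeries.X : PowerSeries ℚ) ^ b ≠ 1 := fun eq_one => by
      simpa [hb.ne'] using congrArg PowerSeries.constantCoeff eq_one
    obtain rfl := hζ.unique hf ne_one (by simpa using hζ')
    rw [coe_evalAtPrime, coe_evalAtPrime]
    refine ⟨?_, eq⟩
    have := isUnit_prime p hp
    rwa [← coe_evalAtPrime, PowerSeries.isUnit_iff_constantCoeff, isUnit_iff_ne_zero,
      ← PowerSeries.coeff_zero_eq_constantCoeff_apply, Polynomial.coeff_coe] at this
  · obtain ⟨ζ, hζ, eq⟩ := h (MvPolynomial.aeval ![ratX, ratY]).toRingHom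
      fun q hq => (units hq).1.2
    obtain ⟨ζ', hζ', eq'⟩ := h (MvPolynomial.aeval ![ratX⁻¹, ratY⁻¹]).toRingHom
      fun q hq => (units hq).2
    simp only [ratFunSubst_eq_aeval]
    refine (eq_div_of_mul_eq isUnit_var.ne_zero eq) ▸ (eq_div_of_mul_eq isUnit_inv.ne_zero eq') ▸ ?_
    exact IsZetaValue.inv hf ratX_ne_zero ratY_ne_zero
      (fun i hi => by simpa using ratX_pow_mul_ratY_pow_ne_one (a := i) (b := 0) (by lia))
      (fun a b hb => ratX_pow_mul_ratY_pow_ne_one (by lia)) (by simpa using hζ) (by simpa using hζ')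

end RationalFunction

end HeisenbergZeta

open scoped NumberField in
/-- **Local normal zeta functions of Heisenberg groups over number rings**
(Schein–Voll). Fix `r` and `f = (f₁, …, f_r)`; set `d = f₁ + ⋯ + f_r`. There is a rational
function `W_f = P/Q ∈ ℚ(X,Y)` such that: (1) for every number field `K` of degree `d` and
every rational prime `p` which is unramified in `K` and decomposes into `r` distinct prime
ideals of inertia degrees `f₁, …, f_r`, the local normal zeta function of the Heisenberg group
`H(𝓞_K)` at `p` is `W_f(p, Y)`; and (2) `W_f(X⁻¹, Y⁻¹) = (-1)^{3d} X^{binom(3d,2)} Y^{5d} W_f(X,Y)`. -/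
theorem local_normal_zeta_heisenberg_number_ring
    (r : ℕ) (hr : 0 < r) (f : Fin r → ℕ) (hf : ∀ i, 0 < f i) (d : ℕ) (hd : d = ∑ i, f i) :
    ∃ P Q : MvPolynomial (Fin 2) ℚ, Q ≠ 0 ∧
      (∀ (K : Type) [Field K] [NumberField K], Module.finrank ℚ K = d →
        ∀ p : ℕ, p.Prime →
          ∀ 𝔓 : Fin r → Ideal (𝓞 K), Function.Injective 𝔓 →
            (∀ i, (𝔓 i).IsPrime) →
            (∀ i, Nat.card ((𝓞 K) ⧸ 𝔓 i) = p ^ f i) →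
            Ideal.span {(p : 𝓞 K)} = ∏ i, 𝔓 i →
              (evalAtPrime Q p).coeff 0 ≠ 0 ∧
              (PowerSeries.mk fun i => (normalSubgroupCount (Heisenberg (𝓞 K)) (p ^ i) : ℚ)) *
                  ((evalAtPrime Q p : Polynomial ℚ) : PowerSeries ℚ)
                = ((evalAtPrime P p : Polynomial ℚ) : PowerSeries ℚ)) ∧
      (let F := FractionRing (MvPolynomial (Fin 2) ℚ)
       let XX : F := algebraMap (MvPolynomial (Fin 2) ℚ) F (MvPolynomial.X 0)
       let YY : F := algebraMap (MvPolynomial (Fin 2) ℚ) F (MvPolynomial.X 1)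
       ratFunSubst P XX⁻¹ YY⁻¹ / ratFunSubst Q XX⁻¹ YY⁻¹ =
         (-1) ^ (3 * d) * XX ^ ((3 * d).choose 2) * YY ^ (5 * d) *
           (ratFunSubst P XX YY / ratFunSubst Q XX YY)) := by
  obtain rfl := hd
  have : Nonempty (Fin r) := ⟨⟨0, hr⟩⟩
  obtain ⟨P, Q, hQ, zeta_mul_eq, functional_eq⟩ := HeisenbergZeta.exists_ratFun_isZetaValue hf
  refine ⟨P, Q, hQ, ?_, functional_eq⟩
  intro K _ _ _ p hp 𝔓 injective isPrime card_quotient span_eq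
  have : Fact p.Prime := ⟨hp⟩
  have D : HeisenbergZeta.IsPrimeDecomposition p f 𝔓 :=
    ⟨injective, isPrime, card_quotient, span_eq⟩
  exact zeta_mul_eq p hp _ (D.isZetaValue hf)
end

section
/- For every n ∈ ℕ with n ≥ 1, the number of twist-equivalence classes of n-dimensional irreducible complex representations of the integral Heisenberg group H(ℤ) equals Euler's totient function: r̃ₙ(H(ℤ)) = φ(n). Equivalently, ζ^{~irr}_{H(ℤ)}(s) = ζ(s−1)/ζ(s). -/
open scoped MatrixGroups

/-- A submodule `W` of `ℂ^n` is invariant under a matrix representation `ρ` if it is stable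
under the action of every `ρ g`. -/
def RepInvariant {G : Type*} [Group G] {n : ℕ} (ρ : G →* GL (Fin n) ℂ)
    (W : Submodule ℂ (Fin n → ℂ)) : Prop :=
  ∀ g : G, ∀ v ∈ W, Matrix.mulVec (ρ g : Matrix (Fin n) (Fin n) ℂ) v ∈ W

/-- A matrix representation `ρ : G →* GLₙ(ℂ)` is irreducible if the associated `ℂG`-module
`ℂ^n` is simple, i.e. nonzero and without proper nonzero invariant submodules. -/
def RepIsIrreducible {G : Type*} [Group G] {n : ℕ} (ρ : G →* GL (Fin n) ℂ) : Prop :=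
  (⊥ : Submodule ℂ (Fin n → ℂ)) ≠ ⊤ ∧
    ∀ W : Submodule ℂ (Fin n → ℂ), RepInvariant ρ W → W = ⊥ ∨ W = ⊤

/-- Two matrix representations are isomorphic if they are conjugate by an element of
`GLₙ(ℂ)`. -/
def RepIso {G : Type*} [Group G] {n : ℕ} (ρ₁ ρ₂ : G →* GL (Fin n) ℂ) : Prop :=
  ∃ T : GL (Fin n) ℂ, ∀ g : G, T * ρ₁ g * T⁻¹ = ρ₂ g

/-- Two matrix representations are twist-equivalent if there is a one-dimensional character
`χ : G →* ℂˣ` such that `ρ₁` is isomorphic to `g ↦ χ(g) ρ₂(g)`. -/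
def TwistEquiv {G : Type*} [Group G] {n : ℕ} (ρ₁ ρ₂ : G →* GL (Fin n) ℂ) : Prop :=
  ∃ χ : G →* ℂˣ, ∃ T : GL (Fin n) ℂ, ∀ g : G,
    (ρ₁ g : Matrix (Fin n) (Fin n) ℂ)
      = (χ g : ℂ) • ((T * ρ₂ g * T⁻¹ : GL (Fin n) ℂ) : Matrix (Fin n) (Fin n) ℂ)

/-- `r̃ₙ(G)`: the number of twist-equivalence classes of `n`-dimensional irreducible complex
representations of `G`. -/
noncomputable def twistRepCount (G : Type*) [Group G] (n : ℕ) : ℕ :=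
  Nat.card (Quot fun ρ₁ ρ₂ : {ρ : G →* GL (Fin n) ℂ // RepIsIrreducible ρ} =>
    TwistEquiv ρ₁.1 ρ₂.1)

/-! In an irreducible representation of dimension `n` the central element `⟨0, 0, 1⟩` acts by a
scalar `ζ`. This is a commutator, so determinants give `ζ ^ n = 1`; let `m` be the order of `ζ`.
Then `⟨m, 0, 0⟩` commutes with everything modulo the kernel, hence is a scalar too, and a twist
makes it act trivially while some eigenfunctional of `⟨0, 1, 0⟩` becomes invariant. By Frobenius
reciprocity this functional gives a nonzero map to the Schrödinger representation on functions on
`ℤ/m`, on which `⟨1, 0, 0⟩` acts by translation and `⟨0, 1, 0⟩` by modulation with `t ↦ ζ ^ t`.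
The latter is irreducible: averaging over modulations isolates a point mass, and translations move
it everywhere. So the map is an isomorphism and `m = n`. Finally `ζ` is an invariant of the twist
class, since characters are trivial on commutators, and the classes correspond to the primitive
`n`-th roots of unity. -/

section Commutator

variable {G : Type*} [Group G]

lemma map_eq_one_of_mem_commutator {M : Type*} [CommMonoid M] (f : G →* M) {c : G}
    (hc : c ∈ commutator G) : f c = 1 := by
  have : c ∈ f.toHomUnits.ker := Abelianization.commutator_subset_ker _ hc
  simpa using congrArg Units.val (MonoidHom.mem_ker.1 this)

lemma TwistEquiv.trace_eq_of_mem_commutator {n : ℕ} {ρ₁ ρ₂ : G →* GL (Fin n) ℂ}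
    (h : TwistEquiv ρ₁ ρ₂) {c : G} (hc : c ∈ commutator G) :
    (ρ₁ c).val.trace = (ρ₂ c).val.trace := by
  obtain ⟨χ, T, h⟩ := h
  rw [h, map_eq_one_of_mem_commutator χ hc, Units.val_one, one_smul, Units.val_mul, Units.val_mul,
    Matrix.trace_units_conj]

end Commutator

section Twist

variable {K G V : Type*} [CommRing K] [Monoid G] [AddCommGroup V] [Module K V]

/-- The twist `χ ⊗ ρ` of a representation `ρ` by a one-dimensional character `χ`, realised on the
space of `ρ` as `g ↦ χ(g) ρ(g)`. -/
def twist (χ : G →* Kˣ) (ρ : Representation K G V) : Representation K G V where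
  toFun g := (χ g : K) • ρ g
  map_one' := by simp
  map_mul' g h := by simp only [map_mul, Units.val_mul, smul_mul_smul_comm]

lemma twist_apply (χ : G →* Kˣ) (ρ : Representation K G V) (g : G) :
    twist χ ρ g = (χ g : K) • ρ g := rfl

end Twist

section Irreducible

open Representation

variable {K G V : Type*} [Field K] [Monoid G] [AddCommGroup V] [Module K V]

lemma representation_isIrreducible_iff (ρ : Representation K G V) :
    ρ.IsIrreducible ↔ Nontrivial V ∧
      ∀ W : Submodule K V, (∀ g, ∀ v ∈ W, ρ g v ∈ W) → W = ⊥ ∨ W = ⊤ := by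
  constructor
  · intro hρ
    refine ⟨?_, fun W hW => ?_⟩
    · by_contra hV
      rw [not_nontrivial_iff_subsingleton] at hV
      exact bot_ne_top (Subrepresentation.toSubmodule_injective
        (Subsingleton.elim (⊥ : Subrepresentation ρ).toSubmodule ⊤))
    · exact (eq_bot_or_eq_top (⟨W, hW⟩ : Subrepresentation ρ)).imp
        (congrArg Subrepresentation.toSubmodule) (congrArg Subrepresentation.toSubmodule)
  · rintro ⟨hV, hρ⟩
    exact
      { exists_pair_ne := ⟨⊥, ⊤, fun h => bot_ne_top (α := Submodule K V)
          (congrArg Subrepresentation.toSubmodule h)⟩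
        eq_bot_or_eq_top := fun W => (hρ W.toSubmodule W.apply_mem_toSubmodule).imp
          (@Subrepresentation.toSubmodule_injective _ _ _ _ _ _ _ ρ W ⊥)
          (@Subrepresentation.toSubmodule_injective _ _ _ _ _ _ _ ρ W ⊤) }

variable {ρ : Representation K G V}

lemma nontrivial_of_isIrreducible (hρ : ρ.IsIrreducible) : Nontrivial V :=
  ((representation_isIrreducible_iff ρ).1 hρ).1

lemma isIrreducible_of_equiv {W : Type*} [AddCommGroup W] [Module K W] {σ : Representation K G W}
    (e : ρ.Equiv σ) (hσ : σ.IsIrreducible) : ρ.IsIrreducible := by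
  rw [representation_isIrreducible_iff] at hσ ⊢
  obtain ⟨hW, hσ⟩ := hσ
  refine ⟨e.toEquiv.nontrivial, fun U hU => ?_⟩
  let L : V ≃ₗ[K] W := e.toLinearEquiv
  have hinv : ∀ g, ∀ w ∈ U.map (L : V →ₗ[K] W), σ g w ∈ U.map (L : V →ₗ[K] W) := by
    rintro g _ ⟨v, hv, rfl⟩
    exact ⟨ρ g v, hU g v hv, e.toIntertwiningMap.isIntertwining _ _ g v⟩
  simpa using hσ _ hinv

lemma isIrreducible_comp_of_surjective {H : Type*} [Monoid H] (hρ : ρ.IsIrreducible) {f : H →* G}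
    (hf : Function.Surjective f) : IsIrreducible (ρ.comp f) := by
  rw [representation_isIrreducible_iff] at hρ ⊢
  exact ⟨hρ.1, fun W hW => hρ.2 W (hf.forall.2 hW)⟩

lemma exists_eq_algebraMap_of_commute [IsAlgClosed K] [FiniteDimensional K V]
    (hρ : ρ.IsIrreducible) {f : Module.End K V} (hf : ∀ g, Commute f (ρ g)) :
    ∃ c : K, f = algebraMap K (Module.End K V) c := by
  obtain ⟨c, hc⟩ := IsIrreducible.algebraMap_intertwiningMap_bijective_of_isAlgClosed.2
    (⟨f, hf⟩ : IntertwiningMap ρ ρ)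
  exact ⟨c, (congrArg IntertwiningMap.toLinearMap hc).symm⟩

lemma isIrreducible_twist (χ : G →* Kˣ) (hρ : ρ.IsIrreducible) : (twist χ ρ).IsIrreducible := by
  rw [representation_isIrreducible_iff] at hρ ⊢
  refine ⟨hρ.1, fun W hW => hρ.2 W fun g v hv => ?_⟩
  exact (Submodule.smul_mem_iff W (χ g).ne_zero).1 (hW g v hv)

end Irreducible

section Scalar

lemma pow_finrank_eq_one_of_mem_commutator {K G V : Type*} [CommRing K] [Group G] [AddCommGroup V]
    [Module K V] [Module.Free K V] {ρ : Representation K G V} {c : G} (hc : c ∈ commutator G)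
    {ζ : K} (hζ : ρ c = algebraMap K (Module.End K V) ζ) : ζ ^ Module.finrank K V = 1 := by
  have hdet : LinearMap.det (ρ c) = 1 :=
    map_eq_one_of_mem_commutator ((LinearMap.det : Module.End K V →* K).comp ρ) hc
  rw [← hdet, hζ, Module.algebraMap_end_eq_smul_id, LinearMap.det_smul, LinearMap.det_id, mul_one]

variable {K G V : Type*} [Field K] [Group G] [AddCommGroup V] [Module K V]
  {ρ : Representation K G V}

lemma ne_zero_of_apply_eq_smul {g : G} {v : V} (hv : v ≠ 0) {c : K} (h : ρ g v = c • v) :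
    c ≠ 0 := by
  rintro rfl
  exact hv (by simpa [← Module.End.mul_apply, ← map_mul] using congrArg (ρ g⁻¹) h)

lemma apply_zpow_eq_smul {g : G} {v : V} {c : K} (h : ρ g v = c • v) (k : ℤ) :
    ρ (g ^ k) v = c ^ k • v := by
  obtain rfl | hv := eq_or_ne v 0
  · simp
  have hc : c ≠ 0 := ne_zero_of_apply_eq_smul hv h
  have h_inv : ρ g⁻¹ v = c⁻¹ • v := by
    rw [eq_inv_smul_iff₀ hc, ← map_smul, ← h, ← Module.End.mul_apply, ← map_mul]
    simp
  induction k with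
  | zero => simp
  | succ k ih =>
    rw [zpow_add_one, map_mul, Module.End.mul_apply, h, map_smul, ih, smul_smul, zpow_add_one₀ hc,
      mul_comm]
  | pred k ih =>
    rw [zpow_sub_one, map_mul, Module.End.mul_apply, h_inv, map_smul, ih, smul_smul,
      zpow_sub_one₀ hc, mul_comm]

lemma exists_dual_eigenvector [IsAlgClosed K] [FiniteDimensional K V] [Nontrivial V]
    (ρ : Representation K G V) (g : G) :
    ∃ φ : Module.Dual K V, φ ≠ 0 ∧ ∃ c : Kˣ, ∀ (k : ℤ) v, φ (ρ (g ^ k) v) = (c : K) ^ k * φ v := by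
  obtain ⟨c, hc⟩ := Module.End.exists_eigenvalue (ρ.dual g⁻¹)
  obtain ⟨φ, hφ⟩ := hc.exists_hasEigenvector
  refine ⟨φ, hφ.2, .mk0 c (ne_zero_of_apply_eq_smul hφ.2 hφ.apply_eq_smul), fun k v => ?_⟩
  simpa [Module.Dual.transpose_apply] using
    LinearMap.congr_fun (apply_zpow_eq_smul hφ.apply_eq_smul k) v

end Scalar

section Matrix

open Representation

variable {K G V ι : Type*} [CommRing K] [Group G] [AddCommGroup V] [Module K V] [Fintype ι]
  [DecidableEq ι]

/-- The representation on column vectors afforded by a matrix representation. -/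
def matrixRep (ρ : G →* GL ι K) : Representation K G (ι → K) :=
  (Matrix.toLinAlgEquiv' : Matrix ι ι K ≃ₐ[K] _).toMonoidHom.comp ((Units.coeHom _).comp ρ)

/-- The matrix representation afforded by a representation `σ` and a basis `b` of its space. -/
noncomputable def repToGL (b : Module.Basis ι K V) (σ : Representation K G V) : G →* GL ι K :=
  MonoidHom.toHomUnits ((LinearMap.toMatrixAlgEquiv b).toMonoidHom.comp σ)

lemma repToGL_val (b : Module.Basis ι K V) (σ : Representation K G V) (g : G) :
    (repToGL b σ g).val = LinearMap.toMatrix b b (σ g) := rfl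

/-- Taking coordinates identifies `σ` with the representation on column vectors. -/
noncomputable def equivMatrixRep (b : Module.Basis ι K V) (σ : Representation K G V) :
    σ.Equiv (matrixRep (repToGL b σ)) :=
  .mk b.equivFun fun g => by
    ext1 v
    exact (LinearMap.toMatrix_mulVec_repr b b (σ g) v).symm

variable {n : ℕ}

lemma repIsIrreducible_iff (ρ : G →* GL (Fin n) ℂ) :
    RepIsIrreducible ρ ↔ (matrixRep ρ).IsIrreducible := by
  rw [representation_isIrreducible_iff, ← Submodule.nontrivial_iff ℂ]
  exact and_congr_left' ⟨nontrivial_of_ne _ _, fun _ => bot_ne_top⟩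

lemma repIsIrreducible_repToGL {V : Type*} [AddCommGroup V] [Module ℂ V]
    (b : Module.Basis (Fin n) ℂ V) {σ : Representation ℂ G V} (hσ : σ.IsIrreducible) :
    RepIsIrreducible (repToGL b σ) :=
  (repIsIrreducible_iff _).2 (isIrreducible_of_equiv (equivMatrixRep b σ).symm hσ)

lemma twistEquiv_of_equiv_twist {ρ₁ ρ₂ : G →* GL (Fin n) ℂ} {χ : G →* ℂˣ}
    (e : (twist χ (matrixRep ρ₁)).Equiv (matrixRep ρ₂)) : TwistEquiv ρ₁ ρ₂ := by
  let T : GL (Fin n) ℂ := Matrix.GeneralLinearGroup.toLin.symm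
    (LinearMap.GeneralLinearGroup.ofLinearEquiv e.toLinearEquiv)
  have hT : ∀ v, T.val.mulVec v = e v := fun v => LinearMap.toMatrix'_mulVec e.toLinearMap v
  refine ⟨χ⁻¹, T⁻¹, fun g => ?_⟩
  have h_conj : (χ g : ℂ) • (T.val * (ρ₁ g).val) = (ρ₂ g).val * T.val := by
    refine Matrix.ext_of_mulVec_single fun i => ?_
    rw [Matrix.smul_mulVec, ← Matrix.mulVec_mulVec, ← Matrix.mulVec_mulVec, hT, hT, ← map_smul]
    exact e.toIntertwiningMap.isIntertwining _ _ g _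
  rw [inv_inv, Units.val_mul, Units.val_mul, mul_assoc, ← h_conj, mul_smul_comm,
    Units.inv_mul_cancel_left, smul_smul, MonoidHom.inv_apply, Units.inv_mul, one_smul]

end Matrix

namespace Heisenberg

open Representation

section Group

variable {R S : Type*} [CommRing R] [CommRing S]

/-- The homomorphism of Heisenberg groups induced entrywise by a ring homomorphism. -/
def map (f : R →+* S) : Heisenberg R →* Heisenberg S where
  toFun g := ⟨f g.x, f g.y, f g.z⟩
  map_one' := by simp [one_def]
  map_mul' g h := by simp [mul_def]

lemma map_surjective {f : R →+* S} (hf : Function.Surjective f) :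
    Function.Surjective (map f) := by
  rintro ⟨x, y, z⟩
  obtain ⟨⟨a, rfl⟩, ⟨b, rfl⟩, ⟨c, rfl⟩⟩ := And.intro (hf x) (And.intro (hf y) (hf z))
  exact ⟨⟨a, b, c⟩, rfl⟩

lemma zpow_of_mul_eq_zero {g : Heisenberg R} (hg : g.x * g.y = 0) (k : ℤ) :
    g ^ k = ⟨k * g.x, k * g.y, k * g.z⟩ := by
  induction k with
  | zero => simp [one_def]
  | succ k ih =>
    rw [zpow_add_one, ih, mul_def]
    ext
    · push_cast; ring
    · push_cast; ring
    · push_cast; linear_combination (k : R) * hg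
  | pred k ih =>
    rw [zpow_sub_one, ih, mul_def, inv_def]
    ext
    · push_cast; ring
    · push_cast; ring
    · push_cast; linear_combination (k + 1 : R) * hg

open scoped commutatorElement in
lemma central_mem_commutator (z : R) : (⟨0, 0, z⟩ : Heisenberg R) ∈ commutator (Heisenberg R) := by
  have : (⟨0, 0, z⟩ : Heisenberg R) = ⁅(⟨1, 0, 0⟩ : Heisenberg R), ⟨0, z, 0⟩⁆ := by
    simp [commutatorElement_def, mul_def, inv_def]
  rw [this]
  exact Subgroup.commutator_mem_commutator (Subgroup.mem_top _) (Subgroup.mem_top _)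

/-- The character of `Heisenberg ℤ` with values `a` and `b` on the generators `⟨1, 0, 0⟩` and
`⟨0, 1, 0⟩`. -/
def character {M : Type*} [CommGroup M] (a b : M) : Heisenberg ℤ →* M where
  toFun g := a ^ g.x * b ^ g.y
  map_one' := by simp [one_def]
  map_mul' g h := by simp [mul_def, zpow_add, mul_mul_mul_comm]

end Group

section Schrodinger

variable {K R S : Type*} [CommRing K] [CommRing R] [CommRing S]

/-- The Schrödinger representation of the Heisenberg group over `S` attached to an additive
character `ψ`: `⟨x, 0, 0⟩` translates functions on `S` by `x`, `⟨0, y, 0⟩` multiplies them by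
`t ↦ ψ (y * t)`, and the centre acts through `ψ`. -/
def schrodinger (ψ : AddChar S K) : Representation K (Heisenberg S) (S → K) where
  toFun g :=
    { toFun := fun f t => ψ (g.z + g.y * t) * f (t + g.x)
      map_add' := fun f₁ f₂ => by ext t; simp [mul_add]
      map_smul' := fun c f => by ext t; simp [mul_left_comm] }
  map_one' := by ext; simp [one_def]
  map_mul' g h := by
    ext1
    ext t
    simp only [mul_def, LinearMap.coe_mk, AddHom.coe_mk, Module.End.mul_apply]
    rw [← mul_assoc, ← AddChar.map_add_eq_mul]
    congr 2 <;> ring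

lemma schrodinger_apply (ψ : AddChar S K) (g : Heisenberg S) (f : S → K) (t : S) :
    schrodinger ψ g f t = ψ (g.z + g.y * t) * f (t + g.x) := rfl

lemma schrodinger_central (ψ : AddChar S K) (z : S) :
    schrodinger ψ ⟨0, 0, z⟩ = ψ z • LinearMap.id := by
  ext1
  ext t
  simp [schrodinger_apply]

lemma sum_schrodinger_modulation [IsDomain K] [Fintype S] [DecidableEq S] {ψ : AddChar S K}
    (hψ : ψ.IsPrimitive) (f : S → K) (s : S) :
    ∑ y, schrodinger ψ ⟨0, y, -(y * s)⟩ f = Pi.single s (Fintype.card S * f s) := by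
  ext t
  have hchar : ∑ y, ψ (-(y * s) + y * t) = if t = s then (Fintype.card S : K) else 0 := by
    have h := AddChar.sum_mulShift (t - s) hψ
    simp only [sub_eq_zero, Nat.cast_ite, Nat.cast_zero] at h
    rw [← h]
    exact Finset.sum_congr rfl fun y _ => by congr 1; ring
  simp only [Finset.sum_apply, schrodinger_apply, add_zero, ← Finset.sum_mul, hchar]
  obtain rfl | hts := eq_or_ne t s
  · simp
  · simp [hts]

theorem isIrreducible_schrodinger {K : Type*} [Field K] [Fintype S]
    (hS : (Fintype.card S : K) ≠ 0) {ψ : AddChar S K} (hψ : ψ.IsPrimitive) :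
    (schrodinger ψ).IsIrreducible := by
  classical
  refine (representation_isIrreducible_iff _).2 ⟨inferInstance, fun W hW => ?_⟩
  refine or_iff_not_imp_left.2 fun hbot => ?_
  obtain ⟨f, hfW, hf⟩ := W.ne_bot_iff.1 hbot
  obtain ⟨s, hs⟩ := Function.ne_iff.1 hf
  have h_delta : Pi.single s 1 ∈ W := by
    have h := W.sum_mem fun y (_ : y ∈ Finset.univ) => hW ⟨0, y, -(y * s)⟩ f hfW
    rw [sum_schrodinger_modulation hψ, ← mul_one (_ * f s), ← smul_eq_mul, Pi.single_smul] at h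
    exact (W.smul_mem_iff (mul_ne_zero hS hs)).1 h
  have h_translate : ∀ t, Pi.single t 1 ∈ W := fun t => by
    convert hW ⟨s - t, 0, 0⟩ _ h_delta using 1
    ext r
    have : r + (s - t) = s ↔ r = t := by rw [add_sub_left_comm, add_eq_left, sub_eq_zero]
    simp [schrodinger_apply, Pi.single_apply, this]
  rw [eq_top_iff, ← (Pi.basisFun K S).span_eq, Submodule.span_le]
  rintro _ ⟨t, rfl⟩
  simpa using h_translate t

/-- Frobenius reciprocity for the Schrödinger representation, which is coinduced from the subgroup
of all `⟨0, y, z⟩`. -/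
theorem exists_intertwiningMap_schrodinger {V : Type*} [AddCommGroup V] [Module K V]
    {ρ : Representation K (Heisenberg R) V} {q : R →+* S} (hq : Function.Surjective q)
    (hρ : ∀ x, q x = 0 → ρ ⟨x, 0, 0⟩ = 1) {ψ : AddChar S K} {φ : Module.Dual K V}
    (hφ : ∀ y z v, φ (ρ ⟨0, y, z⟩ v) = ψ (q z) * φ v) :
    ∃ T : ρ.IntertwiningMap ((schrodinger ψ).comp (map q)),
      ∀ v x, T v (q x) = φ (ρ ⟨x, 0, 0⟩ v) := by
  have h_periodic {a b : R} (hab : q a = q b) : ρ ⟨a, 0, 0⟩ = ρ ⟨b, 0, 0⟩ := by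
    have h_mul : (⟨a, 0, 0⟩ : Heisenberg R) = ⟨a - b, 0, 0⟩ * ⟨b, 0, 0⟩ := by simp [mul_def]
    rw [h_mul, map_mul, hρ _ (by rw [map_sub, hab, sub_self]), one_mul]
  let T : V →ₗ[K] S → K := LinearMap.pi fun s => φ ∘ₗ ρ ⟨Function.surjInv hq s, 0, 0⟩
  have hT (v : V) (x : R) : T v (q x) = φ (ρ ⟨x, 0, 0⟩ v) :=
    congrArg (fun f => φ (f v)) (h_periodic (Function.surjInv_eq hq (q x)))
  refine ⟨⟨T, fun g => ?_⟩, hT⟩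
  ext v s
  obtain ⟨x, rfl⟩ := hq s
  have h_mul : ⟨x, 0, 0⟩ * g = ⟨0, g.y, g.z + g.y * x⟩ * ⟨x + g.x, 0, 0⟩ := by
    simp [mul_def, mul_comm]
  calc T (ρ g v) (q x)
      = φ (ρ ⟨0, g.y, g.z + g.y * x⟩ (ρ ⟨x + g.x, 0, 0⟩ v)) := by
        rw [hT, ← Module.End.mul_apply, ← map_mul, h_mul, map_mul, Module.End.mul_apply]
    _ = ψ (q g.z + q g.y * q x) * T v (q x + q g.x) := by
        rw [hφ, map_add, map_mul, ← map_add, hT]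

end Schrodinger

section Integral

variable {K V : Type*} [Field K] [AddCommGroup V] [Module K V]

lemma zmodChar_intCast {m : ℕ} [NeZero m] {ζ : K} (hζ : ζ ^ m = 1) (z : ℤ) :
    AddChar.zmodChar m hζ z = ζ ^ z := by
  have h_one : AddChar.zmodChar m hζ 1 = ζ := by
    simpa using AddChar.zmodChar_apply' hζ 1
  rw [← zsmul_one, AddChar.map_zsmul_eq_zpow, h_one]

/-- The Schrödinger representation of `Heisenberg (ZMod m)` with central character `z ↦ ζ ^ z`,
inflated to `Heisenberg ℤ`. -/
def rootRep {m : ℕ} [NeZero m] {ζ : K} (hζ : IsPrimitiveRoot ζ m) :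
    Representation K (Heisenberg ℤ) (ZMod m → K) :=
  (schrodinger (AddChar.zmodChar m hζ.pow_eq_one)).comp (map (Int.castRingHom (ZMod m)))

lemma isIrreducible_rootRep {m : ℕ} [NeZero m] {ζ : K} (hζ : IsPrimitiveRoot ζ m) :
    (rootRep hζ).IsIrreducible := by
  have hm : (Fintype.card (ZMod m) : K) ≠ 0 := by
    rw [ZMod.card]
    exact hζ.neZero'.out
  exact isIrreducible_comp_of_surjective
    (isIrreducible_schrodinger hm (AddChar.zmodChar_primitive_of_primitive_root m hζ))
    (map_surjective ZMod.intCast_surjective)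

lemma rootRep_central {m : ℕ} [NeZero m] {ζ : K} (hζ : IsPrimitiveRoot ζ m) :
    rootRep hζ ⟨0, 0, 1⟩ = ζ • LinearMap.id := by
  have h : rootRep hζ ⟨0, 0, 1⟩ = schrodinger (AddChar.zmodChar m hζ.pow_eq_one)
      ⟨((0 : ℤ) : ZMod m), ((0 : ℤ) : ZMod m), ((1 : ℤ) : ZMod m)⟩ := rfl
  rw [h, Int.cast_zero, schrodinger_central, zmodChar_intCast, zpow_one]

variable {ρ : Representation K (Heisenberg ℤ) V}

lemma central_apply {ζ : K} (hζ : ρ ⟨0, 0, 1⟩ = algebraMap K (Module.End K V) ζ) (z : ℤ) (v : V) :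
    ρ ⟨0, 0, z⟩ v = ζ ^ z • v := by
  have h : ρ ⟨0, 0, 1⟩ v = ζ • v := by rw [hζ, Module.algebraMap_end_apply]
  simpa [zpow_of_mul_eq_zero] using apply_zpow_eq_smul h z

lemma commute_translation {ζ : K} (hζ : ρ ⟨0, 0, 1⟩ = algebraMap K (Module.End K V) ζ) {m : ℕ}
    (hm : ζ ^ m = 1) (g : Heisenberg ℤ) : Commute (ρ ⟨m, 0, 0⟩) (ρ g) := by
  have h_mul : ⟨m, 0, 0⟩ * g = ⟨0, 0, m * g.y⟩ * (g * ⟨m, 0, 0⟩) := by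
    simp [mul_def, add_comm]
  have h_central : ρ ⟨0, 0, m * g.y⟩ = 1 := by
    ext1 v
    rw [central_apply hζ, zpow_mul, zpow_natCast, hm, one_zpow, one_smul, Module.End.one_apply]
  rw [Commute, SemiconjBy, ← map_mul, h_mul, map_mul, h_central, one_mul, map_mul]

theorem nonempty_equiv_rootRep (hρ : ρ.IsIrreducible) {m : ℕ} [NeZero m] {ζ : K}
    (hζ : IsPrimitiveRoot ζ m) (h_central : ρ ⟨0, 0, 1⟩ = algebraMap K (Module.End K V) ζ)
    (h_translation : ρ ⟨m, 0, 0⟩ = 1) {φ : Module.Dual K V} (hφ : φ ≠ 0)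
    (h_modulation : ∀ y v, φ (ρ ⟨0, y, 0⟩ v) = φ v) : Nonempty (ρ.Equiv (rootRep hζ)) := by
  have h_ker (x : ℤ) (hx : Int.castRingHom (ZMod m) x = 0) : ρ ⟨x, 0, 0⟩ = 1 := by
    obtain ⟨k, rfl⟩ := (ZMod.intCast_zmod_eq_zero_iff_dvd x m).1 hx
    have h_pow : (⟨m * k, 0, 0⟩ : Heisenberg ℤ) = ⟨m, 0, 0⟩ ^ k := by
      simp [zpow_of_mul_eq_zero, mul_comm]
    ext1 v
    rw [h_pow, apply_zpow_eq_smul (c := 1) (by simp [h_translation]), one_zpow, one_smul,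
      Module.End.one_apply]
  have h_functional (y z : ℤ) (v : V) : φ (ρ ⟨0, y, z⟩ v) =
      AddChar.zmodChar m hζ.pow_eq_one (Int.castRingHom (ZMod m) z) * φ v := by
    have h_mul : (⟨0, y, z⟩ : Heisenberg ℤ) = ⟨0, y, 0⟩ * ⟨0, 0, z⟩ := by simp [mul_def]
    rw [h_mul, map_mul, Module.End.mul_apply, h_modulation, central_apply h_central, map_smul,
      eq_intCast, zmodChar_intCast, smul_eq_mul]
  obtain ⟨T, hT⟩ := exists_intertwiningMap_schrodinger ZMod.intCast_surjective h_ker h_functional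
  have hT_ne : T ≠ 0 := by
    rintro rfl
    refine hφ (LinearMap.ext fun v => ?_)
    have h_one : ρ ⟨0, 0, 0⟩ = 1 := map_one ρ
    simpa [h_one] using (hT v 0).symm
  have := isIrreducible_rootRep hζ
  exact ⟨T.ofBijective ((IsIrreducible.bijective_or_eq_zero (σ := rootRep hζ) T).resolve_right
    hT_ne)⟩

variable [IsAlgClosed K] [FiniteDimensional K V]

theorem exists_equiv_twist_rootRep (hρ : ρ.IsIrreducible) {m : ℕ} [NeZero m] {ζ : K}
    (hζ : IsPrimitiveRoot ζ m) (h_central : ρ ⟨0, 0, 1⟩ = algebraMap K (Module.End K V) ζ) :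
    ∃ χ, Nonempty ((twist χ ρ).Equiv (rootRep hζ)) := by
  have := nontrivial_of_isIrreducible hρ
  obtain ⟨b, hb⟩ := exists_eq_algebraMap_of_commute hρ (commute_translation h_central hζ.pow_eq_one)
  obtain ⟨φ, hφ, c, hc⟩ := exists_dual_eigenvector ρ ⟨0, 1, 0⟩
  obtain ⟨a, rfl⟩ := IsAlgClosed.exists_pow_nat_eq b (NeZero.pos m)
  obtain ⟨v, hv⟩ := exists_ne (0 : V)
  have ha : a ≠ 0 := ne_zero_pow (NeZero.ne m)
    (ne_zero_of_apply_eq_smul hv (by rw [hb, Module.algebraMap_end_apply]))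
  -- Twisting by `χ` makes `⟨m, 0, 0⟩` act trivially and `φ` invariant under `⟨0, 1, 0⟩`.
  let χ : Heisenberg ℤ →* Kˣ := character (Units.mk0 a ha)⁻¹ c⁻¹
  refine ⟨χ, nonempty_equiv_rootRep (isIrreducible_twist χ hρ) hζ ?_ ?_ hφ fun y v => ?_⟩
  · simp [twist_apply, χ, character, h_central]
  · simp [twist_apply, χ, character, hb, Algebra.algebraMap_eq_smul_one, smul_smul, ha]
  · have h_modulation : φ (ρ ⟨0, y, 0⟩ v) = (c : K) ^ y * φ v := by
      simpa [zpow_of_mul_eq_zero] using hc y v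
    simp [twist_apply, χ, character, h_modulation,
      inv_mul_cancel_left₀ (zpow_ne_zero y c.ne_zero)]

theorem exists_primitiveRoot_equiv_twist (hρ : ρ.IsIrreducible) {n : ℕ} [NeZero n]
    (hn : Module.finrank K V = n) :
    ∃ (ζ : K) (hζ : IsPrimitiveRoot ζ n) (χ : Heisenberg ℤ →* Kˣ),
      Nonempty ((twist χ ρ).Equiv (rootRep hζ)) := by
  obtain ⟨ζ, h_central⟩ := exists_eq_algebraMap_of_commute hρ (f := ρ ⟨0, 0, 1⟩) fun g => by
    rw [Commute, SemiconjBy, ← map_mul, ← map_mul]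
    simp [mul_def, add_comm]
  have hζn : ζ ^ n = 1 :=
    hn ▸ pow_finrank_eq_one_of_mem_commutator (central_mem_commutator 1) h_central
  have : NeZero (orderOf ζ) :=
    ⟨(orderOf_pos_iff.2 (isOfFinOrder_iff_pow_eq_one.2 ⟨n, NeZero.pos n, hζn⟩)).ne'⟩
  obtain ⟨χ, ⟨e⟩⟩ := exists_equiv_twist_rootRep hρ (IsPrimitiveRoot.orderOf ζ) h_central
  have h_order : orderOf ζ = n := by
    rw [← hn, e.toLinearEquiv.finrank_eq, Module.finrank_fintype_fun_eq_card, ZMod.card]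
  subst h_order
  exact ⟨ζ, .orderOf ζ, χ, ⟨e⟩⟩

end Integral

section MatrixModel

variable {n : ℕ} [NeZero n] {ζ : ℂ}

/-- `rootRep` as a matrix representation, in the basis of indicator functions of the points of
`ZMod n`. -/
noncomputable def rootGL (hζ : IsPrimitiveRoot ζ n) : Heisenberg ℤ →* GL (Fin n) ℂ :=
  repToGL ((Pi.basisFun ℂ (ZMod n)).reindex (ZMod.finEquiv n).symm.toEquiv) (rootRep hζ)

lemma repIsIrreducible_rootGL (hζ : IsPrimitiveRoot ζ n) : RepIsIrreducible (rootGL hζ) :=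
  repIsIrreducible_repToGL _ (isIrreducible_rootRep hζ)

lemma trace_rootGL_central (hζ : IsPrimitiveRoot ζ n) :
    (rootGL hζ ⟨0, 0, 1⟩).val.trace = n * ζ := by
  rw [rootGL, repToGL_val, rootRep_central, map_smul, LinearMap.toMatrix_id, Matrix.trace_smul,
    Matrix.trace_one, Fintype.card_fin, smul_eq_mul, mul_comm]

theorem exists_twistEquiv_rootGL {ρ : Heisenberg ℤ →* GL (Fin n) ℂ} (hρ : RepIsIrreducible ρ) :
    ∃ (ζ : ℂ) (hζ : IsPrimitiveRoot ζ n), TwistEquiv ρ (rootGL hζ) := by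
  obtain ⟨ζ, hζ, χ, ⟨e⟩⟩ := exists_primitiveRoot_equiv_twist ((repIsIrreducible_iff ρ).1 hρ)
    (Module.finrank_fin_fun ℂ)
  exact ⟨ζ, hζ, twistEquiv_of_equiv_twist (e.trans (equivMatrixRep _ _))⟩

end MatrixModel

end Heisenberg

/-- **The twist-representation zeta function of the integral Heisenberg group**
(Nunley–Magid): for `n ≥ 1`, the number of twist-isoclasses of `n`-dimensional irreducible
complex representations of `H(ℤ)` is `φ(n)`; equivalently
`ζ^{~irr}_{H(ℤ)}(s) = ζ(s-1)/ζ(s)`. -/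
theorem twist_representation_count_heisenberg (n : ℕ) (hn : 1 ≤ n) :
    twistRepCount (Heisenberg ℤ) n = Nat.totient n := by
  have : NeZero n := ⟨by lia⟩
  let Irr := {ρ : Heisenberg ℤ →* GL (Fin n) ℂ // RepIsIrreducible ρ}
  let model (ζ : primitiveRoots n ℂ) : Irr :=
    ⟨_, Heisenberg.repIsIrreducible_rootGL (isPrimitiveRoot_of_mem_primitiveRoots ζ.2)⟩
  let toClass (ζ : primitiveRoots n ℂ) : Quot fun ρ₁ ρ₂ : Irr => TwistEquiv ρ₁.1 ρ₂.1 :=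
    Quot.mk _ (model ζ)
  have h_injective : Function.Injective toClass := fun ζ ξ h => by
    have h_trace : ((model ζ).1 ⟨0, 0, 1⟩).val.trace = ((model ξ).1 ⟨0, 0, 1⟩).val.trace :=
      congrArg (Quot.lift (fun ρ => (ρ.1 ⟨0, 0, 1⟩).val.trace) fun _ _ h =>
        h.trace_eq_of_mem_commutator (Heisenberg.central_mem_commutator 1)) h
    rw [Heisenberg.trace_rootGL_central, Heisenberg.trace_rootGL_central] at h_trace
    exact Subtype.ext (mul_left_cancel₀ (NeZero.ne (n : ℂ)) h_trace)
  have h_surjective : Function.Surjective toClass := by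
    rintro ⟨ρ, hρ⟩
    obtain ⟨ζ, hζ, h⟩ := Heisenberg.exists_twistEquiv_rootGL hρ
    refine ⟨⟨ζ, (mem_primitiveRoots (NeZero.pos n)).2 hζ⟩, (Quot.sound ?_).symm⟩
    exact h
  rw [twistRepCount, ← Nat.card_eq_of_bijective toClass ⟨h_injective, h_surjective⟩,
    Nat.card_eq_fintype_card, Fintype.card_coe, Complex.card_primitiveRoots]
end
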